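/- arXiv:1811.02595 — 2 statements merged into one kernel-verified Lean document; each statement's English description precedes it below -/
import Mathlib

section
/- Let q be a prime power with q ≥ 5 and let B be a Drinfeldian domain over F_q. If the ideal class group of B is trivial, then B is isomorphic as an F_q-algebra to the polynomial ring F_q[T]. -/
/-!
For `b ≠ 0` in `B` put `deg b = dim_k B/(b)`. Because there is a single place at infinity, this is
a nonarchimedean degree, and because `B` is a PID the effective divisors of degree `n` are the
elements of degree `n` up to units. Let `A_n` be their number and let `N_n` be the sum of `deg p`
over the primes `p` with `deg p ∣ n`, the number of points of `Spec B` over the field of `q ^ n`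
elements.

Only one half of the Hasse–Weil bound is needed, `N_n ≥ q ^ n - C q ^ (n / 2)`. It comes from
Bombieri's form of Stepanov's method, applied to the conjugates of a primitive element: a function
`∑ a_i s_i ^ (q ^ m)` which is a nonzero `q ^ m`-th power of small degree, but vanishes at many
points, bounds the number of these points from above. The same bound shows that the degrees of
elements of `B` contain all sufficiently large integers, so the place at infinity is rational and
every graded piece of `B` has dimension at most one. Hence `A_n = q ^ g(n)` whenever `n` is a
degree, where `g(n)` is the number of degrees less than `n`.

Let `c` be the conductor of the semigroup of degrees. Then `L(T) = (1 - q T) ∑ A_n T ^ n` is a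
polynomial of degree at most `c`, whose zeros satisfy `|z| ≥ q ^ (-1/2)` by the bound on `N_n`. So
`(1 - q ^ (-1/2)) ^ c ≤ L(1 / q) = q ^ (g(c) - c)`, whereas `2 g(c) ≤ c`. Therefore
`(√q - 1) ^ c ≤ 1`, and `q ≥ 5` forces `c = 0`: there is an element `x` of degree one, and
`B = k[x]`.
-/

open Matrix Polynomial

/-- `B` is a Drinfeldian domain over the finite field `Fq`: a Dedekind domain which is not a
field, finitely generated as an `Fq`-algebra, whose fraction field `K` has `Fq` algebraically
closed in it, and which has exactly one place of `K` "at infinity", i.e. exactly one valuation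
subring of `K` containing the image of `Fq` but not containing the image of `B`. -/
structure IsDrinfeldianDomain (Fq : Type*) [Field Fq] [Fintype Fq]
    (B : Type*) [CommRing B] [IsDomain B] [Algebra Fq B] : Prop where
  isDedekind : IsDedekindDomain B
  not_isField : ¬ IsField B
  finiteType : Algebra.FiniteType Fq B
  algebraicallyClosed : ∀ x : FractionRing B,
    (∃ f : Polynomial Fq, f ≠ 0 ∧
      Polynomial.eval₂ ((algebraMap B (FractionRing B)).comp (algebraMap Fq B)) x f = 0) →
    x ∈ ((algebraMap B (FractionRing B)).comp (algebraMap Fq B)).range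
  unique_infinite_place : ∃! v : ValuationSubring (FractionRing B),
    (∀ c : Fq, ((algebraMap B (FractionRing B)).comp (algebraMap Fq B)) c ∈ v) ∧
    ¬ (∀ b : B, algebraMap B (FractionRing B) b ∈ v)

namespace Drinfeldian

open scoped Pointwise PowerSeries
open Finset.HasAntidiagonal (antidiagonal mem_antidiagonal)

/-! ### Logarithmic derivatives of power series -/

section LogDeriv

variable {R : Type*} [CommRing R] {F G b c : R⟦X⟧}

/-- `b` is the logarithmic derivative `X F' / F` of the power series `F`, stated without
division. -/
def IsLogDeriv (F b : R⟦X⟧) : Prop := PowerSeries.X * d⁄dX R F = b * F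

lemma coeff_X_mul_derivative (F : R⟦X⟧) (n : ℕ) :
    PowerSeries.coeff n (PowerSeries.X * d⁄dX R F) = n * PowerSeries.coeff n F := by
  cases n with
  | zero => simp
  | succ n => rw [PowerSeries.coeff_succ_X_mul, PowerSeries.coeff_derivative]; push_cast; ring

lemma isLogDeriv_iff_coeff : IsLogDeriv F b ↔ ∀ n : ℕ, n * PowerSeries.coeff n F =
    ∑ p ∈ antidiagonal n, PowerSeries.coeff p.1 b * PowerSeries.coeff p.2 F := by
  rw [IsLogDeriv, PowerSeries.ext_iff]
  simp only [coeff_X_mul_derivative, PowerSeries.coeff_mul _ b]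

lemma IsLogDeriv.mul (hF : IsLogDeriv F b) (hG : IsLogDeriv G c) :
    IsLogDeriv (F * G) (b + c) := by
  unfold IsLogDeriv at *
  rw [Derivation.leibniz, smul_eq_mul, smul_eq_mul]
  linear_combination G * hF + F * hG

lemma IsLogDeriv.pow (hF : IsLogDeriv F b) (n : ℕ) : IsLogDeriv (F ^ n) (n * b) := by
  induction n with
  | zero => simp [IsLogDeriv]
  | succ n ih => rw [pow_succ, Nat.cast_succ, add_one_mul]; exact ih.mul hF

/-- The geometric series `∑ rⁿ Xⁿ`. -/
noncomputable def geom (r : R) : R⟦X⟧ := PowerSeries.mk (r ^ ·)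

@[simp]
lemma coeff_geom (r : R) (n : ℕ) : PowerSeries.coeff n (geom r) = r ^ n :=
  PowerSeries.coeff_mk _ _

@[simp]
lemma constantCoeff_geom (r : R) : PowerSeries.constantCoeff (geom r) = 1 := by
  rw [← PowerSeries.coeff_zero_eq_constantCoeff_apply, coeff_geom, pow_zero]

lemma one_sub_mul_geom (r : R) : (1 - PowerSeries.C r * PowerSeries.X) * geom r = 1 := by
  ext n
  cases n with
  | zero => simp
  | succ n => simp [sub_mul, mul_assoc, PowerSeries.coeff_one, pow_succ']

lemma isLogDeriv_one_sub (r : R) :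
    IsLogDeriv (1 - PowerSeries.C r * PowerSeries.X) (1 - geom r) := by
  have hinv := one_sub_mul_geom r
  simp only [IsLogDeriv, map_sub, PowerSeries.derivative_one, Derivation.leibniz, smul_eq_mul,
    PowerSeries.derivative_C, PowerSeries.derivative_X]
  linear_combination hinv

lemma isLogDeriv_geom (r : R) : IsLogDeriv (geom r) (geom r - 1) := by
  have hinv := one_sub_mul_geom r
  have hderiv := congrArg (d⁄dX R) hinv
  simp only [Derivation.leibniz, smul_eq_mul, map_sub, PowerSeries.derivative_one,
    PowerSeries.derivative_C, PowerSeries.derivative_X] at hderiv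
  unfold IsLogDeriv
  linear_combination PowerSeries.X * geom r * hderiv -
    (PowerSeries.X * d⁄dX R (geom r) + geom r) * hinv

lemma coeff_succ_one_sub_mul (r : R) (F : R⟦X⟧) (n : ℕ) :
    PowerSeries.coeff (n + 1) ((1 - PowerSeries.C r * PowerSeries.X) * F) =
      PowerSeries.coeff (n + 1) F - r * PowerSeries.coeff n F := by
  simp [sub_mul, mul_assoc]

end LogDeriv

lemma IsLogDeriv.coeff_nonneg {F b : ℝ⟦X⟧} (hF : IsLogDeriv F b)
    (h0 : PowerSeries.coeff 0 F = 1) (hb : ∀ k, 0 ≤ PowerSeries.coeff k b) (n : ℕ) :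
    0 ≤ PowerSeries.coeff n F := by
  rw [isLogDeriv_iff_coeff] at hF
  have hb0 : PowerSeries.coeff 0 b = 0 := by simpa [h0] using (hF 0).symm
  induction n using Nat.strong_induction_on with
  | _ n ih =>
    rcases n.eq_zero_or_pos with rfl | hn
    · simp [h0]
    refine nonneg_of_mul_nonneg_right ?_ (Nat.cast_pos.mpr hn : (0 : ℝ) < n)
    rw [hF]
    refine Finset.sum_nonneg fun ⟨i, j⟩ hij ↦ ?_
    rw [mem_antidiagonal] at hij
    rcases i.eq_zero_or_pos with rfl | hi
    · simp [hb0]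
    · exact mul_nonneg (hb _) (ih _ (by simp only at hij ⊢; lia))

lemma IsLogDeriv.coeff_le {F b : ℝ⟦X⟧} (hF : IsLogDeriv F b)
    (h0 : PowerSeries.coeff 0 F = 1) (hb : ∀ k, 0 ≤ PowerSeries.coeff k b) (n : ℕ) :
    PowerSeries.coeff n b ≤ n * PowerSeries.coeff n F := by
  have hF0 := hF.coeff_nonneg h0 hb
  rw [isLogDeriv_iff_coeff.mp hF]
  simpa [h0] using Finset.single_le_sum (a := (n, 0))
    (f := fun p : ℕ × ℕ ↦ PowerSeries.coeff p.1 b * PowerSeries.coeff p.2 F)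
    (fun p _ ↦ mul_nonneg (hb _) (hF0 _)) (mem_antidiagonal.mpr (add_zero n))

/-! ### Zeros and radius of convergence -/

/-- The real power series `F` converges absolutely at every complex number of norm `< R`. -/
def ConvergesOnDisc (F : ℝ⟦X⟧) (R : ℝ) : Prop :=
  ∀ z : ℂ, ‖z‖ < R → Summable fun k ↦ ‖PowerSeries.coeff k F • z ^ k‖

lemma coeff_mul_smul_pow (F G : ℝ⟦X⟧) (z : ℂ) (n : ℕ) :
    PowerSeries.coeff n (F * G) • z ^ n = ∑ p ∈ antidiagonal n,
      PowerSeries.coeff p.1 F • z ^ p.1 * PowerSeries.coeff p.2 G • z ^ p.2 := by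
  rw [PowerSeries.coeff_mul, Finset.sum_smul]
  refine Finset.sum_congr rfl fun p hp ↦ ?_
  rw [smul_mul_smul_comm, ← pow_add, mem_antidiagonal.mp hp]

lemma hasSum_aeval (P : ℝ[X]) (z : ℂ) :
    HasSum (fun k ↦ PowerSeries.coeff k (P : ℝ⟦X⟧) • z ^ k) (aeval z P) := by
  rw [aeval_eq_sum_range]
  simp only [coeff_coe]
  refine hasSum_sum_of_ne_finset_zero fun k hk ↦ ?_
  rw [coeff_eq_zero_of_natDegree_lt (by simpa [Nat.lt_succ_iff] using hk), zero_smul]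

namespace ConvergesOnDisc

variable {F G b : ℝ⟦X⟧} {R : ℝ}

lemma sub (hF : ConvergesOnDisc F R) (hG : ConvergesOnDisc G R) : ConvergesOnDisc (F - G) R :=
  fun z hz ↦ ((hF z hz).add (hG z hz)).of_nonneg_of_le (fun _ ↦ norm_nonneg _) fun k ↦ by
    rw [map_sub, sub_smul]
    exact norm_sub_le _ _

lemma coe (P : ℝ[X]) (R : ℝ) : ConvergesOnDisc P R := fun z _ ↦
  summable_of_ne_finset_zero (s := P.support) fun k hk ↦ by
    simp [notMem_support_iff.mp hk]

lemma mul (hF : ConvergesOnDisc F R) (hG : ConvergesOnDisc G R) :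
    ConvergesOnDisc (F * G) R := fun z hz ↦ by
  simpa only [coeff_mul_smul_pow] using
    summable_norm_sum_mul_antidiagonal_of_summable_norm (hF z hz) (hG z hz)

lemma pow (hF : ConvergesOnDisc F R) (n : ℕ) : ConvergesOnDisc (F ^ n) R := by
  induction n with
  | zero => simpa using coe 1 R
  | succ n ih => rw [pow_succ]; exact ih.mul hF

lemma geom {s : ℝ} (hs : 0 < s) : ConvergesOnDisc (geom s) s⁻¹ := fun z hz ↦ by
  have h : s * ‖z‖ < 1 := by
    rwa [← one_div, lt_div_iff₀' hs] at hz
  simpa [mul_pow, abs_of_pos hs] using summable_geometric_of_lt_one (by positivity) h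

lemma summable_natCast_mul (hF : ConvergesOnDisc F R) {z : ℂ} (hz : ‖z‖ < R) :
    Summable fun k : ℕ ↦ k * (‖PowerSeries.coeff k F‖ * ‖z‖ ^ k) := by
  obtain ⟨ρ, hzρ, hρR⟩ := exists_between hz
  have hρ : ‖(ρ : ℂ)‖ = ρ := Complex.norm_of_nonneg ((norm_nonneg z).trans hzρ.le)
  have hO := (isLittleO_pow_const_mul_const_pow_const_pow_of_norm_lt 1
    (by rwa [norm_norm] : ‖‖z‖‖ < ρ)).isBigO
  refine summable_of_isBigO_nat (hF ρ (by rwa [hρ])) ?_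
  simp only [norm_smul, norm_pow, hρ]
  simpa only [pow_one, mul_left_comm] using
    (Asymptotics.isBigO_refl (fun k ↦ ‖PowerSeries.coeff k F‖) Filter.atTop).mul hO

lemma of_isLogDeriv (hF : ConvergesOnDisc F R) (hFb : IsLogDeriv F b)
    (h0 : PowerSeries.coeff 0 F = 1) (hb : ∀ k, 0 ≤ PowerSeries.coeff k b) :
    ConvergesOnDisc b R := fun z hz ↦ by
  refine (hF.summable_natCast_mul hz).of_nonneg_of_le (fun _ ↦ norm_nonneg _) fun k ↦ ?_
  rw [norm_smul, norm_pow, ← mul_assoc, Real.norm_of_nonneg (hb k),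
    Real.norm_of_nonneg (hFb.coeff_nonneg h0 hb k)]
  gcongr
  exact hFb.coeff_le h0 hb k

end ConvergesOnDisc

-- Along the path `t ↦ z e⁻ᵗ` Grönwall's inequality shows that `L` vanishes identically.
lemma aeval_ne_zero_of_norm_mul_deriv_le {L : ℝ[X]} (hL : L ≠ 0) {z : ℂ} (hz : z ≠ 0) {G : ℝ}
    (h : ∀ w : ℂ, ‖w‖ ≤ ‖z‖ → ‖w * aeval w (derivative L)‖ ≤ G * ‖aeval w L‖) :
    aeval z L ≠ 0 := by
  intro hroot
  let γ : ℝ → ℂ := fun t ↦ z * Real.exp (-t)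
  have hγ (t : ℝ) : HasDerivAt γ (-γ t) t := by
    simpa [γ] using ((Real.hasDerivAt_exp (-t)).comp t (hasDerivAt_neg t)).ofReal_comp.const_mul z
  have hderiv (t : ℝ) : HasDerivAt (fun t ↦ aeval (γ t) L)
      (aeval (γ t) (derivative L) * -γ t) t := (L.hasDerivAt_aeval (γ t)).comp t (hγ t)
  have hzero : ∀ t ∈ Set.Icc (0 : ℝ) 1, aeval (γ t) L = 0 := by
    refine eq_zero_of_abs_deriv_le_mul_abs_self_of_eq_zero_right (K := G)
      (fun t _ ↦ (hderiv t).continuousAt.continuousWithinAt)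
      (fun t _ ↦ (hderiv t).hasDerivWithinAt) (by simpa [γ] using hroot) fun t ht ↦ ?_
    rw [mul_neg, norm_neg, mul_comm]
    refine h _ ?_
    have hexp : Real.exp (-t) ≤ 1 := Real.exp_le_one_iff.mpr (by linarith [ht.1])
    rw [norm_mul, Complex.norm_of_nonneg (Real.exp_nonneg _)]
    exact mul_le_of_le_one_right (norm_nonneg z) hexp
  have hinj : Set.InjOn γ (Set.Icc 0 1) := fun s _ t _ hst ↦ by
    simpa [γ, hz, ← Complex.ofReal_neg, ← Complex.ofReal_exp] using hst
  refine (((Set.Icc_infinite one_pos).image hinj).mono ?_) (L.rootSet_finite ℂ)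
  rintro _ ⟨t, ht, rfl⟩
  exact (mem_rootSet_of_ne hL).mpr (hzero t ht)

lemma IsLogDeriv.aeval_ne_zero {L : ℝ[X]} (hL : L ≠ 0) {S : ℝ⟦X⟧} (hS : IsLogDeriv (L : ℝ⟦X⟧) S)
    {R : ℝ} (hconv : ConvergesOnDisc S R) {z : ℂ} (hz : z ≠ 0) (hzR : ‖z‖ < R) :
    aeval z L ≠ 0 := by
  refine aeval_ne_zero_of_norm_mul_deriv_le hL hz
    (G := ∑' k, ‖PowerSeries.coeff k S • z ^ k‖) fun w hw ↦ ?_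
  have hsummable := hconv w (hw.trans_lt hzR)
  have hprod : w * aeval w (derivative L) =
      (∑' k, PowerSeries.coeff k S • w ^ k) * aeval w L := by
    rw [← (hasSum_aeval L w).tsum_eq, tsum_mul_tsum_eq_tsum_sum_antidiagonal_of_summable_norm
      hsummable (ConvergesOnDisc.coe L R w (hw.trans_lt hzR))]
    have h := (hasSum_aeval (X * derivative L) w).tsum_eq
    rw [map_mul, aeval_X] at h
    rw [← h]
    refine tsum_congr fun n ↦ ?_
    rw [← coeff_mul_smul_pow, ← hS, coe_mul, coe_X, PowerSeries.derivative_coe]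
  rw [hprod, norm_mul]
  gcongr
  refine (norm_tsum_le_tsum_norm hsummable).trans
    (hsummable.tsum_le_tsum (fun k ↦ ?_) (hconv z hzR))
  rw [norm_smul, norm_smul, norm_pow, norm_pow]
  gcongr

lemma one_sub_div_pow_le_norm_eval {P : ℂ[X]} (h0 : P.coeff 0 = 1) {r : ℝ} (hr : 0 < r)
    (hroots : ∀ z ∈ P.roots, r ≤ ‖z‖) {x : ℂ} (hx : ‖x‖ ≤ r) :
    (1 - ‖x‖ / r) ^ P.natDegree ≤ ‖P.eval x‖ := by
  set δ := 1 - ‖x‖ / r with hδ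
  have hδ0 : 0 ≤ δ := sub_nonneg.mpr ((div_le_one hr).mpr hx)
  have hfactor : ∀ z ∈ P.roots, δ * ‖0 - z‖ ≤ ‖x - z‖ := fun z hz ↦ by
    have hle : ‖x‖ ≤ ‖x‖ / r * ‖z‖ := by
      rw [div_mul_eq_mul_div, le_div_iff₀ hr]
      gcongr
      exact hroots z hz
    have htri := norm_sub_norm_le z x
    rw [norm_sub_rev z x] at htri
    rw [zero_sub, norm_neg, hδ, sub_mul, one_mul]
    linarith
  have hsplits := IsAlgClosed.splits P
  have hprod : (P.roots.map fun z ↦ δ * ‖0 - z‖).prod ≤ (P.roots.map fun z ↦ ‖x - z‖).prod :=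
    Multiset.prod_map_le_prod_map₀ _ _ (fun z _ ↦ by positivity) hfactor
  have heval (y : ℂ) : ‖P.eval y‖ = ‖P.leadingCoeff‖ * (P.roots.map fun z ↦ ‖y - z‖).prod := by
    rw [hsplits.eval_eq_prod_roots, norm_mul]
    congr 1
    simpa [Multiset.map_map] using
      map_multiset_prod (normHom : ℂ →*₀ ℝ) (P.roots.map fun z ↦ y - z)
  have h1 := heval 0
  rw [← coeff_zero_eq_eval_zero, h0, norm_one] at h1
  calc δ ^ P.natDegree
      = ‖P.leadingCoeff‖ * (P.roots.map fun z ↦ δ * ‖0 - z‖).prod := by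
        rw [Multiset.prod_map_mul, Multiset.map_const', Multiset.prod_replicate,
          ← hsplits.natDegree_eq_card_roots, mul_left_comm, ← h1, mul_one]
    _ ≤ ‖P.eval x‖ := by rw [heval]; gcongr

lemma coeff_add_natCast_mul_geom_nonneg {S : ℝ⟦X⟧} {C : ℕ} {s : ℝ}
    (h0 : PowerSeries.coeff 0 S = 0) (h : ∀ k, 1 ≤ k → -(C * s ^ k) ≤ PowerSeries.coeff k S)
    (k : ℕ) : 0 ≤ PowerSeries.coeff k (S + (C : ℝ⟦X⟧) * (geom s - 1)) := by
  rw [map_add, ← nsmul_eq_mul, map_nsmul, map_sub, coeff_geom, PowerSeries.coeff_one, nsmul_eq_mul]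
  rcases k.eq_zero_or_pos with rfl | hk
  · simp [h0]
  · rw [if_neg hk.ne']
    linarith [h k hk]

-- Multiplying `L` by a power of the geometric series makes its logarithmic derivative nonnegative.
lemma inv_le_norm_of_aeval_eq_zero {L : ℝ[X]} (hL0 : L.coeff 0 = 1) {S : ℝ⟦X⟧}
    (hS : IsLogDeriv (L : ℝ⟦X⟧) S) {C : ℕ} {s : ℝ} (hs : 0 < s)
    (hbound : ∀ k, 1 ≤ k → -(C * s ^ k) ≤ PowerSeries.coeff k S) {z : ℂ} (hz : aeval z L = 0) :
    s⁻¹ ≤ ‖z‖ := by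
  have hL : L ≠ 0 := by rintro rfl; simp at hL0
  have hz0 : z ≠ 0 := by
    rintro rfl
    simp [← coeff_zero_eq_aeval_zero', hL0] at hz
  have hS0 : PowerSeries.coeff 0 S = 0 := by simpa [hL0] using (isLogDeriv_iff_coeff.mp hS 0).symm
  set b := S + (C : ℝ⟦X⟧) * (geom s - 1) with hb
  have hE : IsLogDeriv ((L : ℝ⟦X⟧) * geom s ^ C) b := hS.mul ((isLogDeriv_geom s).pow C)
  have hE0 : PowerSeries.coeff 0 ((L : ℝ⟦X⟧) * geom s ^ C) = 1 := by simp [hL0]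
  have hEconv : ConvergesOnDisc ((L : ℝ⟦X⟧) * geom s ^ C) s⁻¹ :=
    (ConvergesOnDisc.coe L _).mul ((ConvergesOnDisc.geom hs).pow C)
  have hbconv := hEconv.of_isLogDeriv hE hE0 (coeff_add_natCast_mul_geom_nonneg hS0 hbound)
  have hgeom := (ConvergesOnDisc.coe (C : ℝ[X]) s⁻¹).mul
    ((ConvergesOnDisc.geom hs).sub (ConvergesOnDisc.coe 1 _))
  have hcast : ((C : ℝ[X]) : ℝ⟦X⟧) = C := map_natCast coeToPowerSeries.ringHom C
  have hSconv : ConvergesOnDisc S s⁻¹ := by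
    simpa [hb, hcast] using hbconv.sub hgeom
  by_contra! hlt
  exact hS.aeval_ne_zero hL hSconv hz0 hlt hz

section Numerator

variable {R : Type*} [CommRing R] {r : R} {F : R⟦X⟧} {c : ℕ}

lemma exists_polynomial_eq_one_sub_mul
    (h : ∀ n, c ≤ n → PowerSeries.coeff (n + 1) F = r * PowerSeries.coeff n F) :
    ∃ L : R[X], L.natDegree ≤ c ∧
      (L : R⟦X⟧) = (1 - PowerSeries.C r * PowerSeries.X) * F := by
  refine ⟨PowerSeries.trunc (c + 1) ((1 - PowerSeries.C r * PowerSeries.X) * F),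
    Nat.lt_succ_iff.mp (PowerSeries.natDegree_trunc_lt _ c), ?_⟩
  ext n
  rw [coeff_coe, PowerSeries.coeff_trunc]
  split_ifs with hn
  · rfl
  · obtain ⟨m, rfl⟩ := Nat.exists_eq_succ_of_ne_zero (by lia : n ≠ 0)
    rw [coeff_succ_one_sub_mul, h m (by lia), sub_self]

lemma eval_inv_of_eq_one_sub_mul {K : Type*} [Field K] {r : K} (hr : r ≠ 0) {F : K⟦X⟧} {L : K[X]}
    (hL : (L : K⟦X⟧) = (1 - PowerSeries.C r * PowerSeries.X) * F) (hdeg : L.natDegree ≤ c) :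
    L.eval r⁻¹ = PowerSeries.coeff c F / r ^ c := by
  have htelescope (d : ℕ) : ∑ n ∈ Finset.range (d + 1), L.coeff n * r⁻¹ ^ n =
      PowerSeries.coeff d F / r ^ d := by
    induction d with
    | zero => simp [← coeff_coe, hL]
    | succ d ih =>
      rw [Finset.sum_range_succ, ih, ← coeff_coe, hL, coeff_succ_one_sub_mul, inv_pow]
      field_simp
      ring
  rw [eval_eq_sum_range' (Nat.lt_succ_iff.mpr hdeg), htelescope]

end Numerator

lemma one_sub_inv_sqrt_pow_le {q : ℝ} (hq : 1 < q) {N A : ℕ → ℝ} {c C : ℕ} (hA0 : A 0 = 1)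
    (hrec : ∀ n : ℕ, n * A n = ∑ p ∈ antidiagonal n, N p.1 * A p.2)
    (hN : ∀ k, 1 ≤ k → q ^ k - C * √q ^ k ≤ N k)
    (hA : ∀ n, c ≤ n → A (n + 1) = q * A n) (hAc : 0 ≤ A c) :
    (1 - (√q)⁻¹) ^ c ≤ A c / q ^ c := by
  have hs1 : 1 < √q := by simpa using Real.sqrt_lt_sqrt zero_le_one hq
  have hs0 : 0 < √q := zero_lt_one.trans hs1
  have hq0 : 0 < q := zero_lt_one.trans hq
  obtain ⟨L, hdeg, hL⟩ := exists_polynomial_eq_one_sub_mul (F := PowerSeries.mk A) (r := q)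
    (c := c) (by simpa using hA)
  have hL0 : L.coeff 0 = 1 := by simp [← coeff_coe, hL, hA0]
  have hlogDeriv : IsLogDeriv (L : ℝ⟦X⟧) (1 - geom q + PowerSeries.mk N) := by
    rw [hL]
    exact (isLogDeriv_one_sub q).mul (isLogDeriv_iff_coeff.mpr (by simpa using hrec))
  have hroots (z : ℂ) (hz : aeval z L = 0) : (√q)⁻¹ ≤ ‖z‖ := by
    refine inv_le_norm_of_aeval_eq_zero hL0 hlogDeriv (C := C) hs0 (fun k hk ↦ ?_) hz
    simp only [map_add, map_sub, coeff_geom, PowerSeries.coeff_mk, PowerSeries.coeff_one,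
      if_neg (by lia : k ≠ 0)]
    linarith [hN k hk]
  have hnorm : ‖((q⁻¹ : ℝ) : ℂ)‖ = (√q)⁻¹ * (√q)⁻¹ := by
    rw [Complex.norm_of_nonneg (by positivity), ← mul_inv, Real.mul_self_sqrt hq0.le]
  have hinv1 : (√q)⁻¹ ≤ 1 := inv_le_one_of_one_le₀ hs1.le
  have hbound := one_sub_div_pow_le_norm_eval (P := L.map (algebraMap ℝ ℂ)) (by simp [hL0])
    (inv_pos.mpr hs0) (fun z hz ↦ hroots z (by simpa using (mem_roots'.mp hz).2))
    (x := ((q⁻¹ : ℝ) : ℂ)) (by rw [hnorm]; exact mul_le_of_le_one_right (by positivity) hinv1)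
  rw [hnorm, mul_div_cancel_right₀ _ (by positivity), natDegree_map, eval_map_algebraMap,
    ← Complex.coe_algebraMap, aeval_algebraMap_apply, Complex.coe_algebraMap, coe_aeval_eq_eval,
    eval_inv_of_eq_one_sub_mul hq0.ne' hL hdeg, PowerSeries.coeff_mk,
    Complex.norm_of_nonneg (by positivity)] at hbound
  exact (pow_le_pow_of_le_one (sub_nonneg.mpr hinv1) (sub_le_self _ (by positivity)) hdeg).trans
    hbound

/-! ### The degree attached to a unique infinite place -/

/-- The degree of an element `b` of a `k`-algebra, i.e. of its divisor of zeros: the dimension of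
`B ⧸ (b)`. It takes the junk value `0` when that quotient has infinite dimension. -/
noncomputable def deg (k : Type*) {B : Type*} [Field k] [CommRing B] [Algebra k B] (b : B) : ℕ :=
  Module.finrank k (B ⧸ Ideal.span {b})

section Deg

variable {k B : Type*} [Field k] [CommRing B] [Algebra k B]

lemma finite_quotient_span_singleton_of_finite_aeval {f : B}
    (hf : (aeval f : k[X] →ₐ[k] B).toRingHom.Finite) :
    Module.Finite k (B ⧸ Ideal.span {f}) := by
  have hcomp : ((Ideal.Quotient.mk (Ideal.span {f})).comp (aeval f : k[X] →ₐ[k] B).toRingHom) =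
      (algebraMap k (B ⧸ Ideal.span {f})).comp (evalRingHom 0) := by
    ext <;> simp
  have hfin := (RingHom.Finite.of_surjective _ (Ideal.Quotient.mk_surjective
    (I := Ideal.span {f}))).comp hf
  rw [hcomp] at hfin
  exact RingHom.finite_algebraMap.1 (RingHom.Finite.of_comp_finite hfin)

lemma deg_of_isUnit {u : B} (hu : IsUnit u) : deg k u = 0 := by
  have := Ideal.Quotient.subsingleton_iff.2 (Ideal.span_singleton_eq_top.2 hu)
  exact Module.finrank_zero_of_subsingleton

lemma deg_mul {a b : B} (ha : a ∈ nonZeroDivisors B)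
    [Module.Finite k (B ⧸ Ideal.span {a})] [Module.Finite k (B ⧸ Ideal.span {b})]
    [Module.Finite k (B ⧸ Ideal.span {a * b})] : deg k (a * b) = deg k a + deg k b := by
  have h := Module.length_eq_add_of_exact ((Ideal.mulQuot a (Ideal.span {b})).restrictScalars k)
    ((Ideal.quotOfMul a (Ideal.span {b})).restrictScalars k) (Ideal.mulQuot_injective _ ha)
    (Ideal.quotOfMul_surjective _) (Ideal.exact_mulQuot_quotOfMul _)
  have hab : a • Ideal.span {b} = Ideal.span {a * b} := by
    rw [← Submodule.singleton_set_smul, ← Ideal.submodule_span_eq, Submodule.set_smul_span]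
    simp
  rw [hab, Module.length_eq_finrank, Module.length_eq_finrank, Module.length_eq_finrank,
    add_comm] at h
  exact_mod_cast h

end Deg

lemma isIntegral_of_forall_mem_valuationSubring {R K : Type*} [CommRing R] [Field K] [Algebra R K]
    {x : K} (h : ∀ V : ValuationSubring K, (∀ r, algebraMap R K r ∈ V) → x ∈ V) :
    IsIntegral R x := by
  have : IsIntegrallyClosedIn (integralClosure R K).toSubring K :=
    inferInstanceAs (IsIntegrallyClosedIn (integralClosure R K) K)
  suffices x ∈ (integralClosure R K).toSubring from this
  rw [Subring.eq_iInf_of_isIntegrallyClosedIn (R := (integralClosure R K).toSubring)]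
  simp only [Subring.mem_iInf]
  exact fun V ↦ h V.1 fun r ↦ V.2 ((integralClosure R K).algebraMap_mem r)

/-- `V` is the only place of the field `K ⊇ B` over `k` at which some element of the finitely
generated `k`-algebra `B` has a pole, and `k` is algebraically closed in `K`. -/
structure IsUniqueInfinitePlace (k B : Type*) {K : Type*} [Field k] [CommRing B] [Field K]
    [Algebra k B] [Algebra B K] [Algebra k K] (V : ValuationSubring K) : Prop where
  algebraMap_mem : ∀ c : k, algebraMap k K c ∈ V
  mem_of_ne : ∀ W : ValuationSubring K, (∀ c : k, algebraMap k K c ∈ W) → W ≠ V →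
    ∀ b : B, algebraMap B K b ∈ W
  exists_notMem : ∃ b : B, algebraMap B K b ∉ V
  mem_range_of_isAlgebraic : ∀ x : K, IsAlgebraic k x → x ∈ (algebraMap k K).range
  finiteType : Algebra.FiniteType k B

namespace IsUniqueInfinitePlace

variable {k B K : Type*} [Field k] [CommRing B] [Field K] [Algebra k B] [Algebra B K]
  [Algebra k K] [IsScalarTower k B K] {V : ValuationSubring K}

lemma mem_of_mem_range (h : IsUniqueInfinitePlace k B V) {b : B}
    (hb : b ∈ (algebraMap k B).range) : algebraMap B K b ∈ V := by
  obtain ⟨c, rfl⟩ := hb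
  rw [← IsScalarTower.algebraMap_apply]
  exact h.algebraMap_mem c

/-- The elements of `B` whose pole at `V` is at most that of `b`. -/
def poleLE (h : IsUniqueInfinitePlace k B V) (b : B) : Submodule k B where
  carrier := {x | algebraMap B K x / algebraMap B K b ∈ V}
  add_mem' {x y} hx hy := by
    simp only [Set.mem_ofPred_eq, map_add, add_div] at *
    exact V.add_mem _ _ hx hy
  zero_mem' := by simp [V.zero_mem]
  smul_mem' c x hx := by
    simp only [Set.mem_ofPred_eq] at *
    rw [Algebra.smul_def, map_mul, mul_div_assoc, ← IsScalarTower.algebraMap_apply]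
    exact V.mul_mem _ _ (h.algebraMap_mem c) hx

lemma mem_poleLE {h : IsUniqueInfinitePlace k B V} {b x : B} :
    x ∈ h.poleLE b ↔ algebraMap B K x / algebraMap B K b ∈ V := Iff.rfl

lemma map_ne_zero_of_notMem {b : B} (hb : algebraMap B K b ∉ V) : algebraMap B K b ≠ 0 :=
  fun h0 ↦ hb (h0 ▸ V.zero_mem)

lemma ne_zero_of_notMem {b : B} (hb : algebraMap B K b ∉ V) : b ≠ 0 := by
  rintro rfl
  exact hb (by simp [V.zero_mem])

lemma inv_mem {b : B} (hb : algebraMap B K b ∉ V) : (algebraMap B K b)⁻¹ ∈ V :=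
  (V.mem_or_inv_mem _).resolve_left hb

lemma mul_mem_poleLE {h : IsUniqueInfinitePlace k B V} {a b x y : B} (hx : x ∈ h.poleLE a)
    (hy : y ∈ h.poleLE b) : x * y ∈ h.poleLE (a * b) := by
  rw [mem_poleLE, map_mul, map_mul, mul_div_mul_comm]
  exact V.mul_mem _ _ hx hy

lemma pow_mem_poleLE {h : IsUniqueInfinitePlace k B V} {a x : B} (hx : x ∈ h.poleLE a) (n : ℕ) :
    x ^ n ∈ h.poleLE (a ^ n) := by
  rw [mem_poleLE, map_pow, map_pow, ← div_pow]
  exact pow_mem (mem_poleLE.1 hx) n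

lemma one_mem_poleLE (h : IsUniqueInfinitePlace k B V) {a : B} (ha : algebraMap B K a ∉ V) :
    1 ∈ h.poleLE a := by
  rw [mem_poleLE, map_one, one_div]
  exact inv_mem ha

lemma monotone_poleLE_pow (h : IsUniqueInfinitePlace k B V) {a : B} (ha : algebraMap B K a ∉ V) :
    Monotone fun n ↦ h.poleLE (a ^ n) := by
  refine monotone_nat_of_le_succ fun n x hx ↦ ?_
  simpa [pow_succ] using mul_mem_poleLE hx (h.one_mem_poleLE ha)

/-- Adjoining to `V` an element with a pole gives a larger valuation ring, which contains `B`
because `V` is the only place at which `B` has poles. -/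
lemma exists_mem_poleLE_pow (h : IsUniqueInfinitePlace k B V) {a : B} (ha : algebraMap B K a ∉ V)
    (x : B) : ∃ n, x ∈ h.poleLE (a ^ n) := by
  have ha0 : algebraMap B K a ≠ 0 := map_ne_zero_of_notMem ha
  have hle : V.toSubring ≤ (Algebra.adjoin V {algebraMap B K a}).toSubring :=
    fun y hy ↦ Subalgebra.algebraMap_mem _ (⟨y, hy⟩ : V)
  have hne : V.ofLE _ hle ≠ V := fun he ↦
    ha (he.le (Algebra.self_mem_adjoin_singleton V (algebraMap B K a)))
  have hx : algebraMap B K x ∈ Algebra.adjoin V {algebraMap B K a} :=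
    h.mem_of_ne _ (fun c ↦ hle (h.algebraMap_mem c)) hne x
  obtain ⟨p, hp : aeval (algebraMap B K a) p = algebraMap B K x⟩ :=
    Algebra.adjoin_singleton_eq_range_aeval V (algebraMap B K a) ▸ hx
  refine ⟨p.natDegree, ?_⟩
  have := invertibleOfNonzero ha0
  have hrev := eval₂_reverse_mul_pow (algebraMap V K) (algebraMap B K a) p
  let i : V := ⟨_, inv_mem ha⟩
  have hi : aeval (algebraMap V K i) p.reverse ∈ V := by
    rw [aeval_algebraMap_apply]
    exact (aeval i p.reverse).2
  rw [mem_poleLE, map_pow, ← hp, aeval_def, ← hrev, mul_div_cancel_right₀ _ (pow_ne_zero _ ha0),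
    invOf_eq_inv]
  exact hi

variable [FaithfulSMul B K]

lemma mem_range_of_isIntegral (h : IsUniqueInfinitePlace k B V) {b : B} (hb : IsIntegral k b) :
    b ∈ (algebraMap k B).range := by
  obtain ⟨c, hc⟩ := h.mem_range_of_isAlgebraic _ (hb.algebraMap (B := K)).isAlgebraic
  exact ⟨c, FaithfulSMul.algebraMap_injective B K (by
    rw [← hc, ← IsScalarTower.algebraMap_apply])⟩

lemma mem_range_iff (h : IsUniqueInfinitePlace k B V) {b : B} :
    b ∈ (algebraMap k B).range ↔ algebraMap B K b ∈ V := by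
  refine ⟨h.mem_of_mem_range, fun hb ↦ h.mem_range_of_isIntegral ?_⟩
  rw [← isIntegral_algebraMap_iff (FaithfulSMul.algebraMap_injective B K)]
  refine isIntegral_of_forall_mem_valuationSubring fun W hW ↦ ?_
  obtain rfl | hWV := eq_or_ne W V
  exacts [hb, h.mem_of_ne W hW hWV b]

lemma finite_aeval (h : IsUniqueInfinitePlace k B V) {f : B} (hf : algebraMap B K f ∉ V) :
    (aeval f : k[X] →ₐ[k] B).toRingHom.Finite := by
  have := h.finiteType
  algebraize [(aeval f : k[X] →ₐ[k] B).toRingHom,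
    (algebraMap B K).comp (aeval f : k[X] →ₐ[k] B).toRingHom]
  have : IsScalarTower k k[X] B := IsScalarTower.of_algHom (aeval f)
  have : Algebra.FiniteType k[X] B := Algebra.FiniteType.of_restrictScalars_finiteType k k[X] B
  have hint (b : B) : IsIntegral k[X] b := by
    rw [← isIntegral_algebraMap_iff (FaithfulSMul.algebraMap_injective B K)]
    refine isIntegral_of_forall_mem_valuationSubring fun W hW ↦ h.mem_of_ne W (fun c ↦ ?_) ?_ b
    · simpa [RingHom.algebraMap_toAlgebra, ← IsScalarTower.algebraMap_apply] using hW (C c)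
    · rintro rfl
      exact hf (by simpa [RingHom.algebraMap_toAlgebra] using hW X)
  have : Algebra.IsIntegral k[X] B := ⟨hint⟩
  exact Algebra.IsIntegral.finite (R := k[X]) (A := B)

lemma finite_quotient (h : IsUniqueInfinitePlace k B V) {b : B} (hb : b ≠ 0) :
    Module.Finite k (B ⧸ Ideal.span {b}) := by
  by_cases hV : algebraMap B K b ∈ V
  · obtain ⟨c, rfl⟩ := h.mem_range_iff.2 hV
    have hc : c ≠ 0 := by rintro rfl; simp at hb
    rw [Ideal.span_singleton_eq_top.2 ((IsUnit.mk0 c hc).map (algebraMap k B))]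
    infer_instance
  · exact finite_quotient_span_singleton_of_finite_aeval (h.finite_aeval hV)

lemma deg_zero (h : IsUniqueInfinitePlace k B V) : deg k (0 : B) = 0 := by
  refine Module.finrank_of_not_finite fun hfin ↦ ?_
  have : Module.Finite k B := Module.Finite.equiv
    ((Submodule.quotEquivOfEqBot (Ideal.span {(0 : B)}) (by simp)).restrictScalars k)
  obtain ⟨b, hb⟩ := h.exists_notMem
  exact hb (h.mem_range_iff.1 (h.mem_range_of_isIntegral (Algebra.IsIntegral.isIntegral b)))

lemma isUnit_iff_mem (h : IsUniqueInfinitePlace k B V) {b : B} (hb : b ≠ 0) :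
    IsUnit b ↔ algebraMap B K b ∈ V := by
  refine ⟨fun hu ↦ ?_, fun hV ↦ ?_⟩
  · by_contra hbV
    obtain ⟨c, hbc⟩ := hu.exists_right_inv
    have hc : algebraMap B K c = (algebraMap B K b)⁻¹ :=
      eq_inv_of_mul_eq_one_right (by rw [← map_mul, hbc, map_one])
    obtain ⟨d, rfl⟩ := h.mem_range_iff.2 (hc ▸ inv_mem hbV)
    refine hbV (h.mem_range_iff.1 ⟨d⁻¹, ?_⟩)
    have hd : d ≠ 0 := by
      rintro rfl; exact hb (eq_zero_of_zero_eq_one (by simpa using hbc) b)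
    rw [← mul_one (algebraMap k B d⁻¹), ← hbc, mul_left_comm, ← map_mul, inv_mul_cancel₀ hd,
      map_one, mul_one]
  · obtain ⟨c, rfl⟩ := h.mem_range_iff.2 hV
    exact (IsUnit.mk0 c (by rintro rfl; simp at hb)).map _

lemma deg_eq_zero_iff_mem (h : IsUniqueInfinitePlace k B V) {b : B} :
    deg k b = 0 ↔ algebraMap B K b ∈ V := by
  obtain rfl | hb := eq_or_ne b 0
  · simp [h.deg_zero, V.zero_mem]
  have := h.finite_quotient hb
  rw [← h.isUnit_iff_mem hb, deg, Module.finrank_zero_iff, Ideal.Quotient.subsingleton_iff,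
    Ideal.span_singleton_eq_top]

lemma deg_mul [IsDomain B] (h : IsUniqueInfinitePlace k B V) {a b : B} (ha : a ≠ 0) (hb : b ≠ 0) :
    deg k (a * b) = deg k a + deg k b := by
  have := h.finite_quotient ha
  have := h.finite_quotient hb
  have := h.finite_quotient (mul_ne_zero ha hb)
  exact Drinfeldian.deg_mul (mem_nonZeroDivisors_of_ne_zero ha)

lemma deg_pow [IsDomain B] (h : IsUniqueInfinitePlace k B V) {a : B} (ha : a ≠ 0) (n : ℕ) :
    deg k (a ^ n) = n * deg k a := by
  induction n with
  | zero => simpa using deg_of_isUnit isUnit_one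
  | succ n ih => rw [pow_succ, h.deg_mul (pow_ne_zero _ ha) ha, ih]; ring

lemma eq_zero_of_mem_poleLE_of_pow_succ_dvd [IsDomain B] (h : IsUniqueInfinitePlace k B V) {b x : B}
    (hb : algebraMap B K b ∉ V) {N : ℕ} (hx : x ∈ h.poleLE (b ^ N)) (hdvd : b ^ (N + 1) ∣ x) :
    x = 0 := by
  have hb0 : b ≠ 0 := ne_zero_of_notMem hb
  have hbK : algebraMap B K b ≠ 0 := map_ne_zero_of_notMem hb
  obtain ⟨y, rfl⟩ := hdvd
  by_contra hxy
  have hy : y ≠ 0 := right_ne_zero_of_mul hxy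
  have hby : algebraMap B K (b * y) ∈ V := by
    rw [mem_poleLE] at hx
    convert hx using 1
    simp only [map_mul, map_pow, pow_succ]
    field_simp
  have hdeg := h.deg_eq_zero_iff_mem.2 hby
  rw [h.deg_mul hb0 hy] at hdeg
  exact hb (h.deg_eq_zero_iff_mem.1 (by lia))

lemma injective_mkQ_comp_subtype_poleLE [IsDomain B] (h : IsUniqueInfinitePlace k B V) {b : B}
    (hb : algebraMap B K b ∉ V) (N : ℕ) :
    Function.Injective ((Ideal.Quotient.mkₐ k (Ideal.span {b ^ (N + 1)})).toLinearMap ∘ₗ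
      (h.poleLE (b ^ N)).subtype) := by
  rw [injective_iff_map_eq_zero]
  rintro ⟨x, hx⟩ hx0
  have hdvd : b ^ (N + 1) ∣ x := Ideal.mem_span_singleton.1 (Ideal.Quotient.eq_zero_iff_mem.1 hx0)
  exact Subtype.ext (h.eq_zero_of_mem_poleLE_of_pow_succ_dvd hb hx hdvd)

lemma finite_poleLE_pow [IsDomain B] (h : IsUniqueInfinitePlace k B V) {b : B}
    (hb : algebraMap B K b ∉ V) (N : ℕ) : Module.Finite k (h.poleLE (b ^ N)) :=
  have := h.finite_quotient (pow_ne_zero (N + 1) (ne_zero_of_notMem hb))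
  Module.Finite.of_injective _ (h.injective_mkQ_comp_subtype_poleLE hb N)

lemma finrank_poleLE_pow_le [IsDomain B] (h : IsUniqueInfinitePlace k B V) {b : B}
    (hb : algebraMap B K b ∉ V) (N : ℕ) :
    Module.finrank k (h.poleLE (b ^ N)) ≤ (N + 1) * deg k b := by
  have hb0 : b ≠ 0 := ne_zero_of_notMem hb
  have := h.finite_quotient (pow_ne_zero (N + 1) hb0)
  rw [← h.deg_pow hb0]
  exact LinearMap.finrank_le_finrank_of_injective (h.injective_mkQ_comp_subtype_poleLE hb N)

lemma self_mem_poleLE (h : IsUniqueInfinitePlace k B V) {a : B} (ha : a ≠ 0) :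
    a ∈ h.poleLE a := by
  rw [mem_poleLE, div_self (by simpa using ha)]
  exact V.one_mem

lemma poleLE_le_poleLE {h : IsUniqueInfinitePlace k B V} {a b : B} (ha : a ≠ 0)
    (hab : a ∈ h.poleLE b) : h.poleLE a ≤ h.poleLE b := by
  intro x hx
  have hx' := V.mul_mem _ _ hx hab
  rwa [div_mul_div_cancel₀ (by simpa using ha)] at hx'

/-- The images of the spaces `poleLE (a ^ n)` exhaust the finite-dimensional space `B ⧸ (a)`. -/
lemma exists_forall_exists_dvd_sub (h : IsUniqueInfinitePlace k B V) {a : B}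
    (ha : algebraMap B K a ∉ V) : ∃ n, ∀ x, ∃ w ∈ h.poleLE (a ^ n), a ∣ x - w := by
  have := h.finite_quotient (ne_zero_of_notMem ha)
  let π : B →ₗ[k] B ⧸ Ideal.span {a} := (Ideal.Quotient.mkₐ k (Ideal.span {a})).toLinearMap
  obtain ⟨n, hn⟩ := monotone_stabilizes_iff_noetherian.2
    (inferInstance : IsNoetherian k (B ⧸ Ideal.span {a}))
    ⟨fun n ↦ (h.poleLE (a ^ n)).map π, fun m n hmn ↦
      Submodule.map_mono (h.monotone_poleLE_pow ha hmn)⟩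
  refine ⟨n, fun x ↦ ?_⟩
  obtain ⟨m, hm⟩ := h.exists_mem_poleLE_pow ha x
  have hx : π x ∈ (h.poleLE (a ^ n)).map π := by
    have hmax := Submodule.mem_map_of_mem (f := π)
      (h.monotone_poleLE_pow ha (le_max_right n m) hm)
    exact (hn _ (le_max_left n m)).ge hmax
  obtain ⟨w, hw, hwx⟩ := hx
  exact ⟨w, hw, Ideal.mem_span_singleton.1 (Ideal.Quotient.eq.1 hwx.symm)⟩

lemma exists_forall_exists_pow_succ_dvd_sub (h : IsUniqueInfinitePlace k B V) {a : B}
    (ha : algebraMap B K a ∉ V) :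
    ∃ n, ∀ s x, ∃ w ∈ h.poleLE (a ^ (n + s)), a ^ (s + 1) ∣ x - w := by
  have ha0 := ne_zero_of_notMem ha
  obtain ⟨n, hn⟩ := h.exists_forall_exists_dvd_sub ha
  refine ⟨n, fun s ↦ ?_⟩
  induction s with
  | zero => simpa using hn
  | succ s ih =>
    intro x
    obtain ⟨w, hw, y, hy⟩ := hn x
    obtain ⟨w', hw', z, hz⟩ := ih y
    refine ⟨w + a * w', add_mem (h.monotone_poleLE_pow ha (by lia) hw) ?_, z, ?_⟩
    · rw [← add_assoc, pow_succ']
      exact mul_mem_poleLE (h.self_mem_poleLE ha0) hw'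
    · linear_combination hy + a * hz

/-- Squeezed between the growth rates of `B ⧸ (a ^ s)` and of `poleLE (b ^ s)`. -/
lemma deg_le_deg [IsDomain B] (h : IsUniqueInfinitePlace k B V) {a b : B}
    (ha : algebraMap B K a ∉ V) (hb : algebraMap B K b ∉ V) (hab : a ∈ h.poleLE b) :
    deg k a ≤ deg k b := by
  have ha0 := ne_zero_of_notMem ha
  obtain ⟨n, hn⟩ := h.exists_forall_exists_pow_succ_dvd_sub ha
  have hgrowth (s : ℕ) : (s + 1) * deg k a ≤ (n + s + 1) * deg k b := by
    have := h.finite_poleLE_pow hb (n + s)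
    refine le_trans ?_ (h.finrank_poleLE_pow_le hb (n + s))
    rw [← h.deg_pow ha0]
    refine LinearMap.finrank_le_finrank_of_surjective
      (f := (Ideal.Quotient.mkₐ k (Ideal.span {a ^ (s + 1)})).toLinearMap ∘ₗ
        (h.poleLE (b ^ (n + s))).subtype) fun y ↦ ?_
    obtain ⟨x, rfl⟩ := Ideal.Quotient.mk_surjective y
    obtain ⟨w, hw, hdvd⟩ := hn s x
    have hle := poleLE_le_poleLE (pow_ne_zero (n + s) ha0) (pow_mem_poleLE hab (n + s))
    exact ⟨⟨w, hle hw⟩, (Ideal.Quotient.eq.2 (Ideal.mem_span_singleton.2 hdvd)).symm⟩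
  by_contra! hlt
  nlinarith [hgrowth (n * deg k b), Nat.mul_le_mul_left (n * deg k b + 1) hlt]

lemma deg_le_deg_of_mem_poleLE [IsDomain B] (h : IsUniqueInfinitePlace k B V) {a b : B}
    (hb0 : b ≠ 0) (hab : a ∈ h.poleLE b) : deg k a ≤ deg k b := by
  by_cases ha : algebraMap B K a ∈ V
  · exact (h.deg_eq_zero_iff_mem.2 ha).trans_le (Nat.zero_le _)
  refine h.deg_le_deg ha (fun hb ↦ ha ?_) hab
  rw [← div_mul_cancel₀ (algebraMap B K a) (b := algebraMap B K b) (by simpa using hb0)]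
  exact V.mul_mem _ _ hab hb

lemma deg_add_le [IsDomain B] (h : IsUniqueInfinitePlace k B V) (a b : B) :
    deg k (a + b) ≤ max (deg k a) (deg k b) := by
  obtain rfl | ha := eq_or_ne a 0
  · simp
  obtain rfl | hb := eq_or_ne b 0
  · simp
  obtain hab | hba := V.mem_or_inv_mem (algebraMap B K a / algebraMap B K b)
  · exact le_max_of_le_right (h.deg_le_deg_of_mem_poleLE hb (add_mem hab (h.self_mem_poleLE hb)))
  · rw [inv_div] at hba
    exact le_max_of_le_left (h.deg_le_deg_of_mem_poleLE ha (add_mem (h.self_mem_poleLE ha) hba))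

end IsUniqueInfinitePlace

/-- The `k`-algebra `B` is finitely generated and `deg k` behaves on it like the pole order at a
single point at infinity; this is all that is needed of a unique infinite place. -/
structure IsDegreeDomain (k B : Type*) [Field k] [CommRing B] [Algebra k B] : Prop where
  deg_zero : deg k (0 : B) = 0
  deg_mul : ∀ {a b : B}, a ≠ 0 → b ≠ 0 → deg k (a * b) = deg k a + deg k b
  deg_add_le : ∀ a b : B, deg k (a + b) ≤ max (deg k a) (deg k b)
  deg_eq_zero_iff : ∀ {b : B}, deg k b = 0 ↔ b ∈ (algebraMap k B).range
  finite_quotient : ∀ {b : B}, b ≠ 0 → Module.Finite k (B ⧸ Ideal.span {b})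
  finite_aeval : ∀ {b : B}, 0 < deg k b → (aeval b : k[X] →ₐ[k] B).toRingHom.Finite
  exists_deg_pos : ∃ b : B, 0 < deg k b
  finiteType : Algebra.FiniteType k B

lemma IsUniqueInfinitePlace.isDegreeDomain {k B K : Type*} [Field k] [CommRing B] [IsDomain B]
    [Field K] [Algebra k B] [Algebra B K] [Algebra k K] [IsScalarTower k B K] [FaithfulSMul B K]
    {V : ValuationSubring K} (h : IsUniqueInfinitePlace k B V) : IsDegreeDomain k B where
  deg_zero := h.deg_zero
  deg_mul := h.deg_mul
  deg_add_le := h.deg_add_le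
  deg_eq_zero_iff := h.deg_eq_zero_iff_mem.trans h.mem_range_iff.symm
  finite_quotient := h.finite_quotient
  finite_aeval hb := h.finite_aeval (mt h.deg_eq_zero_iff_mem.2 hb.ne')
  exists_deg_pos :=
    h.exists_notMem.imp fun _ hb ↦ Nat.pos_of_ne_zero (mt h.deg_eq_zero_iff_mem.1 hb)
  finiteType := h.finiteType

namespace IsDegreeDomain

variable {k B : Type*} [Field k] [CommRing B] [Algebra k B]

lemma deg_algebraMap (h : IsDegreeDomain k B) (c : k) : deg k (algebraMap k B c) = 0 :=
  h.deg_eq_zero_iff.2 ⟨c, rfl⟩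

lemma deg_mul_le (h : IsDegreeDomain k B) (a b : B) : deg k (a * b) ≤ deg k a + deg k b := by
  obtain rfl | ha := eq_or_ne a 0
  · simp [h.deg_zero]
  obtain rfl | hb := eq_or_ne b 0
  · simp [h.deg_zero]
  exact (h.deg_mul ha hb).le

lemma deg_smul_le (h : IsDegreeDomain k B) (c : k) (b : B) : deg k (c • b) ≤ deg k b := by
  rw [Algebra.smul_def]
  simpa [h.deg_algebraMap] using h.deg_mul_le (algebraMap k B c) b

lemma deg_smul (h : IsDegreeDomain k B) {c : k} (hc : c ≠ 0) (b : B) :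
    deg k (c • b) = deg k b :=
  (h.deg_smul_le c b).antisymm (by simpa [hc] using h.deg_smul_le c⁻¹ (c • b))

lemma deg_neg (h : IsDegreeDomain k B) (b : B) : deg k (-b) = deg k b := by
  simpa using h.deg_smul (neg_ne_zero.2 one_ne_zero) b

lemma deg_sub_le (h : IsDegreeDomain k B) (a b : B) :
    deg k (a - b) ≤ max (deg k a) (deg k b) := by
  rw [sub_eq_add_neg, ← h.deg_neg b]
  exact h.deg_add_le _ _

lemma deg_add_eq_left (h : IsDegreeDomain k B) {a b : B} (hab : deg k b < deg k a) :
    deg k (a + b) = deg k a := by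
  have hle := h.deg_add_le a b
  have hge := h.deg_sub_le (a + b) b
  rw [add_sub_cancel_right] at hge
  lia

lemma deg_sum_le (h : IsDegreeDomain k B) {ι : Type*} {s : Finset ι} {g : ι → B} {n : ℕ}
    (hg : ∀ i ∈ s, deg k (g i) ≤ n) : deg k (∑ i ∈ s, g i) ≤ n :=
  Finset.sum_induction g (fun b ↦ deg k b ≤ n)
    (fun _ _ ha hb ↦ (h.deg_add_le _ _).trans (max_le ha hb)) (h.deg_zero.trans_le n.zero_le) hg

lemma deg_le_of_dvd (h : IsDegreeDomain k B) {a b : B} (hb : b ≠ 0) (hab : a ∣ b) :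
    deg k a ≤ deg k b := by
  obtain ⟨c, rfl⟩ := hab
  rw [h.deg_mul (left_ne_zero_of_mul hb) (right_ne_zero_of_mul hb)]
  exact Nat.le_add_right _ _

lemma ne_zero_of_deg_pos (h : IsDegreeDomain k B) {a : B} (ha : 0 < deg k a) : a ≠ 0 := by
  rintro rfl
  exact ha.ne' h.deg_zero

lemma isUnit_iff (h : IsDegreeDomain k B) {a : B} (ha : a ≠ 0) : IsUnit a ↔ deg k a = 0 := by
  refine ⟨deg_of_isUnit, fun h0 ↦ ?_⟩
  obtain ⟨c, rfl⟩ := h.deg_eq_zero_iff.1 h0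
  exact (IsUnit.mk0 c (by rintro rfl; simp at ha)).map _

/-- The elements of degree at most `n`. -/
def degLE (h : IsDegreeDomain k B) (n : ℕ) : Submodule k B where
  carrier := {b | deg k b ≤ n}
  add_mem' {a b} ha hb := (h.deg_add_le a b).trans (max_le ha hb)
  zero_mem' := by simp [h.deg_zero]
  smul_mem' c b hb := (h.deg_smul_le c b).trans hb

lemma mem_degLE {h : IsDegreeDomain k B} {n : ℕ} {b : B} : b ∈ h.degLE n ↔ deg k b ≤ n := Iff.rfl

variable [IsDomain B]

lemma deg_pow (h : IsDegreeDomain k B) (a : B) (n : ℕ) : deg k (a ^ n) = n * deg k a := by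
  obtain rfl | ha := eq_or_ne a 0
  · obtain rfl | hn := eq_or_ne n 0
    · simpa using deg_of_isUnit isUnit_one
    · simp [hn, h.deg_zero]
  induction n with
  | zero => simpa using deg_of_isUnit isUnit_one
  | succ n ih => rw [pow_succ, h.deg_mul (pow_ne_zero _ ha) ha, ih, add_one_mul]

lemma deg_aeval_le (h : IsDegreeDomain k B) (f : B) (p : k[X]) :
    deg k (aeval f p) ≤ p.natDegree * deg k f := by
  rw [aeval_eq_sum_range]
  refine h.deg_sum_le fun i hi ↦ (h.deg_smul_le _ _).trans ?_
  rw [h.deg_pow]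
  exact Nat.mul_le_mul_right _ (Nat.lt_succ_iff.1 (Finset.mem_range.1 hi))

lemma deg_aeval (h : IsDegreeDomain k B) {f : B} (hf : 0 < deg k f) (p : k[X]) :
    deg k (aeval f p) = p.natDegree * deg k f := by
  obtain h0 | h0 := Nat.eq_zero_or_pos p.natDegree
  · rw [eq_C_of_natDegree_eq_zero h0, aeval_C, h.deg_algebraMap]
    simp
  have hp : p.leadingCoeff ≠ 0 := leadingCoeff_ne_zero.2 (ne_zero_of_natDegree_gt h0)
  have hlead : deg k (aeval f (C p.leadingCoeff * X ^ p.natDegree)) = p.natDegree * deg k f := by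
    rw [map_mul, aeval_C, ← Algebra.smul_def, map_pow, aeval_X, h.deg_smul hp, h.deg_pow]
  have hrest : deg k (aeval f p.eraseLead) < p.natDegree * deg k f :=
    (h.deg_aeval_le _ _).trans_lt
      (Nat.mul_lt_mul_of_pos_right (p.eraseLead_natDegree_le.trans_lt (by lia)) hf)
  rw [← hlead, ← h.deg_add_eq_left (hrest.trans_eq hlead.symm), ← map_add, add_comm,
    eraseLead_add_C_mul_X_pow]

lemma aeval_ne_zero (h : IsDegreeDomain k B) {f : B} (hf : 0 < deg k f) {p : k[X]} (hp : p ≠ 0) :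
    aeval f p ≠ 0 := by
  intro h0
  have hdeg := h.deg_aeval hf (p * X)
  rw [map_mul, h0, zero_mul, h.deg_zero, natDegree_mul_X hp] at hdeg
  exact (Nat.mul_pos p.natDegree.succ_pos hf).ne hdeg

lemma injective_mkQ_comp_subtype_degLE (h : IsDegreeDomain k B) {f : B} {n N : ℕ}
    (hn : n < N * deg k f) : Function.Injective
      ((Ideal.Quotient.mkₐ k (Ideal.span {f ^ N})).toLinearMap ∘ₗ (h.degLE n).subtype) := by
  rw [injective_iff_map_eq_zero]
  rintro ⟨x, hx⟩ hx0
  have hdvd : f ^ N ∣ x := Ideal.mem_span_singleton.1 (Ideal.Quotient.eq_zero_iff_mem.1 hx0)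
  ext
  by_contra hne
  exact (hn.trans_le ((h.deg_pow f N).ge.trans (h.deg_le_of_dvd hne hdvd))).not_ge hx

lemma finite_degLE (h : IsDegreeDomain k B) (n : ℕ) : Module.Finite k (h.degLE n) := by
  obtain ⟨f, hf⟩ := h.exists_deg_pos
  have := h.finite_quotient (pow_ne_zero (n + 1) (h.ne_zero_of_deg_pos hf))
  exact Module.Finite.of_injective _ (h.injective_mkQ_comp_subtype_degLE
    (n.lt_succ_self.trans_le (Nat.le_mul_of_pos_right _ hf)))

lemma finrank_degLE_le (h : IsDegreeDomain k B) {f : B} (hf : 0 < deg k f) (n : ℕ) :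
    Module.finrank k (h.degLE n) ≤ n + deg k f := by
  have := h.finite_quotient (pow_ne_zero (n / deg k f + 1) (h.ne_zero_of_deg_pos hf))
  calc Module.finrank k (h.degLE n) ≤ deg k (f ^ (n / deg k f + 1)) :=
        LinearMap.finrank_le_finrank_of_injective
          (h.injective_mkQ_comp_subtype_degLE (Nat.lt_div_mul_add hf |>.trans_eq (by ring)))
    _ = n / deg k f * deg k f + deg k f := by rw [h.deg_pow, add_one_mul]
    _ ≤ n + deg k f := by gcongr; exact Nat.div_mul_le_self _ _

end IsDegreeDomain

/-- The `k[X]`-algebra structure on `B` in which `X` acts as `f`. -/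
noncomputable abbrev polynomialAlgebra (k : Type*) {B : Type*} [Field k] [CommRing B] [Algebra k B]
    (f : B) : Algebra k[X] B :=
  (aeval f : k[X] →ₐ[k] B).toRingHom.toAlgebra

section PolynomialAlgebra

variable {k B : Type*} [Field k] [CommRing B] [Algebra k B]

lemma isScalarTower_polynomialAlgebra (f : B) :
    letI := polynomialAlgebra k f
    IsScalarTower k k[X] B :=
  letI := polynomialAlgebra k f
  IsScalarTower.of_algHom (aeval f)

lemma IsDegreeDomain.faithfulSMul_polynomialAlgebra [IsDomain B] (h : IsDegreeDomain k B) {f : B}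
    (hf : 0 < deg k f) :
    letI := polynomialAlgebra k f
    FaithfulSMul k[X] B := by
  let := polynomialAlgebra k f
  rw [faithfulSMul_iff_algebraMap_injective, injective_iff_map_eq_zero]
  exact fun p hp ↦ by_contra fun hp0 ↦ h.aeval_ne_zero hf hp0 hp

end PolynomialAlgebra

/-! ### Separating elements -/

section Kaehler

open KaehlerDifferential

lemma span_range_D_algebraMap (k A L : Type*) [CommRing k] [CommRing A] [CommRing L] [Algebra k A]
    [Algebra k L] [Algebra A L] [IsScalarTower k A L] :
    Submodule.span L (Set.range fun a : A ↦ D k L (algebraMap A L a)) =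
      LinearMap.ker (map k A L L) := by
  refine le_antisymm ?_ fun ω hω ↦ ?_
  · rw [Submodule.span_le]
    rintro _ ⟨a, rfl⟩
    simp
  rw [← range_mapBaseChange] at hω
  obtain ⟨t, rfl⟩ := hω
  induction t using TensorProduct.induction_on with
  | zero => simp
  | add s t hs ht => rw [map_add]; exact add_mem hs ht
  | tmul b ω =>
    rw [mapBaseChange_tmul]
    refine Submodule.smul_mem _ _ ?_
    induction (span_range_derivation k A).ge (Submodule.mem_top (x := ω))
      using Submodule.span_induction with
    | mem ω hω => obtain ⟨a, rfl⟩ := hω; rw [map_D]; exact Submodule.subset_span ⟨a, rfl⟩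
    | zero => simp
    | add ω η _ _ hω hη => rw [map_add]; exact add_mem hω hη
    | smul a ω _ hω =>
      rw [map_smul, algebra_compatible_smul L]
      exact Submodule.smul_mem _ _ hω

lemma formallyUnramified_iff_span_range_D (k A L : Type*) [CommRing k] [CommRing A] [CommRing L]
    [Algebra k A] [Algebra k L] [Algebra A L] [IsScalarTower k A L] :
    Algebra.FormallyUnramified A L ↔
      Submodule.span L (Set.range fun a : A ↦ D k L (algebraMap A L a)) = ⊤ := by
  rw [span_range_D_algebraMap, Algebra.formallyUnramified_iff, LinearMap.ker_eq_top]
  refine ⟨fun _ ↦ Subsingleton.elim _ _, fun h0 ↦ subsingleton_of_forall_eq 0 fun ω ↦ ?_⟩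
  obtain ⟨ω, rfl⟩ := map_surjective k A L ω
  rw [h0, LinearMap.zero_apply]

lemma span_D_singleton_eq_top_of_isSeparable {k L : Type*} [Field k] [Field L] [Algebra k L] (x : L)
    [Algebra.IsSeparable (IntermediateField.adjoin k {x}) L] :
    Submodule.span L {D k L x} = ⊤ := by
  rw [eq_top_iff, ← (formallyUnramified_iff_span_range_D k (IntermediateField.adjoin k {x}) L).1
    (Algebra.FormallyUnramified.of_isSeparable _ L), Submodule.span_le]
  rintro _ ⟨⟨y, hy⟩, rfl⟩
  change D k L y ∈ Submodule.span L {D k L x}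
  induction hy using IntermediateField.adjoin_induction with
  | mem y hy => obtain rfl := hy; exact Submodule.mem_span_singleton_self _
  | algebraMap c => simp
  | add a b _ _ ha hb => rw [map_add]; exact add_mem ha hb
  | inv a _ ha => rw [Derivation.leibniz_inv]; exact Submodule.smul_mem _ _ ha
  | mul a b _ _ ha hb =>
    rw [Derivation.leibniz]
    exact add_mem (Submodule.smul_mem _ _ hb) (Submodule.smul_mem _ _ ha)

attribute [local instance] FractionRing.liftAlgebra

variable {k B : Type*} [Field k] [CommRing B] [IsDomain B] [Algebra k B]

lemma isSeparable_of_span_D_eq_top [Algebra k[X] B] [IsScalarTower k k[X] B] [FaithfulSMul k[X] B]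
    [Module.Finite k[X] B]
    (hspan : Submodule.span (FractionRing B)
      {D k (FractionRing B) (algebraMap B (FractionRing B) (algebraMap k[X] B X))} = ⊤) :
    Algebra.IsSeparable (FractionRing k[X]) (FractionRing B) := by
  have : Algebra.FormallyUnramified (FractionRing k[X]) (FractionRing B) := by
    rw [formallyUnramified_iff_span_range_D k, eq_top_iff, ← hspan, Submodule.span_le,
      Set.singleton_subset_iff, ← IsScalarTower.algebraMap_apply k[X] B (FractionRing B),
      IsScalarTower.algebraMap_apply k[X] (FractionRing k[X]) (FractionRing B)]
    exact Submodule.subset_span ⟨_, rfl⟩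
  exact Algebra.FormallyUnramified.isSeparable _ _

/-- Clearing denominators in a derivation of the fraction field. -/
lemma exists_derivation_of_fractionRing [Algebra.FiniteType k B]
    (d : Derivation k (FractionRing B) (FractionRing B)) :
    ∃ c : B, c ≠ 0 ∧ ∃ δ : Derivation k B B, ∀ b, algebraMap B (FractionRing B) (δ b) =
      algebraMap B (FractionRing B) c * d (algebraMap B (FractionRing B) b) := by
  obtain ⟨S, hS⟩ := (Algebra.FiniteType.out : (⊤ : Subalgebra k B).FG)
  classical
  obtain ⟨c, hc⟩ := IsLocalization.exist_integer_multiples_of_finset (nonZeroDivisors B)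
    (S.image fun b ↦ d (algebraMap B (FractionRing B) b))
  let d' : Derivation k B (FractionRing B) := (c : B) • d.compAlgebraMap B
  have hd' (b : B) : ∃ y : B, algebraMap B (FractionRing B) y = d' b := by
    induction (hS ▸ Algebra.mem_top : b ∈ Algebra.adjoin k (S : Set B))
      using Algebra.adjoin_induction with
    | mem x hx => exact hc _ (Finset.mem_image_of_mem _ hx)
    | algebraMap r => exact ⟨0, by simp⟩
    | add x y _ _ hx hy =>
      obtain ⟨⟨u, hu⟩, v, hv⟩ := hx, hy
      exact ⟨u + v, by rw [map_add, map_add, hu, hv]⟩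
    | mul x y _ _ hx hy =>
      obtain ⟨⟨u, hu⟩, v, hv⟩ := hx, hy
      exact ⟨x * v + y * u, by simp [hu, hv, Algebra.smul_def]⟩
  choose δ hδ using hd'
  have hinj := IsFractionRing.injective B (FractionRing B)
  refine ⟨c, nonZeroDivisors.ne_zero c.2, Derivation.mk' ⟨⟨δ, fun x y ↦ hinj ?_⟩,
    fun r x ↦ hinj ?_⟩ fun x y ↦ hinj ?_, fun b ↦ ?_⟩
  · simp only [map_add, hδ]
  · simp [hδ, Algebra.smul_def r, Algebra.smul_def x, ← IsScalarTower.algebraMap_apply]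
  · simp [hδ, Algebra.smul_def x, Algebra.smul_def y]
  · exact (hδ b).trans (by simp [d', Algebra.smul_def])

lemma exists_derivation_apply_ne_zero [Algebra.FiniteType k B] {f : B}
    (hf : D k (FractionRing B) (algebraMap B (FractionRing B) f) ≠ 0) :
    ∃ δ : Derivation k B B, δ f ≠ 0 := by
  obtain ⟨l, hl⟩ : ∃ l : Module.Dual (FractionRing B) Ω[(FractionRing B)⁄k],
      l (D k (FractionRing B) (algebraMap B (FractionRing B) f)) ≠ 0 := by
    contrapose! hf
    exact (Module.forall_dual_apply_eq_zero_iff (FractionRing B) _).1 hf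
  obtain ⟨c, hc, δ, hδ⟩ := exists_derivation_of_fractionRing (l.compDer (D k (FractionRing B)))
  refine ⟨δ, fun h0 ↦ mul_ne_zero ?_ hl ((hδ f).symm.trans (by rw [h0, map_zero]))⟩
  simpa using hc

lemma exists_isSeparable_adjoin_singleton [PerfectField k] (h : IsDegreeDomain k B) :
    ∃ x : FractionRing B,
      Algebra.IsSeparable (IntermediateField.adjoin k {x}) (FractionRing B) := by
  obtain ⟨f, hf⟩ := h.exists_deg_pos
  have := h.finiteType
  let := polynomialAlgebra k f
  have := isScalarTower_polynomialAlgebra (k := k) f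
  have := h.faithfulSMul_polynomialAlgebra hf
  have : Module.Finite k[X] B := h.finite_aeval hf
  have : Algebra.IsAlgebraic k[X] (FractionRing k[X]) :=
    IsLocalization.isAlgebraic _ (nonZeroDivisors k[X])
  have : Algebra.IsAlgebraic k[X] (FractionRing B) := .trans _ (FractionRing k[X]) _
  obtain ⟨s, hs, hsep⟩ :=
    exists_isTranscendenceBasis_and_isSeparable_of_perfectField k (FractionRing B)
  have hcard : s.card = 1 := by
    have htr := lift_trdeg_add_eq k k[X] (FractionRing B)
    rw [_root_.trdeg_eq_zero (R := k[X]), trdeg_of_isDomain, ← hs.cardinalMk_eq_trdeg] at htr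
    simpa using htr.symm
  obtain ⟨x, rfl⟩ := Finset.card_eq_one.1 hcard
  exact ⟨x, by rwa [Finset.coe_singleton] at hsep⟩

lemma exists_D_algebraMap_ne_zero [PerfectField k] (h : IsDegreeDomain k B) :
    ∃ f : B, D k (FractionRing B) (algebraMap B (FractionRing B) f) ≠ 0 := by
  by_contra! hD
  have := h.finiteType
  have : Algebra.FormallyUnramified k (FractionRing B) := by
    rw [Algebra.formallyUnramified_iff, ← Submodule.subsingleton_iff (FractionRing B),
      ← subsingleton_iff_bot_eq_top, ← span_range_derivation, eq_comm, Submodule.span_eq_bot]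
    rintro _ ⟨y, rfl⟩
    obtain ⟨a, b, -, rfl⟩ := IsFractionRing.div_surjective (A := B) y
    simp [Derivation.leibniz_div, hD]
  have := Algebra.FormallyUnramified.isSeparable k (FractionRing B)
  obtain ⟨f, hf⟩ := h.exists_deg_pos
  obtain ⟨p, hp, hp0⟩ := Algebra.IsAlgebraic.isAlgebraic (R := k) (algebraMap B (FractionRing B) f)
  rw [aeval_algebraMap_apply] at hp0
  exact h.aeval_ne_zero hf hp
    ((map_eq_zero_iff _ (IsFractionRing.injective B (FractionRing B))).1 hp0)

lemma exists_span_D_eq_top [PerfectField k] (h : IsDegreeDomain k B) :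
    ∃ f : B, D k (FractionRing B) (algebraMap B (FractionRing B) f) ≠ 0 ∧
      Submodule.span (FractionRing B)
        {D k (FractionRing B) (algebraMap B (FractionRing B) f)} = ⊤ := by
  obtain ⟨x, hx⟩ := exists_isSeparable_adjoin_singleton h
  obtain ⟨f, hf⟩ := exists_D_algebraMap_ne_zero h
  have hspan := span_D_singleton_eq_top_of_isSeparable (k := k) x
  refine ⟨f, hf, ?_⟩
  obtain ⟨e, he⟩ := Submodule.mem_span_singleton.1
    (hspan.ge (Submodule.mem_top (x := D k (FractionRing B) (algebraMap B (FractionRing B) f))))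
  have he0 : e ≠ 0 := left_ne_zero_of_smul (he ▸ hf)
  rw [← he, Submodule.span_singleton_smul_eq he0.isUnit, hspan]

end Kaehler

section PrimitiveElement

open scoped IntermediateField

attribute [local instance] FractionRing.liftAlgebra

section General

variable (A B : Type*) [CommRing A] [IsDomain A] [CommRing B] [IsDomain B] [Algebra A B]
  [FaithfulSMul A B] [Module.Finite A B]

lemma exists_adjoin_algebraMap_eq_top [IsIntegrallyClosed B]
    [Algebra.IsSeparable (FractionRing A) (FractionRing B)] :
    ∃ θ : B, (FractionRing A)⟮algebraMap B (FractionRing B) θ⟯ = ⊤ := by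
  have : Algebra.IsAlgebraic A (FractionRing A) := IsLocalization.isAlgebraic _ (nonZeroDivisors A)
  have : Algebra.IsAlgebraic A (FractionRing B) := .trans _ (FractionRing A) _
  have : FiniteDimensional (FractionRing A) (FractionRing B) := inferInstance
  obtain ⟨α, hα⟩ := Field.exists_primitive_element (FractionRing A) (FractionRing B)
  obtain ⟨y, hy0, hy⟩ :=
    (Algebra.IsAlgebraic.isAlgebraic (R := A) α).exists_integral_multiple
  obtain ⟨θ, hθ⟩ := IsIntegrallyClosed.isIntegral_iff.1 (hy.tower_top (A := B))
  refine ⟨θ, ?_⟩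
  rw [eq_top_iff, ← hα, IntermediateField.adjoin_simple_le_iff, hθ,
    algebra_compatible_smul (FractionRing A) y]
  have hy0' : algebraMap A (FractionRing A) y ≠ 0 := by simpa using hy0
  have hmem := IntermediateField.smul_mem _ (x := (algebraMap A (FractionRing A) y)⁻¹)
    (IntermediateField.mem_adjoin_simple_self (FractionRing A)
      (algebraMap A (FractionRing A) y • α))
  rwa [inv_smul_smul₀ hy0'] at hmem

variable {B} {θ : B}

lemma natDegree_minpoly_eq_finrank [IsIntegrallyClosed A]
    (hθ : (FractionRing A)⟮algebraMap B (FractionRing B) θ⟯ = ⊤) :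
    (minpoly A θ).natDegree = Module.finrank (FractionRing A) (FractionRing B) := by
  have hint : IsIntegral A θ := Algebra.IsIntegral.isIntegral θ
  rw [← IntermediateField.finrank_top', ← hθ, IntermediateField.adjoin.finrank
    (hint.algebraMap.tower_top), minpoly.isIntegrallyClosed_eq_field_fractions _ _ hint,
    (minpoly.monic hint).natDegree_map]

lemma exists_smul_mem_adjoin (hθ : (FractionRing A)⟮algebraMap B (FractionRing B) θ⟯ = ⊤) (b : B) :
    ∃ a : A, a ≠ 0 ∧ a • b ∈ Algebra.adjoin A {θ} := by
  have hint : IsIntegral (FractionRing A) (algebraMap B (FractionRing B) θ) :=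
    (Algebra.IsIntegral.isIntegral (R := A) θ).algebraMap.tower_top
  have hb : algebraMap B (FractionRing B) b ∈
      (FractionRing A)⟮algebraMap B (FractionRing B) θ⟯ := hθ ▸ IntermediateField.mem_top
  rw [← IntermediateField.mem_toSubalgebra,
    IntermediateField.adjoin_simple_toSubalgebra_of_isAlgebraic hint.isAlgebraic,
    Algebra.adjoin_singleton_eq_range_aeval] at hb
  obtain ⟨p, hp : aeval _ p = _⟩ := hb
  obtain ⟨a, ha, hap⟩ := IsLocalization.integerNormalization_spec (nonZeroDivisors A) p
  refine ⟨a, nonZeroDivisors.ne_zero ha, ?_⟩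
  rw [Algebra.adjoin_singleton_eq_range_aeval]
  refine ⟨IsLocalization.integerNormalization (nonZeroDivisors A) p,
    IsFractionRing.injective B (FractionRing B) ?_⟩
  change algebraMap B (FractionRing B) (aeval θ _) = _
  rw [← aeval_algebraMap_apply, ← aeval_map_algebraMap (FractionRing A), hap,
    (aeval (R := FractionRing A) _).map_smul_of_tower, hp,
    Algebra.smul_def, Algebra.smul_def, map_mul, ← IsScalarTower.algebraMap_apply]

lemma exists_forall_smul_mem_adjoin
    (hθ : (FractionRing A)⟮algebraMap B (FractionRing B) θ⟯ = ⊤) :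
    ∃ a : A, a ≠ 0 ∧ ∀ b : B, a • b ∈ Algebra.adjoin A {θ} := by
  let N := Subalgebra.toSubmodule (Algebra.adjoin A {θ})
  have htors : Module.IsTorsion A (B ⧸ N) := by
    intro x
    obtain ⟨b, rfl⟩ := N.mkQ_surjective x
    obtain ⟨a, ha, hab⟩ := exists_smul_mem_adjoin A hθ b
    refine ⟨⟨a, mem_nonZeroDivisors_of_ne_zero ha⟩, ?_⟩
    exact (N.mkQ.map_smul a b).symm.trans ((Submodule.Quotient.mk_eq_zero N).2 hab)
  obtain ⟨a, ha, ha0⟩ := Submodule.annihilator_top_inter_nonZeroDivisors htors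
  refine ⟨a, nonZeroDivisors.ne_zero ha0, fun b ↦ (Submodule.Quotient.mk_eq_zero N).1 ?_⟩
  exact Submodule.mem_annihilator.1 ha (N.mkQ b) Submodule.mem_top

end General

variable {k B : Type*} [Field k] [CommRing B] [IsDomain B] [Algebra k B]

lemma finrank_polynomial_eq_deg [Algebra k[X] B] [IsScalarTower k k[X] B] [FaithfulSMul k[X] B]
    [Module.Finite k[X] B] : Module.finrank k[X] B = deg k (algebraMap k[X] B X) := by
  let p : Ideal k[X] := Ideal.span {X - C 0}
  have hp : Module.finrank k (k[X] ⧸ p) = 1 := by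
    rw [(quotientSpanXSubCAlgEquiv (0 : k)).toLinearEquiv.finrank_eq, Module.finrank_self]
  have := Module.nontrivial_of_finrank_pos (hp ▸ one_pos)
  have : IsScalarTower k (k[X] ⧸ p) (B ⧸ p.map (algebraMap k[X] B)) := by
    refine IsScalarTower.of_algebraMap_eq (R := k) (S := k[X] ⧸ p) fun x ↦ ?_
    exact congrArg (Ideal.Quotient.mk _) (IsScalarTower.algebraMap_apply k k[X] B x)
  let e := (Algebra.TensorProduct.quotIdealMapEquivQuotTensor B p).toLinearEquiv
  have := Module.Free.of_equiv e.symm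
  calc Module.finrank k[X] B
      = Module.finrank (k[X] ⧸ p) (B ⧸ p.map (algebraMap k[X] B)) := by
        rw [e.finrank_eq, Module.finrank_baseChange]
    _ = Module.finrank k (B ⧸ p.map (algebraMap k[X] B)) := by
        rw [← Module.finrank_mul_finrank k (k[X] ⧸ p), hp, one_mul]
    _ = deg k (algebraMap k[X] B X) := by
        rw [Ideal.map_span, Set.image_singleton, map_sub, C_0, map_zero, sub_zero, deg]

/-- `θ` generates `B` over its subring `k[f]`, up to the denominator `c`: the minimal polynomial of
`θ` over `k[f]` has degree `deg k f`, and `(X - θ) * G` is its image in `B[X]`. Polynomials over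
`k[f]` are encoded as `U : k[X][X]`, evaluated at `f` and `θ`. -/
structure IsPrimitiveElement (k : Type*) {B : Type*} [Field k] [CommRing B] [Algebra k B]
    (f θ c : B) (G : B[X]) : Prop where
  deg_pos : 0 < deg k f
  eq_zero_of_eval₂_eq_zero {U : k[X][X]} (hU : U.natDegree < deg k f)
    (h0 : U.eval₂ (aeval f : k[X] →ₐ[k] B).toRingHom θ = 0) : U = 0
  ne_zero : c ≠ 0
  exists_eval₂_eq (b : B) : ∃ U : k[X][X], U.eval₂ (aeval f : k[X] →ₐ[k] B).toRingHom θ = c * b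
  monic : G.Monic
  natDegree_add_one : G.natDegree + 1 = deg k f
  exists_map_eq : ∃ P : k[X][X], P.map (aeval f : k[X] →ₐ[k] B).toRingHom = (X - C θ) * G

lemma exists_isPrimitiveElement [IsIntegrallyClosed B] (h : IsDegreeDomain k B) {f : B}
    (hf : 0 < deg k f) (hspan : Submodule.span (FractionRing B)
      {KaehlerDifferential.D k (FractionRing B) (algebraMap B (FractionRing B) f)} = ⊤) :
    ∃ (θ c : B) (G : B[X]), IsPrimitiveElement k f θ c G := by
  let := polynomialAlgebra k f
  have := isScalarTower_polynomialAlgebra (k := k) f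
  have := h.faithfulSMul_polynomialAlgebra hf
  have : Module.Finite k[X] B := h.finite_aeval hf
  have hX : algebraMap k[X] B X = f := aeval_X f
  have : Algebra.IsSeparable (FractionRing k[X]) (FractionRing B) :=
    isSeparable_of_span_D_eq_top (by rwa [hX])
  obtain ⟨θ, hθ⟩ := exists_adjoin_algebraMap_eq_top k[X] B
  obtain ⟨a, ha, hcover⟩ := exists_forall_smul_mem_adjoin k[X] hθ
  have hint : IsIntegral k[X] θ := Algebra.IsIntegral.isIntegral θ
  have hP : (minpoly k[X] θ).natDegree = deg k f := by
    rw [natDegree_minpoly_eq_finrank k[X] hθ, IsFractionRing.finrank_eq k[X] _ B _,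
      finrank_polynomial_eq_deg, hX]
  have hroot : ((minpoly k[X] θ).map (algebraMap k[X] B)).IsRoot θ := by
    rw [IsRoot, eval_map_algebraMap, minpoly.aeval]
  have hfact := mul_divByMonic_eq_iff_isRoot.2 hroot
  have hmonic := (minpoly.monic hint).map (algebraMap k[X] B)
  refine ⟨θ, aeval f a, (minpoly k[X] θ).map (algebraMap k[X] B) /ₘ (X - C θ),
    ⟨hf, fun {U} hU h0 ↦ ?_, h.aeval_ne_zero hf ha, fun b ↦ ?_,
    (monic_X_sub_C θ).of_mul_monic_left (by rwa [hfact]), ?_, minpoly k[X] θ, hfact.symm⟩⟩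
  · by_contra hne
    have := natDegree_le_of_dvd (minpoly.isIntegrallyClosed_dvd hint h0) hne
    lia
  · have hb := hcover b
    rwa [Algebra.adjoin_singleton_eq_range_aeval, Algebra.smul_def] at hb
  · rw [natDegree_divByMonic _ (monic_X_sub_C θ), (minpoly.monic hint).natDegree_map, hP,
      natDegree_X_sub_C]
    lia

lemma exists_isPrimitiveElement_and_derivation [PerfectField k] [IsIntegrallyClosed B]
    (h : IsDegreeDomain k B) : ∃ (f θ c : B) (G : B[X]) (δ : Derivation k B B),
      IsPrimitiveElement k f θ c G ∧ δ f ≠ 0 := by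
  have := h.finiteType
  obtain ⟨f, hDf, hspan⟩ := exists_span_D_eq_top h
  obtain ⟨δ, hδ⟩ := exists_derivation_apply_ne_zero hDf
  have hf : 0 < deg k f := by
    rw [Nat.pos_iff_ne_zero, Ne, h.deg_eq_zero_iff]
    rintro ⟨x, rfl⟩
    simp at hδ
  obtain ⟨θ, c, G, hG⟩ := exists_isPrimitiveElement h hf hspan
  exact ⟨f, θ, c, G, δ, hG, hδ⟩

end PrimitiveElement

/-! ### Stepanov's auxiliary functions -/

section Frobenius

variable {k R : Type*} [Field k] [Fintype k] [CommRing R] [Algebra k R]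

lemma frobeniusAlgHom_pow_apply (j : ℕ) (x : R) :
    (FiniteField.frobeniusAlgHom k R ^ j) x = x ^ Fintype.card k ^ j := by
  rw [AlgHom.coe_pow, FiniteField.coe_frobeniusAlgHom, pow_iterate]

lemma eval₂_aeval_pow_card_pow {r : R} {j : ℕ} (hr : r ^ Fintype.card k ^ j = r) (t : R)
    (U : k[X][X]) : U.eval₂ (aeval r : k[X] →ₐ[k] R).toRingHom t ^ Fintype.card k ^ j =
      U.eval₂ (aeval r : k[X] →ₐ[k] R).toRingHom (t ^ Fintype.card k ^ j) := by
  have hcomp : (FiniteField.frobeniusAlgHom k R ^ j).comp (aeval r) = aeval r := by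
    ext
    rw [AlgHom.comp_apply, aeval_X, frobeniusAlgHom_pow_apply, hr]
  rw [← frobeniusAlgHom_pow_apply, ← frobeniusAlgHom_pow_apply]
  nth_rw 2 [← hcomp]
  exact hom_eval₂ U _ (FiniteField.frobeniusAlgHom k R ^ j).toRingHom t

end Frobenius

namespace IsPrimitiveElement

variable {k B R : Type*} [Field k] [CommRing B] [Algebra k B] [CommRing R] [Algebra k R]

lemma map_eval₂_aeval (π : B →ₐ[k] R) (f θ : B) (U : k[X][X]) :
    π (U.eval₂ (aeval f : k[X] →ₐ[k] B).toRingHom θ) =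
      U.eval₂ (aeval (π f) : k[X] →ₐ[k] R).toRingHom (π θ) := by
  rw [aeval_algHom]
  exact hom_eval₂ U _ π.toRingHom θ

variable [Fintype k] [IsDomain R] {f θ c : B} {G : B[X]}

lemma map_pow_card_pow_eq (F : IsPrimitiveElement k f θ c G) {π : B →ₐ[k] R} {j : ℕ}
    (hf : π f ^ Fintype.card k ^ j = π f) (hθ : π θ ^ Fintype.card k ^ j = π θ) (hc : π c ≠ 0)
    (b : B) : π b ^ Fintype.card k ^ j = π b := by
  have hcb (b : B) : π (c * b) ^ Fintype.card k ^ j = π (c * b) := by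
    obtain ⟨U, hU⟩ := F.exists_eval₂_eq b
    rw [← hU, map_eval₂_aeval, eval₂_aeval_pow_card_pow hf, hθ]
  have hb := hcb b
  have h1 := hcb 1
  rw [mul_one] at h1
  rw [map_mul, mul_pow, h1] at hb
  exact mul_left_cancel₀ hc hb

lemma eval₂_pow_card_pow_eq_zero (F : IsPrimitiveElement k f θ c G) {π : B →ₐ[k] R} {j : ℕ}
    (hf : π f ^ Fintype.card k ^ j = π f) (hθ : π θ ^ Fintype.card k ^ j ≠ π θ) :
    G.eval₂ π.toRingHom (π θ ^ Fintype.card k ^ j) = 0 := by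
  obtain ⟨P, hP⟩ := F.exists_map_eq
  have hcomp : π.toRingHom.comp (aeval f : k[X] →ₐ[k] B).toRingHom =
      (aeval (π f) : k[X] →ₐ[k] R).toRingHom := by
    rw [aeval_algHom]
    rfl
  have hroot (x : R) : P.eval₂ (aeval (π f) : k[X] →ₐ[k] R).toRingHom x =
      (x - π θ) * G.eval₂ π.toRingHom x := by
    rw [← hcomp, ← eval₂_map, hP, eval₂_mul, eval₂_sub, eval₂_X, eval₂_C]
    rfl
  have h0 := eval₂_aeval_pow_card_pow hf (π θ) P
  rw [hroot, hroot, sub_self, zero_mul, zero_pow (pow_ne_zero _ Fintype.card_ne_zero)] at h0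
  exact (mul_eq_zero.1 h0.symm).resolve_left (sub_ne_zero.2 hθ)

end IsPrimitiveElement

/-- The `k`-independent family `f ^ i * θ ^ j`, `j < deg k f`, enumerated so that the degree of the
`x`-th member is `x` up to a bounded error. -/
noncomputable def monomialFamily (k : Type*) {B : Type*} [Field k] [CommRing B] [Algebra k B]
    (f θ : B) (x : ℕ) : B :=
  f ^ (x / deg k f) * θ ^ (x % deg k f)

section MonomialFamily

variable {k B : Type*} [Field k] [CommRing B] [Algebra k B]

lemma IsDegreeDomain.deg_monomialFamily_le [IsDomain B] (h : IsDegreeDomain k B) {f : B}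
    (hf : 0 < deg k f) (θ : B) (x : ℕ) :
    deg k (monomialFamily k f θ x) ≤ x + deg k f * deg k θ := by
  refine (h.deg_mul_le _ _).trans ?_
  rw [h.deg_pow, h.deg_pow]
  gcongr
  · exact Nat.div_mul_le_self _ _
  · exact (Nat.mod_lt _ hf).le

lemma IsPrimitiveElement.linearIndependent_monomialFamily {f θ c : B} {G : B[X]}
    (F : IsPrimitiveElement k f θ c G) : LinearIndependent k (monomialFamily k f θ) := by
  rw [linearIndependent_iff']
  intro s l hl x hx
  let U : k[X][X] := ∑ x ∈ s, monomial (x % deg k f) (monomial (x / deg k f) (l x))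
  have hdeg : U.natDegree < deg k f := by
    refine (natDegree_sum_le_of_forall_le s _ fun x _ ↦ ?_).trans_lt (Nat.sub_one_lt F.deg_pos.ne')
    exact (natDegree_monomial_le _).trans (Nat.le_sub_one_of_lt (Nat.mod_lt x F.deg_pos))
  have hU : U = 0 := F.eq_zero_of_eval₂_eq_zero hdeg <| by
    rw [← hl, eval₂_finsetSum]
    refine Finset.sum_congr rfl fun x _ ↦ ?_
    simp [monomialFamily, aeval_monomial, Algebra.smul_def, mul_assoc]
  have hcoeff : (U.coeff (x % deg k f)).coeff (x / deg k f) = l x := by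
    simp only [U, finsetSum_coeff, coeff_monomial]
    rw [Finset.sum_eq_single_of_mem x hx fun y _ hyx ↦ ?_, if_pos rfl, coeff_monomial, if_pos rfl]
    split_ifs with hmod
    · rw [coeff_monomial, if_neg]
      exact fun hdiv ↦ hyx (by rw [← Nat.div_add_mod y (deg k f), hmod, hdiv, Nat.div_add_mod])
    · exact coeff_zero _
  rw [← hcoeff, hU, coeff_zero, coeff_zero]

end MonomialFamily

section Auxiliary

variable {k B ι : Type*} [Field k] [CommRing B] [Algebra k B] [Fintype ι] {M : ℕ}

/-- The function `∑ i, a i * (s i) ^ Q`, where `s i` is the combination of the first `M` members of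
`monomialFamily k f θ` with coefficients `l (i, ·)`. -/
noncomputable def auxFunction (f θ : B) (a : ι → B) (Q : ℕ) (l : ι × Fin M → k) : B :=
  ∑ i, a i * (∑ x : Fin M, l (i, x) • monomialFamily k f θ x) ^ Q

/-- The polynomial whose value at `θ ^ (Q * Q')` is congruent to the `Q`-th power of
`auxFunction f θ a Q' l` modulo `f ^ (Q * Q') - f`. -/
noncomputable def auxPolynomial (k : Type*) [Field k] [Algebra k B] (f : B) (a : ι → B) (Q M : ℕ) :
    (ι × Fin M → k) →ₗ[k] B[X] :=
  Fintype.linearCombination k fun z ↦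
    monomial (z.2 % deg k f) (a z.1 ^ Q * f ^ ((z.2 : ℕ) / deg k f))

lemma auxPolynomial_apply (f : B) (a : ι → B) (Q : ℕ) (l : ι × Fin M → k) :
    auxPolynomial k f a Q M l = ∑ i, ∑ x : Fin M,
      l (i, x) • monomial (x % deg k f) (a i ^ Q * f ^ ((x : ℕ) / deg k f)) := by
  rw [auxPolynomial, Fintype.linearCombination_apply, Fintype.sum_prod_type]

lemma map_auxFunction_pow [Fintype k] {R : Type*} [CommRing R] [Algebra k R] (π : B →ₐ[k] R)
    {f : B} {j₁ j₂ : ℕ} (hf : π f ^ Fintype.card k ^ (j₁ + j₂) = π f) (θ : B) (a : ι → B)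
    (l : ι × Fin M → k) :
    π (auxFunction f θ a (Fintype.card k ^ j₂) l) ^ Fintype.card k ^ j₁ =
      (auxPolynomial k f a (Fintype.card k ^ j₁) M l).eval₂ π.toRingHom
        (π θ ^ Fintype.card k ^ (j₁ + j₂)) := by
  have hpow (x : R) : (x ^ Fintype.card k ^ j₂) ^ Fintype.card k ^ j₁ =
      (FiniteField.frobeniusAlgHom k R ^ (j₁ + j₂)) x := by
    rw [frobeniusAlgHom_pow_apply, ← pow_mul, ← pow_add, add_comm]
  have hfx (x : ℕ) : (π f ^ x) ^ Fintype.card k ^ (j₁ + j₂) = π f ^ x := by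
    rw [pow_right_comm, hf]
  rw [auxPolynomial_apply, eval₂_finsetSum, auxFunction, map_sum, ← frobeniusAlgHom_pow_apply,
    map_sum]
  refine Finset.sum_congr rfl fun i _ ↦ ?_
  rw [eval₂_finsetSum, map_mul, map_mul, map_pow, frobeniusAlgHom_pow_apply,
    frobeniusAlgHom_pow_apply, hpow, map_sum, map_sum, Finset.mul_sum]
  refine Finset.sum_congr rfl fun x _ ↦ ?_
  rw [smul_monomial, eval₂_monomial, map_smul, map_smul, mul_smul_comm]
  simp [monomialFamily, frobeniusAlgHom_pow_apply, mul_pow, hfx, mul_assoc,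
    pow_right_comm (π θ) _ (Fintype.card k ^ (j₁ + j₂))]

lemma natDegree_auxPolynomial_lt {f : B} (hf : 0 < deg k f) (a : ι → B) (Q : ℕ)
    (l : ι × Fin M → k) : (auxPolynomial k f a Q M l).natDegree < deg k f := by
  refine (natDegree_sum_le_of_forall_le _ _ fun z _ ↦ ?_).trans_lt (Nat.sub_one_lt hf.ne')
  exact (natDegree_smul_le _ _).trans
    ((natDegree_monomial_le _).trans (Nat.le_sub_one_of_lt (Nat.mod_lt _ hf)))

lemma eq_C_mul_of_coeff_eq {W G : B[X]} (hG : G.Monic) (hW : W.natDegree ≤ G.natDegree)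
    (hcoeff : ∀ s < G.natDegree, W.coeff s = W.coeff G.natDegree * G.coeff s) :
    W = C (W.coeff G.natDegree) * G := by
  ext s
  rw [coeff_C_mul]
  obtain hs | rfl | hs := lt_trichotomy s G.natDegree
  · exact hcoeff s hs
  · rw [hG.coeff_natDegree, mul_one]
  · rw [coeff_eq_zero_of_natDegree_lt (hW.trans_lt hs), coeff_eq_zero_of_natDegree_lt hs, mul_zero]

variable [IsDomain B]

lemma IsDegreeDomain.deg_coeff_auxPolynomial_le (h : IsDegreeDomain k B) (f : B) {a : ι → B} {n : ℕ}
    (ha : ∀ i, deg k (a i) ≤ n) (Q : ℕ) (l : ι × Fin M → k) (s : ℕ) :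
    deg k ((auxPolynomial k f a Q M l).coeff s) ≤ n * Q + M := by
  rw [auxPolynomial, Fintype.linearCombination_apply, finsetSum_coeff]
  refine h.deg_sum_le fun z _ ↦ ?_
  rw [coeff_smul, coeff_monomial]
  refine (h.deg_smul_le _ _).trans ?_
  split_ifs
  · refine (h.deg_mul_le _ _).trans ?_
    rw [h.deg_pow, h.deg_pow, mul_comm]
    gcongr
    · exact ha _
    · exact (Nat.div_mul_le_self _ _).trans z.2.2.le
  · exact h.deg_zero.trans_le (Nat.zero_le _)

/-- Siegel's lemma: the divisibility amounts to `G.natDegree` linear conditions, each with values in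
a space of functions of bounded degree. -/
lemma IsDegreeDomain.exists_auxPolynomial_eq_C_mul (h : IsDegreeDomain k B) {f : B} {G : B[X]}
    (hG : G.Monic) (hGf : G.natDegree + 1 = deg k f) {N : ℕ} (hN : ∀ s, deg k (G.coeff s) ≤ N)
    {a : ι → B} {n : ℕ} (ha : ∀ i, deg k (a i) ≤ n) {Q : ℕ}
    (hlt : G.natDegree * (n * Q + M + N + deg k f) < Fintype.card ι * M) :
    ∃ l : ι × Fin M → k, l ≠ 0 ∧ ∃ b : B, auxPolynomial k f a Q M l = C b * G := by
  let W := auxPolynomial k f a Q M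
  let L (s : ℕ) : (ι × Fin M → k) →ₗ[k] B :=
    ((lcoeff B s).restrictScalars k -
      LinearMap.mulRight k (G.coeff s) ∘ₗ (lcoeff B G.natDegree).restrictScalars k) ∘ₗ W
  have hL (s : ℕ) (l) : L s l = (W l).coeff s - (W l).coeff G.natDegree * G.coeff s := rfl
  have hmem (s : ℕ) (l) : L s l ∈ h.degLE (n * Q + M + N) := by
    rw [hL, mem_degLE]
    have hW := h.deg_coeff_auxPolynomial_le f ha Q l
    refine (h.deg_sub_le _ _).trans (max_le ((hW s).trans (Nat.le_add_right _ _)) ?_)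
    exact (h.deg_mul_le _ _).trans (add_le_add (hW _) (hN s))
  have := h.finite_degLE (n * Q + M + N)
  obtain ⟨l, hl, hl0⟩ := Submodule.exists_mem_ne_zero_of_ne_bot <|
    LinearMap.ker_ne_bot_of_finrank_lt
      (f := LinearMap.pi fun s : Fin G.natDegree ↦ (L s).codRestrict _ (hmem s)) <| by
      rw [Module.finrank_pi_fintype, Module.finrank_fintype_fun_eq_card, Fintype.card_prod,
        Fintype.card_fin, Finset.sum_const, Finset.card_univ, Fintype.card_fin, smul_eq_mul]
      refine (Nat.mul_le_mul_left _ (h.finrank_degLE_le ?_ _)).trans_lt hlt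
      lia
  refine ⟨l, hl0, _, eq_C_mul_of_coeff_eq hG ?_ fun s hs ↦ sub_eq_zero.1 ?_⟩
  · exact Nat.le_of_lt_succ ((natDegree_auxPolynomial_lt (by lia) a Q l).trans_eq hGf.symm)
  · exact congrArg Subtype.val (congrFun (LinearMap.mem_ker.1 hl) ⟨s, hs⟩)

lemma IsDegreeDomain.deg_auxFunction_le (h : IsDegreeDomain k B) {f : B} (hf : 0 < deg k f) (θ : B)
    {a : ι → B} {n : ℕ} (ha : ∀ i, deg k (a i) ≤ n) (Q : ℕ) (l : ι × Fin M → k) :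
    deg k (auxFunction f θ a Q l) ≤ n + (M + deg k f * deg k θ) * Q := by
  refine h.deg_sum_le fun i _ ↦ (h.deg_mul_le _ _).trans (Nat.add_le_add (ha i) ?_)
  rw [h.deg_pow, mul_comm]
  refine Nat.mul_le_mul_right _ (h.deg_sum_le fun x _ ↦ (h.deg_smul_le _ _).trans ?_)
  exact (h.deg_monomialFamily_le hf θ x).trans (by gcongr; exact x.2.le)

end Auxiliary

/-- Linear independence of a finite family over the subring of `Q`-th powers, for `Q` a power of the
characteristic. -/
def LinearIndependentOverPow {B ι : Type*} [CommRing B] [Fintype ι] (Q : ℕ) (a : ι → B) : Prop :=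
  ∀ σ : ι → B, ∑ i, a i * σ i ^ Q = 0 → σ = 0

section Stepanov

variable {k B ι : Type*} [Field k] [CommRing B] [Algebra k B] [Fintype ι] {M : ℕ}
  {f θ c : B} {G : B[X]}

lemma IsPrimitiveElement.auxFunction_ne_zero (F : IsPrimitiveElement k f θ c G) {a : ι → B} {Q : ℕ}
    (ha : LinearIndependentOverPow Q a) {l : ι × Fin M → k} (hl : l ≠ 0) :
    auxFunction f θ a Q l ≠ 0 := by
  refine fun h0 ↦ hl (funext fun ⟨i, x⟩ ↦ ?_)
  exact Fintype.linearIndependent_iff.1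
    (F.linearIndependent_monomialFamily.comp _ Fin.val_injective) _ (congrFun (ha _ h0) i) x

lemma IsPrimitiveElement.prime_dvd_of_auxPolynomial_eq [Fintype k]
    (F : IsPrimitiveElement k f θ c G) {a : ι → B} {j₁ j₂ : ℕ} {l : ι × Fin M → k} {b : B}
    (hl : auxPolynomial k f a (Fintype.card k ^ j₁) M l = C b * G) {p : B} (hp : Prime p)
    (hpf : p ∣ f ^ Fintype.card k ^ (j₁ + j₂) - f) :
    p ∣ c ∨ (∀ b : B, p ∣ b ^ Fintype.card k ^ (j₁ + j₂) - b) ∨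
      p ∣ auxFunction f θ a (Fintype.card k ^ j₂) l := by
  have : (Ideal.span {p}).IsPrime := (Ideal.span_singleton_prime hp.ne_zero).2 hp
  let π := Ideal.Quotient.mkₐ k (Ideal.span {p})
  have hπ (b : B) : π b = 0 ↔ p ∣ b := by
    rw [← Ideal.mem_span_singleton]
    exact Ideal.Quotient.eq_zero_iff_mem
  have hfrob (b : B) : π b ^ Fintype.card k ^ (j₁ + j₂) = π b ↔
      p ∣ b ^ Fintype.card k ^ (j₁ + j₂) - b := by
    rw [← hπ, map_sub, map_pow, sub_eq_zero]
  rw [← hfrob] at hpf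
  rw [or_iff_not_imp_left, ← hπ, ← hπ]
  simp only [← hfrob]
  intro hc
  by_cases hθ : π θ ^ Fintype.card k ^ (j₁ + j₂) = π θ
  · exact .inl (F.map_pow_card_pow_eq hpf hθ hc)
  · have h0 := map_auxFunction_pow π hpf θ a l
    rw [hl, eval₂_mul, F.eval₂_pow_card_pow_eq_zero hpf hθ, mul_zero] at h0
    exact .inr (eq_zero_of_pow_eq_zero h0)

lemma IsPrimitiveElement.exists_prime_dvd_auxFunction [Fintype k] [IsDomain B]
    (F : IsPrimitiveElement k f θ c G) (h : IsDegreeDomain k B) {N : ℕ}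
    (hN : ∀ s, deg k (G.coeff s) ≤ N) {j₁ j₂ : ℕ} {a : ι → B} {n : ℕ} (ha : ∀ i, deg k (a i) ≤ n)
    (hind : LinearIndependentOverPow (Fintype.card k ^ j₂) a)
    (hlt : (deg k f - 1) * (n * Fintype.card k ^ j₁ + M + N + deg k f) < Fintype.card ι * M) :
    ∃ t : B, t ≠ 0 ∧ deg k t ≤ n + (M + deg k f * deg k θ) * Fintype.card k ^ j₂ ∧
      ∀ p : B, Prime p → p ∣ f ^ Fintype.card k ^ (j₁ + j₂) - f →
        p ∣ c ∨ (∀ b : B, p ∣ b ^ Fintype.card k ^ (j₁ + j₂) - b) ∨ p ∣ t := by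
  rw [← F.natDegree_add_one, Nat.add_sub_cancel, F.natDegree_add_one] at hlt
  obtain ⟨l, hl0, b, hl⟩ :=
    h.exists_auxPolynomial_eq_C_mul F.monic F.natDegree_add_one hN ha hlt
  exact ⟨_, F.auxFunction_ne_zero hind hl0, h.deg_auxFunction_le F.deg_pos θ ha _ l,
    fun p hp hpf ↦ F.prime_dvd_of_auxPolynomial_eq hl hp hpf⟩

end Stepanov

/-! ### Counting in a factorial monoid with trivial units -/

/-- A degree function on a monoid with zero and trivial units, additive on nonzero elements and
taking each value finitely often, such as the degree of effective divisors. -/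
structure IsArithmeticDegree {M : Type*} [MonoidWithZero M] (d : M → ℕ) : Prop where
  map_mul {a b : M} : a ≠ 0 → b ≠ 0 → d (a * b) = d a + d b
  eq_one {a : M} : a ≠ 0 → d a = 0 → a = 1
  finite_setOf_eq (n : ℕ) : {a : M | a ≠ 0 ∧ d a = n}.Finite

namespace IsArithmeticDegree

section MonoidWithZero

variable {M : Type*} [CommMonoidWithZero M] {d : M → ℕ}

/-- The finite set of nonzero elements of degree `n`. -/
noncomputable def level (h : IsArithmeticDegree d) (n : ℕ) : Finset M :=
  (h.finite_setOf_eq n).toFinset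

lemma mem_level (h : IsArithmeticDegree d) {n : ℕ} {a : M} : a ∈ h.level n ↔ a ≠ 0 ∧ d a = n := by
  simp [level]

lemma degree_le_of_dvd (h : IsArithmeticDegree d) {a b : M} (hb : b ≠ 0) (hab : a ∣ b) :
    d a ≤ d b := by
  obtain ⟨c, rfl⟩ := hab
  rw [h.map_mul (left_ne_zero_of_mul hb) (right_ne_zero_of_mul hb)]
  exact Nat.le_add_right _ _

lemma degree_pos_of_prime (h : IsArithmeticDegree d) {p : M} (hp : Prime p) : 0 < d p :=
  Nat.pos_of_ne_zero fun h0 ↦ hp.ne_one (h.eq_one hp.ne_zero h0)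

lemma finite_setOf_prime_degree_le (h : IsArithmeticDegree d) (n : ℕ) :
    {p : M | Prime p ∧ d p ≤ n}.Finite :=
  ((Set.finite_Iic n).biUnion fun m _ ↦ h.finite_setOf_eq m).subset fun _ hp ↦
    Set.mem_biUnion (Set.mem_Iic.2 hp.2) ⟨hp.1.ne_zero, rfl⟩

/-- The finite set of primes of degree at most `n`. -/
noncomputable def primesLE (h : IsArithmeticDegree d) (n : ℕ) : Finset M :=
  (h.finite_setOf_prime_degree_le n).toFinset

lemma mem_primesLE (h : IsArithmeticDegree d) {n : ℕ} {p : M} :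
    p ∈ h.primesLE n ↔ Prime p ∧ d p ≤ n := by
  simp [primesLE]

/-- The sum of the degrees of the primes whose degree divides `n`; for the divisors of a curve over
`𝔽_q` this is the number of points over `𝔽_{q^n}`. It is zero for `n = 0`. -/
noncomputable def pointCount (h : IsArithmeticDegree d) (n : ℕ) : ℕ :=
  ∑ p ∈ h.primesLE n with d p ∣ n, d p

lemma pointCount_eq_sum_primesLE (h : IsArithmeticDegree d) {m n : ℕ} (hmn : m ≤ n) :
    h.pointCount m = ∑ p ∈ h.primesLE n, if m ≠ 0 ∧ d p ∣ m then d p else 0 := by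
  rw [pointCount, ← Finset.sum_filter]
  refine Finset.sum_congr (Finset.ext fun p ↦ ?_) fun _ _ ↦ rfl
  simp only [Finset.mem_filter, mem_primesLE]
  constructor
  · rintro ⟨⟨hp, hpm⟩, hdvd⟩
    have := h.degree_pos_of_prime hp
    exact ⟨⟨hp, hpm.trans hmn⟩, by lia, hdvd⟩
  · rintro ⟨⟨hp, -⟩, hm, hdvd⟩
    exact ⟨⟨hp, Nat.le_of_dvd (Nat.pos_of_ne_zero hm) hdvd⟩, hdvd⟩

variable [Nontrivial M]

lemma degree_one (h : IsArithmeticDegree d) : d 1 = 0 := by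
  simpa using h.map_mul (one_ne_zero (α := M)) one_ne_zero

variable [NoZeroDivisors M]

lemma degree_pow (h : IsArithmeticDegree d) {a : M} (ha : a ≠ 0) (n : ℕ) :
    d (a ^ n) = n * d a := by
  induction n with
  | zero => simp [h.degree_one]
  | succ n ih => rw [pow_succ, h.map_mul (pow_ne_zero _ ha) ha, ih, Nat.succ_mul]

lemma degree_prod (h : IsArithmeticDegree d) {ι : Type*} {s : Finset ι} {a : ι → M}
    (ha : ∀ i ∈ s, a i ≠ 0) : d (∏ i ∈ s, a i) = ∑ i ∈ s, d (a i) := by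
  classical
  induction s using Finset.induction_on with
  | empty => simp [h.degree_one]
  | insert i s hi ih =>
    have hs : ∀ j ∈ s, a j ≠ 0 := fun j hj ↦ ha j (Finset.mem_insert_of_mem hj)
    rw [Finset.sum_insert hi, Finset.prod_insert hi,
      h.map_mul (ha i (Finset.mem_insert_self i s)) (Finset.prod_ne_zero_iff.2 hs), ih hs]

end MonoidWithZero

section CancelMonoidWithZero

variable {M : Type*} [CommMonoidWithZero M] [IsCancelMulZero M] {d : M → ℕ}

lemma card_filter_dvd_level (h : IsArithmeticDegree d) {c : M} (hc : c ≠ 0)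
    [DecidablePred (c ∣ ·)] (n : ℕ) : {a ∈ h.level (d c + n) | c ∣ a}.card = (h.level n).card := by
  rw [← Finset.card_map (s := h.level n) ⟨(c * ·), mul_right_injective₀ hc⟩]
  congr 1
  ext a
  simp only [Finset.mem_filter, mem_level, Finset.mem_map, Function.Embedding.coeFn_mk]
  constructor
  · rintro ⟨⟨ha, hdeg⟩, b, rfl⟩
    have hb := right_ne_zero_of_mul ha
    exact ⟨b, ⟨hb, by simpa [h.map_mul hc hb] using hdeg⟩, rfl⟩
  · rintro ⟨b, ⟨hb, rfl⟩, rfl⟩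
    exact ⟨⟨mul_ne_zero hc hb, h.map_mul hc hb⟩, dvd_mul_right c b⟩

end CancelMonoidWithZero

section UniqueFactorizationMonoid

variable {M : Type*} [CommMonoidWithZero M] [Nontrivial M] [UniqueFactorizationMonoid M]
  {d : M → ℕ}

lemma card_filter_pow_dvd (h : IsArithmeticDegree d) {p a : M} (hp : Prime p) (ha : a ≠ 0)
    [DecidableRel (α := M) (· ∣ ·)] :
    {z ∈ antidiagonal (d a) | (z.1 ≠ 0 ∧ d p ∣ z.1) ∧ p ^ (z.1 / d p) ∣ a}.card =
      multiplicity p a := by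
  have hdp := h.degree_pos_of_prime hp
  have hpow (e : ℕ) : p ^ e ∣ a ↔ e ≤ multiplicity p a :=
    (FiniteMultiplicity.of_prime_left hp ha).pow_dvd_iff_le_multiplicity
  rw [← Nat.add_sub_cancel (multiplicity p a) 1, ← Nat.card_Icc]
  refine Finset.card_bij' (fun z _ ↦ z.1 / d p) (fun e _ ↦ (e * d p, d a - e * d p))
    (fun z hz ↦ ?_) (fun e he ↦ ?_) (fun z hz ↦ ?_) fun _ _ ↦ Nat.mul_div_cancel _ hdp
  · obtain ⟨-, ⟨hz0, hdvd⟩, hpa⟩ := Finset.mem_filter.1 hz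
    exact Finset.mem_Icc.2
      ⟨Nat.div_pos (Nat.le_of_dvd (Nat.pos_of_ne_zero hz0) hdvd) hdp, (hpow _).1 hpa⟩
  · obtain ⟨he1, he⟩ := Finset.mem_Icc.1 he
    have hle := h.degree_le_of_dvd ha ((hpow e).2 he)
    rw [h.degree_pow hp.ne_zero] at hle
    refine Finset.mem_filter.2 ⟨mem_antidiagonal.2 (Nat.add_sub_cancel' hle),
      ⟨by positivity, dvd_mul_left _ _⟩, ?_⟩
    rwa [Nat.mul_div_cancel _ hdp, hpow]
  · obtain ⟨hz, ⟨-, hdvd⟩, -⟩ := Finset.mem_filter.1 hz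
    have hz := mem_antidiagonal.1 hz
    ext <;> dsimp only <;> rw [Nat.div_mul_cancel hdvd]
    lia

lemma sum_multiplicity_level (h : IsArithmeticDegree d) {p : M} (hp : Prime p) (n : ℕ) :
    ∑ a ∈ h.level n, multiplicity p a =
      ∑ z ∈ antidiagonal n, if z.1 ≠ 0 ∧ d p ∣ z.1 then (h.level z.2).card else 0 := by
  classical
  calc ∑ a ∈ h.level n, multiplicity p a
      = ∑ a ∈ h.level n, ∑ z ∈ antidiagonal n,
          if (z.1 ≠ 0 ∧ d p ∣ z.1) ∧ p ^ (z.1 / d p) ∣ a then 1 else 0 := by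
        refine Finset.sum_congr rfl fun a ha ↦ ?_
        obtain ⟨ha0, rfl⟩ := h.mem_level.1 ha
        rw [← h.card_filter_pow_dvd hp ha0, Finset.card_filter]
    _ = ∑ z ∈ antidiagonal n, if z.1 ≠ 0 ∧ d p ∣ z.1 then (h.level z.2).card else 0 := by
        rw [Finset.sum_comm]
        refine Finset.sum_congr rfl fun z hz ↦ ?_
        split_ifs with hdvd
        · have hdeg : d (p ^ (z.1 / d p)) = z.1 := by
            rw [h.degree_pow hp.ne_zero, Nat.div_mul_cancel hdvd.2]
          rw [← h.card_filter_dvd_level (pow_ne_zero (z.1 / d p) hp.ne_zero), hdeg,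
            mem_antidiagonal.1 hz, Finset.card_filter]
          simp only [hdvd, true_and, ne_eq, not_false_eq_true]
        · simp only [hdvd, false_and, if_false, Finset.sum_const_zero]

variable [Subsingleton Mˣ]

lemma exists_primeFactors (h : IsArithmeticDegree d) {a : M} (ha : a ≠ 0) :
    ∃ s : Finset M, (∀ p, p ∈ s ↔ Prime p ∧ p ∣ a) ∧ ∑ p ∈ s, d p ≤ d a := by
  classical
  refine ⟨{p ∈ h.primesLE (d a) | p ∣ a}, fun p ↦ ?_, ?_⟩
  · rw [Finset.mem_filter, mem_primesLE]
    exact ⟨fun hp ↦ ⟨hp.1.1, hp.2⟩, fun hp ↦ ⟨⟨hp.1, h.degree_le_of_dvd ha hp.2⟩, hp.2⟩⟩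
  · rw [← h.degree_prod (a := fun p ↦ p) fun p hp ↦
      (h.mem_primesLE.1 (Finset.mem_filter.1 hp).1).1.ne_zero]
    exact h.degree_le_of_dvd ha <| Finset.prod_primes_dvd a
      (fun p hp ↦ (h.mem_primesLE.1 (Finset.mem_filter.1 hp).1).1)
      fun p hp ↦ (Finset.mem_filter.1 hp).2

lemma sum_multiplicity_mul_degree (h : IsArithmeticDegree d) {a : M} (ha : a ≠ 0) {n : ℕ}
    (hn : d a ≤ n) : ∑ p ∈ h.primesLE n, multiplicity p a * d p = d a := by
  classical
  induction a using UniqueFactorizationMonoid.induction_on_prime with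
  | h₁ => exact absurd rfl ha
  | h₂ u hu =>
    rw [isUnit_iff_eq_one.1 hu, h.degree_one]
    exact Finset.sum_eq_zero fun p hp ↦ by
      rw [multiplicity_of_one_right (h.mem_primesLE.1 hp).1.not_isUnit, zero_mul]
  | h₃ a r ha0 hr ih =>
    rw [h.map_mul hr.ne_zero ha0] at hn
    have hmult : ∀ p ∈ h.primesLE n,
        multiplicity p (r * a) * d p = (if r = p then d p else 0) + multiplicity p a * d p := by
      intro p hp
      have hp := (h.mem_primesLE.1 hp).1
      rw [multiplicity_mul hp (FiniteMultiplicity.of_prime_left hp ha), add_mul]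
      congr 1
      split_ifs with hrp
      · rw [hrp, multiplicity_self, one_mul]
      · rw [multiplicity_eq_zero.2 fun hpr ↦ hrp
          (associated_iff_eq.1 (hp.associated_of_dvd hr hpr)).symm, zero_mul]
    rw [Finset.sum_congr rfl hmult, Finset.sum_add_distrib, ih ha0 (by lia),
      Finset.sum_ite_eq, if_pos (h.mem_primesLE.2 ⟨hr, by lia⟩), h.map_mul hr.ne_zero ha0]

lemma mul_card_level (h : IsArithmeticDegree d) (n : ℕ) :
    n * (h.level n).card = ∑ z ∈ antidiagonal n, h.pointCount z.1 * (h.level z.2).card :=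
  calc n * (h.level n).card
      = ∑ a ∈ h.level n, ∑ p ∈ h.primesLE n, multiplicity p a * d p := by
        rw [mul_comm, ← smul_eq_mul, ← Finset.sum_const]
        refine Finset.sum_congr rfl fun a ha ↦ ?_
        obtain ⟨ha, hn⟩ := h.mem_level.1 ha
        rw [h.sum_multiplicity_mul_degree ha hn.le, hn]
    _ = ∑ p ∈ h.primesLE n, ∑ z ∈ antidiagonal n,
          (if z.1 ≠ 0 ∧ d p ∣ z.1 then d p else 0) * (h.level z.2).card := by
        rw [Finset.sum_comm]
        refine Finset.sum_congr rfl fun p hp ↦ ?_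
        rw [← Finset.sum_mul, h.sum_multiplicity_level (h.mem_primesLE.1 hp).1, Finset.sum_mul]
        exact Finset.sum_congr rfl fun z _ ↦ by split_ifs <;> simp [mul_comm]
    _ = ∑ z ∈ antidiagonal n, h.pointCount z.1 * (h.level z.2).card := by
        rw [Finset.sum_comm]
        refine Finset.sum_congr rfl fun z hz ↦ ?_
        rw [h.pointCount_eq_sum_primesLE (Finset.HasAntidiagonal.antidiagonal.fst_le hz),
          Finset.sum_mul]

end UniqueFactorizationMonoid

end IsArithmeticDegree

/-! ### Bounding the point count from below -/

/-- The degree on the monoid of elements of `B` up to units. -/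
noncomputable def associatesDeg (k : Type*) {B : Type*} [Field k] [CommRing B] [IsDomain B]
    [Algebra k B] : Associates B → ℕ :=
  Quotient.lift (deg k) fun a b hab ↦ by
    rw [deg, deg, Ideal.span_singleton_eq_span_singleton.2 hab]

section Ramification

variable {k B : Type*} [Field k] [CommRing B] [Algebra k B]

lemma pow_dvd_derivation_apply {p g : B} {e : ℕ} (δ : Derivation k B B) (hpg : p ^ (e + 1) ∣ g) :
    p ^ e ∣ δ g := by
  obtain ⟨u, rfl⟩ := hpg
  rw [δ.leibniz, δ.leibniz_pow, Nat.add_sub_cancel]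
  refine dvd_add ((pow_dvd_pow p e.le_succ).mul_right _) ?_
  simp only [smul_eq_mul, nsmul_eq_mul]
  exact ((dvd_mul_right _ _).mul_left _).mul_left _

lemma mk_dvd_mk_derivation_mul_prod [UniqueFactorizationMonoid B] (δ : Derivation k B B) {g : B}
    (hg : g ≠ 0) {s : Finset (Associates B)} (hs : ∀ P, Prime P → P ∣ Associates.mk g → P ∈ s) :
    Associates.mk g ∣ Associates.mk (δ g) * ∏ P ∈ s, P := by
  rw [UniqueFactorizationMonoid.dvd_iff_emultiplicity_le (Associates.mk_ne_zero.2 hg)]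
  refine fun P hP ↦ emultiplicity_le_emultiplicity_iff.2 fun e he ↦ ?_
  obtain _ | e := e
  · simp
  rw [pow_succ]
  have hPs : P ∈ s := hs P hP ((dvd_pow_self P e.succ_ne_zero).trans he)
  refine mul_dvd_mul ?_ (Finset.dvd_prod_of_mem _ hPs)
  obtain ⟨p, rfl⟩ := Associates.mk_surjective P
  rw [← Associates.mk_pow, Associates.mk_dvd_mk] at he ⊢
  exact pow_dvd_derivation_apply δ he

lemma IsDegreeDomain.deg_dvd_of_forall_prime_dvd [Fintype k] (h : IsDegreeDomain k B) {p : B}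
    (hp : Prime p) {j : ℕ} (hj : ∀ b : B, p ∣ b ^ Fintype.card k ^ j - b) : deg k p ∣ j := by
  have : (Ideal.span {p}).IsPrime := (Ideal.span_singleton_prime hp.ne_zero).2 hp
  have := h.finite_quotient hp.ne_zero
  have : Finite (B ⧸ Ideal.span {p}) := Module.finite_of_finite k
  let _ : Field (B ⧸ Ideal.span {p}) := (Finite.isField_of_domain _).toField
  rw [deg, ← FiniteField.orderOf_frobeniusAlgHom k (B ⧸ Ideal.span {p})]
  refine orderOf_dvd_of_pow_eq_one (AlgHom.ext fun x ↦ ?_)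
  obtain ⟨b, rfl⟩ := Ideal.Quotient.mk_surjective x
  rw [frobeniusAlgHom_pow_apply, AlgHom.one_apply, ← map_pow, Ideal.Quotient.eq,
    Ideal.mem_span_singleton]
  exact hj b

variable [IsDomain B]

lemma associatesDeg_mk (b : B) : associatesDeg k (Associates.mk b) = deg k b := rfl

namespace IsDegreeDomain

lemma isArithmeticDegree [Finite k] (h : IsDegreeDomain k B) :
    IsArithmeticDegree (associatesDeg k (B := B)) where
  map_mul {a b} ha hb := by
    obtain ⟨a, rfl⟩ := Associates.mk_surjective a
    obtain ⟨b, rfl⟩ := Associates.mk_surjective b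
    exact h.deg_mul (Associates.mk_ne_zero.1 ha) (Associates.mk_ne_zero.1 hb)
  eq_one {a} ha h0 := by
    obtain ⟨a, rfl⟩ := Associates.mk_surjective a
    exact Associates.mk_eq_one.2 ((h.isUnit_iff (Associates.mk_ne_zero.1 ha)).2 h0)
  finite_setOf_eq n := by
    have := h.finite_degLE n
    have : Finite (h.degLE n) := Module.finite_of_finite k
    refine ((h.degLE n : Set B).toFinite.image Associates.mk).subset ?_
    rintro a ⟨-, hn⟩
    obtain ⟨a, rfl⟩ := Associates.mk_surjective a
    exact ⟨a, hn.le, rfl⟩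

lemma deg_le_deg_derivation_add_sum [Finite k] [UniqueFactorizationMonoid B]
    (h : IsDegreeDomain k B) {δ : Derivation k B B} {g : B} (hδg : δ g ≠ 0)
    {s : Finset (Associates B)} (hs0 : ∀ P ∈ s, P ≠ 0)
    (hs : ∀ P, Prime P → P ∣ Associates.mk g → P ∈ s) :
    deg k g ≤ deg k (δ g) + ∑ P ∈ s, associatesDeg k P := by
  have hg : g ≠ 0 := by
    rintro rfl
    exact hδg δ.map_zero
  have hδg := Associates.mk_ne_zero.2 hδg
  have hprod := Finset.prod_ne_zero_iff.2 hs0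
  have hd := h.isArithmeticDegree
  rw [← associatesDeg_mk, ← associatesDeg_mk, ← hd.degree_prod hs0, ← hd.map_mul hδg hprod]
  exact hd.degree_le_of_dvd (mul_ne_zero hδg hprod) (mk_dvd_mk_derivation_mul_prod δ hg hs)

lemma deg_pow_card_pow_sub_self [Fintype k] (h : IsDegreeDomain k B) {f : B} (hf : 0 < deg k f)
    {j : ℕ} (hj : j ≠ 0) :
    deg k (f ^ Fintype.card k ^ j - f) = Fintype.card k ^ j * deg k f := by
  rw [sub_eq_add_neg, h.deg_add_eq_left, h.deg_pow]
  rw [h.deg_neg, h.deg_pow]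
  exact lt_mul_of_one_lt_left hf (Nat.one_lt_pow hj Fintype.one_lt_card)

lemma card_pow_mul_deg_le [Fintype k] [UniqueFactorizationMonoid B] (h : IsDegreeDomain k B)
    {f c t : B} {δ : Derivation k B B} (hf : 0 < deg k f) (hδ : δ f ≠ 0) (hc : c ≠ 0) (ht : t ≠ 0)
    {j : ℕ} (hj : j ≠ 0) (hdvd : ∀ p : B, Prime p → p ∣ f ^ Fintype.card k ^ j - f →
      p ∣ c ∨ (∀ b : B, p ∣ b ^ Fintype.card k ^ j - b) ∨ p ∣ t) :
    Fintype.card k ^ j * deg k f ≤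
      h.isArithmeticDegree.pointCount j + deg k (δ f) + deg k c + deg k t := by
  classical
  have hd := h.isArithmeticDegree
  have hδg : δ (f ^ Fintype.card k ^ j - f) = -δ f := by
    have hcard : ((Fintype.card k ^ j : ℕ) : B) = 0 := by
      rw [← map_natCast (algebraMap k B), Nat.cast_pow, FiniteField.cast_card_eq_zero,
        zero_pow hj, map_zero]
    rw [map_sub, δ.leibniz_pow, nsmul_eq_mul, hcard, zero_mul, zero_sub]
  obtain ⟨C, hC, hCdeg⟩ := hd.exists_primeFactors (Associates.mk_ne_zero.2 hc)
  obtain ⟨T, hT, hTdeg⟩ := hd.exists_primeFactors (Associates.mk_ne_zero.2 ht)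
  set R := {P ∈ hd.primesLE j | associatesDeg k P ∣ j}
  have hsum := h.deg_le_deg_derivation_add_sum (δ := δ) (g := f ^ Fintype.card k ^ j - f)
    (s := C ∪ R ∪ T) (by rwa [hδg, neg_ne_zero]) (fun P hP ↦ by
      simp only [R, Finset.mem_union, hC, hT, Finset.mem_filter, hd.mem_primesLE] at hP
      exact Prime.ne_zero (by tauto)) fun P hP hPg ↦ by
      obtain ⟨p, rfl⟩ := Associates.mk_surjective P
      simp only [R, Finset.mem_union, hC, hT, Finset.mem_filter, hd.mem_primesLE, hP, true_and,
        Associates.mk_dvd_mk, associatesDeg_mk] at hPg ⊢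
      have hp := Associates.prime_mk.1 hP
      obtain hpc | hpj | hpt := hdvd p hp hPg
      · exact .inl (.inl hpc)
      · have hdeg := h.deg_dvd_of_forall_prime_dvd hp hpj
        exact .inl (.inr ⟨Nat.le_of_dvd (Nat.pos_of_ne_zero hj) hdeg, hdeg⟩)
      · exact .inr hpt
  have hunion (s t : Finset (Associates B)) :
      ∑ P ∈ s ∪ t, associatesDeg k P ≤ ∑ P ∈ s, associatesDeg k P + ∑ P ∈ t, associatesDeg k P :=
    (Nat.le_add_right _ _).trans_eq Finset.sum_union_inter
  have hCRT := hunion (C ∪ R) T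
  have hCR := hunion C R
  rw [h.deg_pow_card_pow_sub_self hf hj, hδg, h.deg_neg] at hsum
  rw [associatesDeg_mk] at hCdeg hTdeg
  change _ ≤ ∑ P ∈ R, associatesDeg k P + _ + _ + _
  lia

end IsDegreeDomain

end Ramification

/-! ### Independence over powers -/

namespace LinearIndependentOverPow

variable {k B ι : Type*} [Field k] [CommRing B] [Algebra k B] [Fintype ι]

lemma mul [IsReduced B] {P Q : ℕ} {a : ι → B} (ha : LinearIndependentOverPow Q a) (hP : P ≠ 0) :
    LinearIndependentOverPow (P * Q) a := by
  intro σ hσ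
  have hpow := ha (fun i ↦ σ i ^ P) (by simpa only [← pow_mul] using hσ)
  exact funext fun i ↦ (pow_eq_zero_iff hP).1 (congrFun hpow i)

lemma mul_eq_mul_of_add_sum_eq_zero [Fintype k] {i : ℕ} {a : ι → B}
    (ha : LinearIndependentOverPow (Fintype.card k ^ i) a) {b x y : B} {σ τ : ι → B}
    (hσ : b * x ^ Fintype.card k ^ i + ∑ s, a s * σ s ^ Fintype.card k ^ i = 0)
    (hτ : b * y ^ Fintype.card k ^ i + ∑ s, a s * τ s ^ Fintype.card k ^ i = 0) (s : ι) :
    σ s * y = τ s * x := by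
  refine sub_eq_zero.1 (congrFun (ha (fun s ↦ σ s * y - τ s * x) ?_) s)
  simp only [← frobeniusAlgHom_pow_apply] at hσ hτ ⊢
  set φ := FiniteField.frobeniusAlgHom k B ^ i
  calc ∑ s, a s * φ (σ s * y - τ s * x)
      = (∑ s, a s * φ (σ s)) * φ y - (∑ s, a s * φ (τ s)) * φ x := by
        simp only [map_sub, map_mul, Finset.sum_mul, ← Finset.sum_sub_distrib]
        exact Finset.sum_congr rfl fun s _ ↦ by ring
    _ = 0 := by linear_combination φ y * hσ - φ x * hτ

end LinearIndependentOverPow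

namespace IsDegreeDomain

variable {k B : Type*} [Field k] [CommRing B] [IsDomain B] [Algebra k B]

-- Comparing the prime factors of both sides: `u / v` is a `Q`-th power, of degree less than `Q`.
lemma exists_eq_smul_of_mul_pow_eq [UniqueFactorizationMonoid B] (h : IsDegreeDomain k B)
    {u v y z : B} {Q : ℕ} (hu : deg k u < Q) (hv : deg k v < Q) (hv0 : v ≠ 0) (hz : z ≠ 0)
    (heq : u * z ^ Q = y ^ Q * v) : ∃ c : k, u = c • v := by
  obtain rfl | hu0 := eq_or_ne u 0
  · exact ⟨0, by rw [zero_smul]⟩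
  obtain ⟨z', y', e, hrel, rfl, rfl⟩ := UniqueFactorizationMonoid.exists_reduced_factors z hz y
  have key : u * z' ^ Q = y' ^ Q * v := by
    rw [mul_pow, mul_pow] at heq
    exact mul_left_cancel₀ (pow_ne_zero Q (left_ne_zero_of_mul hz)) (by linear_combination heq)
  have deg_eq_zero {w b : B} (hb : b ≠ 0) (hlt : deg k b < Q) (hw : w ^ Q ∣ b) : deg k w = 0 := by
    have := (h.deg_le_of_dvd hb hw).trans_lt hlt
    rw [h.deg_pow] at this
    by_contra h0
    exact absurd this (not_lt.2 (Nat.le_mul_of_pos_right Q (Nat.pos_of_ne_zero h0)))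
  have hzv : z' ^ Q ∣ v := hrel.pow.dvd_of_dvd_mul_left ⟨u, by rw [← key, mul_comm]⟩
  have hyu : y' ^ Q ∣ u := hrel.symm.pow.dvd_of_dvd_mul_right ⟨v, key⟩
  obtain ⟨α, rfl⟩ := h.deg_eq_zero_iff.1 (deg_eq_zero hv0 hv hzv)
  obtain ⟨β, rfl⟩ := h.deg_eq_zero_iff.1 (deg_eq_zero hu0 hu hyu)
  have hα : α ^ Q ≠ 0 := pow_ne_zero Q fun h0 ↦ right_ne_zero_of_mul hz (by rw [h0, map_zero])
  refine ⟨(α ^ Q)⁻¹ * β ^ Q, ?_⟩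
  rw [mul_smul, eq_inv_smul_iff₀ hα]
  simpa only [Algebra.smul_def, map_pow, mul_comm u] using key

variable [Fintype k] [UniqueFactorizationMonoid B]

lemma exists_linearIndependentOverPow_of_tail (h : IsDegreeDomain k B) {r i : ℕ}
    {a : Fin (r + 1) → B} (ha : LinearIndependent k a)
    (htail : LinearIndependentOverPow (Fintype.card k ^ i) (Fin.tail a)) :
    ∃ j, LinearIndependentOverPow (Fintype.card k ^ j) a := by
  by_contra! hcon
  have hq (j : ℕ) : Fintype.card k ^ j ≠ 0 := pow_ne_zero j Fintype.card_ne_zero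
  have hrel (m : ℕ) : ∃ (x : B) (σ : Fin r → B), x ≠ 0 ∧
      a 0 * x ^ Fintype.card k ^ (m + i) +
        ∑ s, Fin.tail a s * σ s ^ Fintype.card k ^ (m + i) = 0 := by
    obtain ⟨σ, hσ, hσ0⟩ : ∃ σ : Fin (r + 1) → B,
        ∑ s, a s * σ s ^ Fintype.card k ^ (m + i) = 0 ∧ σ ≠ 0 := by
      simpa [LinearIndependentOverPow] using hcon (m + i)
    rw [Fin.sum_univ_succ] at hσ
    refine ⟨σ 0, Fin.tail σ, fun h0 ↦ hσ0 ?_, hσ⟩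
    rw [h0, zero_pow (hq _), mul_zero, zero_add, pow_add] at hσ
    rw [← Fin.cons_self_tail σ, h0, htail.mul (hq m) (Fin.tail σ) hσ]
    exact Matrix.cons_zero_zero
  obtain ⟨x, σ, hx, hσ⟩ := hrel 0
  rw [zero_add] at hσ
  have hratio (s : Fin r) : ∃ c : k, σ s = c • x := by
    obtain ⟨m, hm⟩ : ∃ m, deg k (σ s) + deg k x < Fintype.card k ^ m :=
      ⟨_, Nat.lt_pow_self Fintype.one_lt_card⟩
    obtain ⟨y, τ, hy, hτ⟩ := hrel m
    simp only [pow_add, pow_mul] at hτ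
    exact h.exists_eq_smul_of_mul_pow_eq (by lia) (by lia) hx hy
      (htail.mul_eq_mul_of_add_sum_eq_zero (τ := fun s ↦ τ s ^ Fintype.card k ^ m) hσ hτ s)
  choose c hc using hratio
  have hcomb : (a 0 + ∑ s, c s • Fin.tail a s) * x ^ Fintype.card k ^ i = 0 := by
    rw [← hσ, add_mul, Finset.sum_mul]
    congr 1
    refine Finset.sum_congr rfl fun s _ ↦ ?_
    rw [hc, ← frobeniusAlgHom_pow_apply, ← frobeniusAlgHom_pow_apply, map_smul, smul_mul_assoc,
      mul_smul_comm]
  have hzero := Fintype.linearIndependent_iff.1 ha (Fin.cons 1 c) (by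
    rw [Fin.sum_univ_succ]
    simpa [Fin.tail] using (mul_eq_zero.1 hcomb).resolve_right (pow_ne_zero _ hx)) 0
  exact one_ne_zero hzero

lemma exists_forall_linearIndependentOverPow (h : IsDegreeDomain k B) {r : ℕ} {a : Fin r → B}
    (ha : LinearIndependent k a) :
    ∃ i, ∀ j, i ≤ j → LinearIndependentOverPow (Fintype.card k ^ j) a := by
  suffices hex : ∃ i, LinearIndependentOverPow (Fintype.card k ^ i) a by
    obtain ⟨i, hi⟩ := hex
    refine ⟨i, fun j hij ↦ ?_⟩
    obtain ⟨m, rfl⟩ := Nat.exists_eq_add_of_le' hij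
    rw [pow_add]
    exact hi.mul (pow_ne_zero m Fintype.card_ne_zero)
  induction r with
  | zero => exact ⟨0, fun _ _ ↦ Subsingleton.elim _ _⟩
  | succ r ih =>
    obtain ⟨i, hi⟩ := ih (a := Fin.tail a) (ha.comp _ (Fin.succ_injective r))
    exact h.exists_linearIndependentOverPow_of_tail ha hi

end IsDegreeDomain

/-! ### The point count -/

namespace IsDegreeDomain

variable {k B : Type*} [Field k] [CommRing B] [Algebra k B]

/-- The space of elements of degree less than `n`; zero is adjoined explicitly, since `deg k 0 = 0`
and hence `deg k b < 0` fails for `b = 0`. -/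
def degLT (h : IsDegreeDomain k B) (n : ℕ) : Submodule k B where
  carrier := {b | b = 0 ∨ deg k b < n}
  zero_mem' := .inl rfl
  add_mem' {a b} ha hb := by
    obtain rfl | ha := ha
    · rwa [zero_add]
    obtain rfl | hb := hb
    · rw [add_zero]
      exact .inr ha
    exact .inr ((h.deg_add_le a b).trans_lt (max_lt ha hb))
  smul_mem' c b hb := by
    obtain rfl | hb := hb
    · exact .inl (smul_zero c)
    · exact .inr ((h.deg_smul_le c b).trans_lt hb)

lemma mem_degLT {h : IsDegreeDomain k B} {n : ℕ} {b : B} :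
    b ∈ h.degLT n ↔ b = 0 ∨ deg k b < n := Iff.rfl

lemma eq_zero_of_sum_eq_zero (h : IsDegreeDomain k B) {ι : Type*} {s : Finset ι} {g : ι → B}
    (hdeg : ∀ i ∈ s, ∀ j ∈ s, g i ≠ 0 → g j ≠ 0 → deg k (g i) = deg k (g j) → i = j)
    (hsum : ∑ i ∈ s, g i = 0) : ∀ i ∈ s, g i = 0 := by
  classical
  by_contra! hne
  obtain ⟨i, hi, hmax⟩ := Finset.exists_max_image {i ∈ s | g i ≠ 0} (fun i ↦ deg k (g i))
    (by simpa [Finset.filter_nonempty_iff] using hne)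
  obtain ⟨his, hgi⟩ := Finset.mem_filter.1 hi
  have hrest : ∑ j ∈ s.erase i, g j ∈ h.degLT (deg k (g i)) := by
    refine Submodule.sum_mem _ fun j hj ↦ ?_
    obtain ⟨hji, hjs⟩ := Finset.mem_erase.1 hj
    refine or_iff_not_imp_left.2 fun hgj ↦ (hmax j (Finset.mem_filter.2 ⟨hjs, hgj⟩)).lt_of_ne ?_
    exact fun heq ↦ hji (hdeg j hjs i his hgj hgi heq)
  rw [← Finset.add_sum_erase s g his, add_eq_zero_iff_eq_neg'] at hsum
  rw [hsum, neg_mem_iff, mem_degLT] at hrest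
  exact hrest.elim hgi (lt_irrefl _)

variable [IsDomain B]

lemma linearIndependentOverPow_of_deg_injective (h : IsDegreeDomain k B) {ι : Type*} [Fintype ι]
    {Q : ℕ} {a : ι → B} (ha : ∀ i, a i ≠ 0) (hQ : ∀ i, deg k (a i) < Q)
    (hinj : Function.Injective fun i ↦ deg k (a i)) : LinearIndependentOverPow Q a := by
  refine fun σ hσ ↦ funext fun i ↦ ?_
  have hdeg {i : ι} (hi : a i * σ i ^ Q ≠ 0) : deg k (a i * σ i ^ Q) % Q = deg k (a i) := by
    rw [h.deg_mul (ha i) (right_ne_zero_of_mul hi), h.deg_pow, Nat.add_mul_mod_self_left,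
      Nat.mod_eq_of_lt (hQ i)]
  have hzero := h.eq_zero_of_sum_eq_zero (fun i _ j _ hi hj hij ↦
    hinj (show deg k (a i) = deg k (a j) by rw [← hdeg hi, hij, hdeg hj])) hσ i (Finset.mem_univ i)
  exact eq_zero_of_pow_eq_zero ((mul_eq_zero.1 hzero).resolve_left (ha i))

/-- The monoid of degrees of nonzero elements: the semigroup of pole orders at infinity. -/
def degreeMonoid (h : IsDegreeDomain k B) : AddSubmonoid ℕ where
  carrier := {n | ∃ b : B, b ≠ 0 ∧ deg k b = n}
  zero_mem' := ⟨1, one_ne_zero, deg_of_isUnit isUnit_one⟩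
  add_mem' := by
    rintro _ _ ⟨a, ha, rfl⟩ ⟨b, hb, rfl⟩
    exact ⟨a * b, mul_ne_zero ha hb, h.deg_mul ha hb⟩

lemma mem_degreeMonoid {h : IsDegreeDomain k B} {n : ℕ} :
    n ∈ h.degreeMonoid ↔ ∃ b : B, b ≠ 0 ∧ deg k b = n := Iff.rfl

variable [UniqueFactorizationMonoid B]

-- Apart from `d`, all constants of Stepanov's method are absorbed into `K`.
lemma exists_card_pow_mul_le_pointCount_add [Fintype k] (h : IsDegreeDomain k B) :
    ∃ (d K : ℕ) (w : ℕ → B), LinearIndependent k w ∧ (∀ x, deg k (w x) ≤ x + K) ∧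
      ∀ (r j₁ j₂ n M : ℕ) (a : Fin r → B), j₁ + j₂ ≠ 0 → (∀ i, deg k (a i) ≤ n) →
        LinearIndependentOverPow (Fintype.card k ^ j₂) a →
        d * (n * Fintype.card k ^ j₁ + M + K) < r * M →
        Fintype.card k ^ (j₁ + j₂) * (d + 1) ≤ h.isArithmeticDegree.pointCount (j₁ + j₂) +
          n + (M + K) * Fintype.card k ^ j₂ + K := by
  obtain ⟨f, θ, c, G, δ, F, hδ⟩ := exists_isPrimitiveElement_and_derivation h
  set N := ∑ s ∈ G.support, deg k (G.coeff s)
  have hG (s : ℕ) : deg k (G.coeff s) ≤ N := by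
    by_cases hs : s ∈ G.support
    · exact Finset.single_le_sum (fun s _ ↦ Nat.zero_le (deg k (G.coeff s))) hs
    · rw [notMem_support_iff.1 hs, h.deg_zero]
      exact Nat.zero_le N
  set K := N + deg k f + deg k f * deg k θ + deg k (δ f) + deg k c
  refine ⟨deg k f - 1, K, monomialFamily k f θ, F.linearIndependent_monomialFamily, fun x ↦
    (h.deg_monomialFamily_le F.deg_pos θ x).trans (by lia), fun r j₁ j₂ n M a hj ha hind hlt ↦ ?_⟩
  obtain ⟨t, ht0, htdeg, htdvd⟩ :=
      F.exists_prime_dvd_auxFunction h hG (M := M) (j₁ := j₁) ha hind <| by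
    rw [Fintype.card_fin]
    refine (Nat.mul_le_mul_left _ ?_).trans_lt hlt
    lia
  have hcount := h.card_pow_mul_deg_le F.deg_pos hδ F.ne_zero ht0 hj htdvd
  have : (M + deg k f * deg k θ) * Fintype.card k ^ j₂ ≤ (M + K) * Fintype.card k ^ j₂ :=
    Nat.mul_le_mul_right _ (by lia)
  rw [Nat.sub_add_cancel F.deg_pos]
  lia

lemma exists_forall_pointCount_pos [Finite k] (h : IsDegreeDomain k B) :
    ∃ j₀, ∀ j, j₀ ≤ j → 0 < h.isArithmeticDegree.pointCount j := by
  have := Fintype.ofFinite k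
  obtain ⟨d, K, w, hw, hwdeg, hbound⟩ := h.exists_card_pow_mul_le_pointCount_add
  obtain ⟨R₁, hR₁⟩ : ∃ R₁, R₁ = Fintype.card k ^ (K + 2) := ⟨_, rfl⟩
  have hKR₁ : K + 2 < R₁ := hR₁ ▸ Nat.lt_pow_self Fintype.one_lt_card
  set r := d * ((K + d) * R₁ + 1 + K) + 1 with hr
  obtain ⟨i₀, hi₀⟩ :=
    h.exists_forall_linearIndependentOverPow (hw.comp (Fin.val : Fin r → ℕ) Fin.val_injective)
  refine ⟨K + 2 + (i₀ + r + 2 * K), fun j hj ↦ Nat.pos_of_ne_zero fun h0 ↦ ?_⟩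
  obtain ⟨j₂, rfl⟩ := Nat.exists_eq_add_of_le ((Nat.le_add_right _ _).trans hj)
  have hR₂ : j₂ < Fintype.card k ^ j₂ := Nat.lt_pow_self Fintype.one_lt_card
  have hle := hbound r (K + 2) j₂ (r + K) (d * R₁ + 1) _ (by lia)
    (fun i ↦ (hwdeg i).trans (by lia)) (hi₀ j₂ (by lia)) (by rw [← hR₁, hr]; lia)
  rw [h0, pow_add, ← hR₁] at hle
  have : (K + 2) * Fintype.card k ^ j₂ ≤ R₁ * Fintype.card k ^ j₂ := by gcongr
  nlinarith

lemma exists_forall_mem_degreeMonoid [Finite k] (h : IsDegreeDomain k B) :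
    ∃ c, ∀ n, c ≤ n → n ∈ h.degreeMonoid := by
  obtain ⟨j₀, hj₀⟩ := h.exists_forall_pointCount_pos
  obtain ⟨c, hc⟩ := Nat.exists_mem_closure_of_ge (h.degreeMonoid : Set ℕ)
  have hdvd (j : ℕ) (hj : j₀ ≤ j) : Nat.setGcd (h.degreeMonoid : Set ℕ) ∣ j := by
    obtain ⟨P, hP, -⟩ := Finset.exists_ne_zero_of_sum_ne_zero (hj₀ j hj).ne'
    rw [Finset.mem_filter, IsArithmeticDegree.mem_primesLE] at hP
    obtain ⟨p, rfl⟩ := Associates.mk_surjective P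
    exact (Nat.setGcd_dvd_of_mem (s := h.degreeMonoid)
      ⟨p, (Associates.prime_mk.1 hP.1.1).ne_zero, rfl⟩).trans hP.2
  have hone : Nat.setGcd (h.degreeMonoid : Set ℕ) = 1 := Nat.dvd_one.1 <|
    (Nat.dvd_add_right (hdvd j₀ le_rfl)).1 (hdvd (j₀ + 1) (Nat.le_succ j₀))
  refine ⟨c, fun n hn ↦ ?_⟩
  rw [← AddSubmonoid.closure_eq h.degreeMonoid]
  exact hc n hn (hone ▸ one_dvd n)

-- The bound of Hasse and Weil, up to the value of the constant.
lemma exists_card_pow_le_pointCount_add [Fintype k] (h : IsDegreeDomain k B) :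
    ∃ C : ℕ, ∀ j, j ≠ 0 → Fintype.card k ^ j ≤
      h.isArithmeticDegree.pointCount j + C * Fintype.card k ^ ((j + 1) / 2) := by
  obtain ⟨d, K, -, -, -, hbound⟩ := h.exists_card_pow_mul_le_pointCount_add
  obtain ⟨c, hc⟩ := h.exists_forall_mem_degreeMonoid
  obtain ⟨M', hM'⟩ : ∃ M', M' = c * d + d * d + 1 := ⟨_, rfl⟩
  set T := c * M' + d * M' + d * K with hT
  refine ⟨1 + M' + 2 * K + T, fun j hj ↦ ?_⟩
  have hhalf : j / 2 + (j + 1) / 2 = j := by lia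
  obtain ⟨R₁, hR₁⟩ : ∃ R₁, R₁ = Fintype.card k ^ (j / 2) := ⟨_, rfl⟩
  obtain ⟨R₂, hR₂⟩ : ∃ R₂, R₂ = Fintype.card k ^ ((j + 1) / 2) := ⟨_, rfl⟩
  have hR : R₁ ≤ R₂ := by
    rw [hR₁, hR₂]
    exact Nat.pow_le_pow_right Fintype.card_pos (by lia)
  have hprod : Fintype.card k ^ j = R₁ * R₂ := by rw [hR₁, hR₂, ← pow_add, hhalf]
  rw [hprod, ← hR₂]
  obtain hsmall | hlarge := le_or_gt R₂ T
  · have : R₁ * R₂ ≤ T * R₂ := Nat.mul_le_mul_right R₂ (hR.trans hsmall)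
    lia
  have hcR : c ≤ R₂ := by
    have : c ≤ c * M' := Nat.le_mul_of_pos_right c (by lia)
    lia
  obtain ⟨r, rfl⟩ := Nat.exists_eq_add_of_le hcR
  choose a ha0 ha using fun i : Fin r ↦ mem_degreeMonoid.1 (hc (c + i) (Nat.le_add_right c i))
  have haR (i : Fin r) : deg k (a i) < c + r := by
    rw [ha]
    lia
  have hind : LinearIndependentOverPow (c + r) a :=
    h.linearIndependentOverPow_of_deg_injective ha0 haR fun i i' hii ↦ by
      simp only [ha] at hii
      exact Fin.ext (by lia)
  have hle := hbound r (j / 2) ((j + 1) / 2) (c + r) (d * R₁ + M') a (by lia)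
    (fun i ↦ (haR i).le) (hR₂ ▸ hind) (by
      rw [← hR₁]
      have : (c * d + d * d) * R₁ ≤ (c * d + d * d) * (c + r) := by gcongr
      nlinarith)
  rw [hhalf, ← hR₂, hprod] at hle
  have : K ≤ K * (c + r) := Nat.le_mul_of_pos_right K (by lia)
  lia

end IsDegreeDomain

/-! ### The degree filtration -/

namespace IsDegreeDomain

variable {k B : Type*} [Field k] [CommRing B] [Algebra k B]

lemma degLT_mono (h : IsDegreeDomain k B) : Monotone h.degLT :=
  fun _ _ hmn _ hb ↦ hb.imp_right fun hlt ↦ hlt.trans_le hmn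

lemma self_mem_degLT_succ (h : IsDegreeDomain k B) (b : B) : b ∈ h.degLT (deg k b + 1) :=
  .inr (Nat.lt_succ_self _)

lemma notMem_degLT_deg (h : IsDegreeDomain k B) {b : B} (hb : b ≠ 0) : b ∉ h.degLT (deg k b) :=
  fun hmem ↦ hmem.elim hb (lt_irrefl _)

lemma degLT_sup_span_le (h : IsDegreeDomain k B) (b : B) :
    h.degLT (deg k b) ⊔ k ∙ b ≤ h.degLT (deg k b + 1) :=
  sup_le (h.degLT_mono (Nat.le_succ _))
    ((Submodule.span_singleton_le_iff_mem _ _).2 (h.self_mem_degLT_succ b))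

lemma degLT_succ_eq_of_notMem (h : IsDegreeDomain k B) {n : ℕ} (hn : ∀ b : B, b ≠ 0 → deg k b ≠ n) :
    h.degLT (n + 1) = h.degLT n := by
  refine le_antisymm (fun b hb ↦ or_iff_not_imp_left.2 fun hb0 ↦ ?_) (h.degLT_mono n.le_succ)
  exact (Nat.le_of_lt_succ (hb.resolve_left hb0)).lt_of_ne (hn b hb0)

lemma degLT_le_degLE (h : IsDegreeDomain k B) (n : ℕ) : h.degLT n ≤ h.degLE n := by
  rintro b (rfl | hb)
  · exact Submodule.zero_mem _
  · exact hb.le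

variable [IsDomain B]

lemma mul_mem_degLT_iff (h : IsDegreeDomain k B) {s b : B} (hs : s ≠ 0) {n : ℕ} :
    s * b ∈ h.degLT (deg k s + n) ↔ b ∈ h.degLT n := by
  obtain rfl | hb := eq_or_ne b 0
  · simp only [mul_zero, Submodule.zero_mem]
  · rw [mem_degLT, mem_degLT, h.deg_mul hs hb, or_iff_right (mul_ne_zero hs hb), or_iff_right hb,
      Nat.add_lt_add_iff_left]

instance finite_degLT (h : IsDegreeDomain k B) (n : ℕ) : Module.Finite k (h.degLT n) :=
  have := h.finite_degLE n
  Module.Finite.of_injective _ (Submodule.inclusion_injective (h.degLT_le_degLE n))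

lemma finrank_degLT_le (h : IsDegreeDomain k B) {f : B} (hf : 0 < deg k f) (n : ℕ) :
    Module.finrank k (h.degLT n) ≤ n + deg k f :=
  have := h.finite_degLE n
  (Submodule.finrank_mono (h.degLT_le_degLE n)).trans (h.finrank_degLE_le hf n)

lemma finrank_add_two_le_of_degLT_sup_span_ne (h : IsDegreeDomain k B) {b : B} (hb : b ≠ 0)
    (hne : h.degLT (deg k b) ⊔ k ∙ b ≠ h.degLT (deg k b + 1)) :
    Module.finrank k (h.degLT (deg k b)) + 2 ≤ Module.finrank k (h.degLT (deg k b + 1)) := by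
  have h₁ := Submodule.finrank_lt_finrank_of_lt
    (Submodule.lt_sup_iff_notMem.2 (h.notMem_degLT_deg hb))
  have h₂ := Submodule.finrank_lt_finrank_of_lt ((h.degLT_sup_span_le b).lt_of_ne hne)
  lia

lemma degLT_sup_span_mul_ne (h : IsDegreeDomain k B) {s b : B} (hs : s ≠ 0) (hb : b ≠ 0)
    (hne : h.degLT (deg k b) ⊔ k ∙ b ≠ h.degLT (deg k b + 1)) :
    h.degLT (deg k (s * b)) ⊔ k ∙ (s * b) ≠ h.degLT (deg k (s * b) + 1) := by
  obtain ⟨a, ha, ha'⟩ := SetLike.exists_of_lt ((h.degLT_sup_span_le b).lt_of_ne hne)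
  rw [h.deg_mul hs hb, add_assoc]
  intro heq
  rw [← h.mul_mem_degLT_iff hs, ← heq, Submodule.mem_sup] at ha
  obtain ⟨y, hy, z, hz, hyz⟩ := ha
  obtain ⟨c, rfl⟩ := Submodule.mem_span_singleton.1 hz
  have hmem : a - c • b ∈ h.degLT (deg k b) := by
    rwa [← h.mul_mem_degLT_iff hs, mul_sub, mul_smul_comm, ← hyz, add_sub_cancel_right]
  exact ha' (Submodule.mem_sup.2 ⟨_, hmem, _, Submodule.mem_span_singleton.2 ⟨c, rfl⟩,
    sub_add_cancel _ _⟩)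

lemma associated_iff_exists_smul_eq (h : IsDegreeDomain k B) {a b : B} :
    Associated a b ↔ ∃ c : k, c ≠ 0 ∧ c • a = b := by
  constructor
  · rintro ⟨u, rfl⟩
    obtain ⟨c, hc⟩ := h.deg_eq_zero_iff.1 (deg_of_isUnit (k := k) u.isUnit)
    refine ⟨c, ?_, by rw [Algebra.smul_def, hc, mul_comm]⟩
    rintro rfl
    exact u.ne_zero (hc.symm.trans (map_zero _))
  · rintro ⟨c, hc, rfl⟩
    rw [Algebra.smul_def]
    exact associated_unit_mul_right _ _ ((isUnit_iff_ne_zero.2 hc).map (algebraMap k B))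

lemma mk_add_injOn_degLT (h : IsDegreeDomain k B) {e : B} (he : e ≠ 0) :
    Set.InjOn (fun b ↦ Associates.mk (e + b)) (h.degLT (deg k e)) := by
  intro b hb b' hb' hbb'
  obtain ⟨c, -, hc⟩ := h.associated_iff_exists_smul_eq.1 (Associates.mk_eq_mk_iff_associated.1 hbb')
  have hmem : (c - 1) • e ∈ h.degLT (deg k e) := by
    have : (c - 1) • e = b' - c • b := by
      rw [sub_smul, one_smul, sub_eq_sub_iff_add_eq_add, ← smul_add, hc, add_comm]
    rw [this]
    exact Submodule.sub_mem _ hb' (Submodule.smul_mem _ c hb)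
  obtain rfl : c = 1 := by
    by_contra hc1
    exact h.notMem_degLT_deg he ((Submodule.smul_mem_iff _ (sub_ne_zero.2 hc1)).1 hmem)
  rw [one_smul] at hc
  exact add_left_cancel hc

/- A graded piece of dimension at least two would, by multiplication, make all sufficiently high
graded pieces such, and the dimensions of the spaces `degLT n` would grow too fast. -/
lemma degLT_sup_span_singleton [Finite k] [UniqueFactorizationMonoid B]
    (h : IsDegreeDomain k B) {b : B} (hb : b ≠ 0) :
    h.degLT (deg k b) ⊔ k ∙ b = h.degLT (deg k b + 1) := by
  by_contra hne
  obtain ⟨c, hc⟩ := h.exists_forall_mem_degreeMonoid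
  have hgrowth (j : ℕ) : 2 * j ≤ Module.finrank k (h.degLT (c + j + deg k b)) := by
    induction j with
    | zero => exact Nat.zero_le _
    | succ j ih =>
      obtain ⟨s, hs, hsdeg⟩ := hc (c + j) (Nat.le_add_right c j)
      have hstep := h.finrank_add_two_le_of_degLT_sup_span_ne (mul_ne_zero hs hb)
        (h.degLT_sup_span_mul_ne hs hb hne)
      rw [h.deg_mul hs hb, hsdeg] at hstep
      rw [show c + (j + 1) + deg k b = c + j + deg k b + 1 by ring]
      lia
  obtain ⟨f, hf⟩ := h.exists_deg_pos
  have hle := (hgrowth (c + deg k b + deg k f + 1)).trans (h.finrank_degLT_le hf _)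
  lia

variable [UniqueFactorizationMonoid B]

lemma finrank_degLT [Finite k] (h : IsDegreeDomain k B) [DecidablePred (· ∈ h.degreeMonoid)]
    (n : ℕ) : Module.finrank k (h.degLT n) = Nat.count (· ∈ h.degreeMonoid) n := by
  induction n with
  | zero =>
    have hbot : h.degLT 0 = ⊥ :=
      (Submodule.eq_bot_iff _).2 fun b hb ↦ (mem_degLT.1 hb).resolve_right (Nat.not_lt_zero _)
    rw [hbot, finrank_bot, Nat.count_zero]
  | succ n ih =>
    rw [Nat.count_succ, ← ih]
    split_ifs with hn
    · obtain ⟨b, hb, rfl⟩ := hn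
      have hinf := (Submodule.disjoint_span_singleton' hb).2 (h.notMem_degLT_deg hb)
      have hsum := Submodule.finrank_sup_add_finrank_inf_eq (h.degLT (deg k b)) (k ∙ b)
      rwa [hinf.eq_bot, finrank_bot, add_zero, finrank_span_singleton hb,
        h.degLT_sup_span_singleton hb] at hsum
    · rw [add_zero, h.degLT_succ_eq_of_notMem fun b hb hdeg ↦ hn ⟨b, hb, hdeg⟩]

lemma exists_mk_add_eq_mk [Finite k] (h : IsDegreeDomain k B) {a e : B} (ha : a ≠ 0) (he : e ≠ 0)
    (hae : deg k a = deg k e) :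
    ∃ b ∈ h.degLT (deg k e), Associates.mk (e + b) = Associates.mk a := by
  have hmem := h.self_mem_degLT_succ a
  rw [hae, ← h.degLT_sup_span_singleton he, Submodule.mem_sup] at hmem
  obtain ⟨y, hy, z, hz, rfl⟩ := hmem
  obtain ⟨c, rfl⟩ := Submodule.mem_span_singleton.1 hz
  have hc : c ≠ 0 := by
    rintro rfl
    rw [zero_smul, add_zero] at ha hae
    exact h.notMem_degLT_deg ha (hae ▸ hy)
  refine ⟨c⁻¹ • y, Submodule.smul_mem _ _ hy, Associates.mk_eq_mk_iff_associated.2 <|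
    h.associated_iff_exists_smul_eq.2 ⟨c, hc, ?_⟩⟩
  rw [smul_add, smul_inv_smul₀ hc, add_comm]

lemma card_level [Fintype k] (h : IsDegreeDomain k B) [DecidablePred (· ∈ h.degreeMonoid)] {n : ℕ}
    (hn : n ∈ h.degreeMonoid) : (h.isArithmeticDegree.level n).card =
      Fintype.card k ^ Nat.count (· ∈ h.degreeMonoid) n := by
  obtain ⟨e, he, rfl⟩ := hn
  have himage : (h.isArithmeticDegree.level (deg k e) : Set (Associates B)) =
      (fun b ↦ Associates.mk (e + b)) '' (h.degLT (deg k e)) := by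
    refine Set.Subset.antisymm (fun a ha ↦ ?_) ?_
    · obtain ⟨a, rfl⟩ := Associates.mk_surjective a
      obtain ⟨ha0, hadeg⟩ := h.isArithmeticDegree.mem_level.1 ha
      exact h.exists_mk_add_eq_mk (Associates.mk_ne_zero.1 ha0) he hadeg
    · rintro _ ⟨b, hb, rfl⟩
      refine h.isArithmeticDegree.mem_level.2 ⟨Associates.mk_ne_zero.2 fun h0 ↦ ?_, ?_⟩
      · rw [add_comm, add_eq_zero_iff_eq_neg] at h0
        rw [h0] at hb
        exact h.notMem_degLT_deg he (neg_mem_iff.1 hb)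
      · obtain rfl | hb := hb
        · simp only [add_zero, associatesDeg_mk]
        · exact h.deg_add_eq_left hb
  rw [← Set.ncard_coe_finset, himage, (h.mk_add_injOn_degLT he).ncard_image,
    ← h.finrank_degLT, ← Nat.card_eq_fintype_card, ← Module.natCard_eq_pow_finrank]
  rfl

end IsDegreeDomain

/-! ### The conductor of the degree semigroup -/

-- If `m ∉ S`, then `i ↦ m - i` maps the elements of `S` up to `m` to non-elements.
lemma two_mul_count_mem_le {σ : Type*} [SetLike σ ℕ] [AddMemClass σ ℕ] {S : σ}
    [DecidablePred (· ∈ S)] {m : ℕ} (hm : m ∉ S) : 2 * Nat.count (· ∈ S) (m + 1) ≤ m + 1 := by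
  have hle : Nat.count (· ∈ S) (m + 1) ≤ Finset.card {i ∈ Finset.range (m + 1) | i ∉ S} := by
    rw [Nat.count_eq_card_filter_range]
    refine Finset.card_le_card_of_injOn (m - ·) (fun i hi ↦ ?_) fun i hi j hj hij ↦ ?_
    · simp only [Finset.coe_filter, Finset.mem_range, Set.mem_ofPred_eq] at hi ⊢
      refine ⟨by lia, fun hmi ↦ hm ?_⟩
      rw [← Nat.add_sub_of_le (Nat.le_of_lt_succ hi.1)]
      exact add_mem hi.2 hmi
    · simp only [Finset.coe_filter, Finset.mem_range, Set.mem_ofPred_eq] at hi hj hij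
      lia
  have hsum := Finset.card_filter_add_card_filter_not (s := Finset.range (m + 1)) (· ∈ S)
  rw [Finset.card_range, ← Nat.count_eq_card_filter_range] at hsum
  lia

lemma eq_zero_of_one_sub_inv_sqrt_pow_le {q : ℝ} (hq : 4 < q) {c g : ℕ} (hg : 2 * g ≤ c)
    (hle : (1 - (√q)⁻¹) ^ c ≤ q ^ g / q ^ c) : c = 0 := by
  have hs : 2 < √q := Real.lt_sqrt_of_sq_lt (by norm_num; exact hq)
  have hsq : √q ^ 2 = q := Real.sq_sqrt (by linarith)
  by_contra hc
  have hpow : q ^ g ≤ √q ^ c := by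
    rw [← hsq, ← pow_mul, hsq]
    exact pow_le_pow_right₀ (by linarith) hg
  refine (one_lt_pow₀ (by linarith : 1 < √q - 1) hc).not_ge ?_
  calc (√q - 1) ^ c = √q ^ c * (1 - (√q)⁻¹) ^ c := by
        rw [← mul_pow, mul_sub, mul_one, mul_inv_cancel₀ (by linarith)]
    _ ≤ √q ^ c * (√q ^ c / q ^ c) := by gcongr; exact hle.trans (by gcongr)
    _ = 1 := by
        rw [← mul_div_assoc, ← mul_pow, ← sq, hsq]
        exact div_self (pow_ne_zero c (by linarith))

namespace IsDegreeDomain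

variable {k B : Type*} [Field k] [Fintype k] [CommRing B] [IsDomain B] [Algebra k B]
  [UniqueFactorizationMonoid B]

lemma one_sub_inv_sqrt_pow_le_card_pow_div (h : IsDegreeDomain k B)
    [DecidablePred (· ∈ h.degreeMonoid)] {c : ℕ} (hc : ∀ n, c ≤ n → n ∈ h.degreeMonoid) :
    (1 - (√(Fintype.card k : ℝ))⁻¹) ^ c ≤
      (Fintype.card k : ℝ) ^ Nat.count (· ∈ h.degreeMonoid) c / (Fintype.card k : ℝ) ^ c := by
  obtain ⟨C, hC⟩ := h.exists_card_pow_le_pointCount_add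
  have hd := h.isArithmeticDegree
  have hq : (1 : ℝ) < Fintype.card k := mod_cast Fintype.one_lt_card
  have hlevel {n : ℕ} (hn : n ∈ h.degreeMonoid) : ((hd.level n).card : ℝ) =
      (Fintype.card k : ℝ) ^ Nat.count (· ∈ h.degreeMonoid) n := mod_cast h.card_level hn
  rw [← hlevel (hc c le_rfl)]
  refine one_sub_inv_sqrt_pow_le hq (N := fun n ↦ hd.pointCount n)
    (A := fun n ↦ (hd.level n).card) (C := C * Fintype.card k) ?_ (fun n ↦ ?_) (fun n hn ↦ ?_)
    (fun n hn ↦ ?_) (Nat.cast_nonneg _)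
  · rw [hlevel (zero_mem _), Nat.count_zero, pow_zero]
  · exact_mod_cast hd.mul_card_level n
  · have hHW : (Fintype.card k : ℝ) ^ n ≤
        hd.pointCount n + C * (Fintype.card k : ℝ) ^ ((n + 1) / 2) :=
      mod_cast hC n (by lia)
    have hpow : (Fintype.card k : ℝ) ^ ((n + 1) / 2) ≤ Fintype.card k * √(Fintype.card k) ^ n := by
      nth_rw 1 2 [← Real.sq_sqrt (Nat.cast_nonneg (α := ℝ) (Fintype.card k))]
      rw [← pow_mul, ← pow_add]
      exact pow_le_pow_right₀ (Real.one_le_sqrt.2 hq.le) (by lia)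
    have hmul := mul_le_mul_of_nonneg_left hpow (Nat.cast_nonneg (α := ℝ) C)
    push_cast
    linarith
  · have hn' := hc n hn
    rw [hlevel hn', hlevel (hc (n + 1) (by lia)), Nat.count_succ, if_pos hn', pow_succ']

theorem degreeMonoid_eq_top (h : IsDegreeDomain k B) (hq : 5 ≤ Fintype.card k) :
    h.degreeMonoid = ⊤ := by
  classical
  obtain ⟨c, hc⟩ := h.exists_forall_mem_degreeMonoid
  by_contra hne
  let gaps : Set ℕ := {n | n ∉ h.degreeMonoid}
  have hgaps : gaps.Nonempty := by
    simpa [gaps, AddSubmonoid.eq_top_iff', Set.Nonempty] using hne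
  have hbdd : BddAbove gaps := ⟨c, fun n hn ↦ le_of_not_ge fun hcn ↦ hn (hc n hcn)⟩
  have hmax : ∀ n, sSup gaps + 1 ≤ n → n ∈ h.degreeMonoid := fun n hn ↦ by
    by_contra hn'
    exact (le_csSup hbdd hn').not_gt hn
  exact Nat.succ_ne_zero _ <| eq_zero_of_one_sub_inv_sqrt_pow_le (by norm_cast)
    (two_mul_count_mem_le (Nat.sSup_mem hgaps hbdd)) (h.one_sub_inv_sqrt_pow_le_card_pow_div hmax)

end IsDegreeDomain

/-! ### Conclusion -/

lemma IsDegreeDomain.bijective_aeval {k B : Type*} [Field k] [Finite k] [CommRing B] [IsDomain B]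
    [Algebra k B] [UniqueFactorizationMonoid B] (h : IsDegreeDomain k B) {x : B}
    (hx : deg k x = 1) : Function.Bijective (aeval x : k[X] →ₐ[k] B) := by
  have hx0 : x ≠ 0 := h.ne_zero_of_deg_pos (hx.symm ▸ one_pos)
  constructor
  · refine (injective_iff_map_eq_zero _).2 fun p hp ↦ ?_
    by_contra hp0
    exact h.aeval_ne_zero (hx.symm ▸ one_pos) hp0 hp
  · have hle (n : ℕ) : h.degLT n ≤ LinearMap.range (aeval x : k[X] →ₐ[k] B).toLinearMap := by
      induction n with
      | zero => exact fun b hb ↦ hb.resolve_right (Nat.not_lt_zero _) ▸ Submodule.zero_mem _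
      | succ n ih =>
        have hdeg : deg k (x ^ n) = n := by rw [h.deg_pow, hx, mul_one]
        have hsup := h.degLT_sup_span_singleton (pow_ne_zero n hx0)
        rw [hdeg] at hsup
        rw [← hsup, sup_le_iff, Submodule.span_singleton_le_iff_mem]
        exact ⟨ih, X ^ n, by simp⟩
    exact fun b ↦ hle _ (h.self_mem_degLT_succ b)

end Drinfeldian

lemma IsDrinfeldianDomain.isDegreeDomain {Fq B : Type*} [Field Fq] [Fintype Fq] [CommRing B]
    [IsDomain B] [Algebra Fq B] (hB : IsDrinfeldianDomain Fq B) :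
    Drinfeldian.IsDegreeDomain Fq B := by
  have hmap : algebraMap Fq (FractionRing B) =
      (algebraMap B (FractionRing B)).comp (algebraMap Fq B) :=
    IsScalarTower.algebraMap_eq Fq B (FractionRing B)
  obtain ⟨V, ⟨hVmem, hVnot⟩, hVunique⟩ := hB.unique_infinite_place
  have hV : Drinfeldian.IsUniqueInfinitePlace Fq B V :=
    { algebraMap_mem := hmap ▸ hVmem
      mem_of_ne := fun W hW hne ↦
        by_contra fun hnot ↦ hne (hVunique W ⟨hmap ▸ hW, hnot⟩)
      exists_notMem := not_forall.1 hVnot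
      mem_range_of_isAlgebraic := fun x ⟨f, hf, hx⟩ ↦
        hmap ▸ hB.algebraicallyClosed x ⟨f, hf, hmap ▸ hx⟩
      finiteType := hB.finiteType }
  exact hV.isDegreeDomain

/-- For `q ≥ 5`, every Drinfeldian domain over `Fq` with trivial ideal class
group is isomorphic as an `Fq`-algebra to the polynomial ring `Fq[T]`. -/
theorem drinfeldian_classGroup_trivial_iso_polynomial
    (Fq : Type*) [Field Fq] [Fintype Fq] (hq : 5 ≤ Fintype.card Fq)
    (B : Type*) [CommRing B] [IsDomain B] [Algebra Fq B]
    (hB : IsDrinfeldianDomain Fq B) (hcl : ∀ x : ClassGroup B, x = 1) :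
    Nonempty (B ≃ₐ[Fq] Polynomial Fq) := by
  have := hB.isDedekind
  have : Unique (ClassGroup B) := ⟨⟨1⟩, hcl⟩
  have : IsPrincipalIdealRing B := card_classGroup_eq_one_iff.1 Fintype.card_unique
  have h := hB.isDegreeDomain
  have hone : 1 ∈ h.degreeMonoid := h.degreeMonoid_eq_top hq ▸ AddSubmonoid.mem_top 1
  obtain ⟨x, -, hx⟩ := hone
  exact ⟨(AlgEquiv.ofBijective (aeval x) (h.bijective_aeval hx)).symm⟩
end

section
/- Let q be a prime power and A = F_q[T]. There exists a finite-index subgroup of SL₂(A) that is not a congruence subgroup; indeed, the set of finite-index non-congruence subgroups of SL₂(A) is uncountable. -/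
open Matrix Polynomial

/-- A subgroup `Γ ≤ SL₂(R)` is a congruence subgroup if it contains the kernel of the
reduction map `SL₂(R) → SL₂(R/I)` for some nonzero ideal `I` of `R`. -/
def IsCongruenceSubgroup {R : Type*} [CommRing R]
    (Γ : Subgroup (Matrix.SpecialLinearGroup (Fin 2) R)) : Prop :=
  ∃ I : Ideal R, I ≠ ⊥ ∧
    MonoidHom.ker (Matrix.SpecialLinearGroup.map (n := Fin 2) (Ideal.Quotient.mk I)) ≤ Γ

/-!
Let `F` be a finite field. By the Euclidean algorithm every element of `SL₂(F[X])` is a product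
`E(q₁) ⋯ E(qₙ) B` with `E(q) = !![q, -1; 1, 0]` and `B` upper triangular, and the division steps
determine this product. An `F`-linear form `φ : F[X] → F` with `φ 1 = 1` respects the action of the
units of `F[X]`, and this is all the relations between these matrices involve: applying `φ` to every
`qᵢ` gives a homomorphism `SL₂(F[X]) → SL₂(F)` (P. M. Cohn, *On the structure of the `GL₂` of a
ring*). Its kernel has finite index and determines `φ`, so there are uncountably many such kernels.
There are only countably many congruence subgroups, because `F[X]` has countably many ideals and its
proper quotients are finite.
-/

namespace SLTwoPolynomial

open scoped MatrixGroups

section CommRing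

variable {R : Type*} [CommRing R]

/-- The upper triangular matrix with diagonal `(u, u⁻¹)` and upper right entry `b`. -/
def upper (u : Rˣ) (b : R) : SL(2, R) :=
  ⟨!![↑u, b; 0, ↑u⁻¹], by simp⟩

/-- The matrix of a Euclidean division with quotient `q`: it maps the column `(c, -r)` to
`(q * c + r, c)`. -/
def divMatrix (q : R) : SL(2, R) :=
  ⟨!![q, -1; 1, 0], by simp⟩

/-- The upper left entry of an upper triangular matrix, as a unit. -/
def diagUnit (g : SL(2, R)) (hg : g 1 0 = 0) : Rˣ :=
  have h : g 0 0 * g 1 1 = 1 := by simpa [hg] using (det_fin_two g.1).symm.trans g.2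
  ⟨g 0 0, g 1 1, h, (mul_comm _ _).trans h⟩

@[simp]
lemma coe_upper (u : Rˣ) (b : R) : (upper u b).1 = !![↑u, b; 0, ↑u⁻¹] := rfl

@[simp]
lemma coe_divMatrix (q : R) : (divMatrix q).1 = !![q, -1; 1, 0] := rfl

lemma upper_diagUnit (g : SL(2, R)) (hg : g 1 0 = 0) : upper (diagUnit g hg) (g 0 1) = g := by
  ext i j
  fin_cases i <;> fin_cases j <;> simp [diagUnit, hg]

@[simp]
lemma upper_one_zero : upper (1 : Rˣ) 0 = 1 := by
  ext i j
  fin_cases i <;> fin_cases j <;> simp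

lemma upper_mul_upper (u v : Rˣ) (a b : R) :
    upper u a * upper v b = upper (u * v) (u * b + a * ↑v⁻¹) := by
  ext i j
  fin_cases i <;> fin_cases j <;> simp [mul_comm]

lemma upper_mul_divMatrix (u : Rˣ) (b q : R) :
    upper u b * divMatrix q = divMatrix (u * (u * q + b)) * upper u⁻¹ 0 := by
  ext i j
  fin_cases i <;> fin_cases j <;> simp [mul_right_comm _ _ (↑u⁻¹ : R)]

lemma divMatrix_mul_divMatrix_zero (p : R) : divMatrix p * divMatrix 0 = upper (-1) (-p) := by
  ext i j
  fin_cases i <;> fin_cases j <;> simp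

lemma divMatrix_mul_divMatrix_unit (p : R) (u : Rˣ) :
    divMatrix p * divMatrix (u : R) = divMatrix (p - ↑u⁻¹) * upper u (-1) := by
  ext i j
  fin_cases i <;> fin_cases j <;> simp [sub_mul, ← sub_eq_add_neg]

lemma upper_mul_apply_zero_zero (u : Rˣ) (b : R) (g : SL(2, R)) :
    (upper u b * g) 0 0 = u * g 0 0 + b * g 1 0 := by
  simp [mul_apply, Fin.sum_univ_two]

lemma upper_mul_apply_one_zero (u : Rˣ) (b : R) (g : SL(2, R)) :
    (upper u b * g) 1 0 = ↑u⁻¹ * g 1 0 := by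
  simp [mul_apply, Fin.sum_univ_two]

lemma divMatrix_mul_apply_zero_zero (q : R) (g : SL(2, R)) :
    (divMatrix q * g) 0 0 = q * g 0 0 - g 1 0 := by
  simp [mul_apply, Fin.sum_univ_two, sub_eq_add_neg]

lemma divMatrix_mul_apply_one_zero (q : R) (g : SL(2, R)) : (divMatrix q * g) 1 0 = g 0 0 := by
  simp [mul_apply, Fin.sum_univ_two]

lemma divMatrix_inv_mul_apply_zero_zero (q : R) (g : SL(2, R)) :
    ((divMatrix q)⁻¹ * g) 0 0 = g 1 0 := by
  simp [mul_apply, Fin.sum_univ_two, adjugate_fin_two]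

lemma divMatrix_inv_mul_apply_one_zero (q : R) (g : SL(2, R)) :
    ((divMatrix q)⁻¹ * g) 1 0 = q * g 1 0 - g 0 0 := by
  simp [mul_apply, Fin.sum_univ_two, adjugate_fin_two, neg_add_eq_sub]

end CommRing

section EuclideanAlgorithm

variable {F : Type*} [Field F]

lemma mul_sub_div_of_degree_lt {a c : F[X]} (q : F[X]) (h : c.degree < a.degree) :
    (q * a - c) / a = q := by
  have ha : a ≠ 0 := ne_zero_of_degree_gt h
  have hmod : (q * a - c) % a = -c := by
    rw [sub_mod, (Polynomial.mod_eq_self_iff ha).2 h,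
      EuclideanDomain.mod_eq_zero.2 (dvd_mul_left a q), zero_sub]
  refine mul_left_cancel₀ ha ?_
  linear_combination EuclideanDomain.div_add_mod (q * a - c) a - hmod

lemma degree_unit_mul (u : F[X]ˣ) (f : F[X]) : (↑u * f).degree = f.degree := by
  rw [degree_mul, degree_coe_units, zero_add]

/-- A matrix over `F[X]` is reduced if its first column `(a, c)` satisfies `deg c < deg a`; the
Euclidean algorithm produces such columns after each division. -/
def IsReduced (g : SL(2, F[X])) : Prop :=
  (g 1 0).degree < (g 0 0).degree

lemma isReduced_upper (u : F[X]ˣ) (f : F[X]) : IsReduced (upper u f) := by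
  simp [IsReduced]

lemma IsReduced.upper_mul {g : SL(2, F[X])} (hg : IsReduced g) (u : F[X]ˣ) {b : F[X]}
    (hb : b.degree ≤ 0) : IsReduced (upper u b * g) := by
  have hlt : (b * g 1 0).degree < (↑u * g 0 0).degree := by
    rw [degree_unit_mul]
    calc (b * g 1 0).degree ≤ b.degree + (g 1 0).degree := degree_mul_le _ _
      _ ≤ 0 + (g 1 0).degree := by gcongr
      _ = (g 1 0).degree := zero_add _
      _ < (g 0 0).degree := hg
  rw [IsReduced, upper_mul_apply_zero_zero, upper_mul_apply_one_zero,
    degree_add_eq_left_of_degree_lt hlt, degree_unit_mul, degree_unit_mul]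
  exact hg

lemma IsReduced.divMatrix_mul {g : SL(2, F[X])} (hg : IsReduced g) {q : F[X]}
    (hq : 0 < q.degree) : IsReduced (divMatrix q * g) := by
  have hlt : (g 0 0).degree < (q * g 0 0).degree := by
    refine degree_lt_degree ?_
    rw [natDegree_mul (ne_zero_of_degree_gt hq) (ne_zero_of_degree_gt hg)]
    exact Nat.lt_add_of_pos_left (natDegree_pos_iff_degree_pos.2 hq)
  rw [IsReduced, divMatrix_mul_apply_zero_zero, divMatrix_mul_apply_one_zero,
    degree_sub_eq_left_of_degree_lt (hg.trans hlt)]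
  exact hlt

lemma IsReduced.div_divMatrix_mul {g : SL(2, F[X])} (hg : IsReduced g) (q : F[X]) :
    (divMatrix q * g) 0 0 / (divMatrix q * g) 1 0 = q := by
  rw [divMatrix_mul_apply_zero_zero, divMatrix_mul_apply_one_zero]
  exact mul_sub_div_of_degree_lt q hg

lemma degree_divMatrix_inv_mul_lt {g : SL(2, F[X])} (hg : g 1 0 ≠ 0) :
    (((divMatrix (g 0 0 / g 1 0))⁻¹ * g) 1 0).degree < (g 1 0).degree := by
  have hmod : g 0 0 / g 1 0 * g 1 0 - g 0 0 = -(g 0 0 % g 1 0) := by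
    linear_combination EuclideanDomain.div_add_mod (g 0 0) (g 1 0)
  rw [divMatrix_inv_mul_apply_one_zero, hmod, degree_neg]
  exact degree_mod_lt _ hg

lemma isReduced_divMatrix_inv_mul {g : SL(2, F[X])} (hg : g 1 0 ≠ 0) :
    IsReduced ((divMatrix (g 0 0 / g 1 0))⁻¹ * g) := by
  rw [IsReduced, divMatrix_inv_mul_apply_zero_zero]
  exact degree_divMatrix_inv_mul_lt hg

theorem euclidean_induction {P : SL(2, F[X]) → Prop} (g : SL(2, F[X]))
    (upper : ∀ u f, P (upper u f))
    (divMatrix_mul : ∀ q g, IsReduced g → P g → P (divMatrix q * g)) : P g := by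
  by_cases hg : g 1 0 = 0
  · rw [← upper_diagUnit g hg]
    exact upper _ _
  · rw [← mul_inv_cancel_left (divMatrix (g 0 0 / g 1 0)) g]
    exact divMatrix_mul _ _ (isReduced_divMatrix_inv_mul hg)
      (euclidean_induction _ upper divMatrix_mul)
termination_by (g 1 0).degree
decreasing_by exact degree_divMatrix_inv_mul_lt hg

end EuclideanAlgorithm

section Retraction

variable {F : Type*} [Field F] (φ : F[X] →ₗ[F] F)

/-- The constant term of a unit of `F[X]`, as a unit of `F`. -/
noncomputable def unitCoeff : F[X]ˣ →* Fˣ :=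
  Units.map (constantCoeff : F[X] →+* F)

lemma C_unitCoeff (u : F[X]ˣ) : C (unitCoeff u : F) = (u : F[X]) :=
  (eq_C_of_degree_eq_zero (degree_coe_units u)).symm

lemma map_unit_mul (u : F[X]ˣ) (f : F[X]) : φ (↑u * f) = unitCoeff u * φ f := by
  rw [← C_unitCoeff, ← smul_eq_C_mul, map_smul, smul_eq_mul]

open Classical in
/-- The map `SL₂(F[X]) → SL₂(F)` that applies the linear form `φ` to the quotients of the Euclidean
algorithm on the first column, and to the upper right entry of the final upper triangular matrix. -/
noncomputable def retraction (g : SL(2, F[X])) : SL(2, F) :=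
  if hg : g 1 0 = 0 then upper (unitCoeff (diagUnit g hg)) (φ (g 0 1))
  else divMatrix (φ (g 0 0 / g 1 0)) * retraction ((divMatrix (g 0 0 / g 1 0))⁻¹ * g)
termination_by (g 1 0).degree
decreasing_by exact degree_divMatrix_inv_mul_lt hg

lemma retraction_upper (u : F[X]ˣ) (f : F[X]) :
    retraction φ (upper u f) = upper (unitCoeff u) (φ f) := by
  have hu : diagUnit (upper u f) (by simp) = u := Units.ext (by simp [diagUnit])
  rw [retraction, dif_pos (by simp), hu]
  simp

lemma retraction_divMatrix_mul_of_isReduced {g : SL(2, F[X])} (hg : IsReduced g) (q : F[X]) :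
    retraction φ (divMatrix q * g) = divMatrix (φ q) * retraction φ g := by
  have hc : (divMatrix q * g) 1 0 ≠ 0 := by
    rw [divMatrix_mul_apply_one_zero]
    exact ne_zero_of_degree_gt hg
  rw [retraction, dif_neg hc, hg.div_divMatrix_mul, inv_mul_cancel_left]

lemma retraction_upper_mul (u : F[X]ˣ) (f : F[X]) (g : SL(2, F[X])) :
    retraction φ (upper u f * g) = upper (unitCoeff u) (φ f) * retraction φ g := by
  induction g using euclidean_induction generalizing u f with
  | upper v k =>
    have hφ : φ (↑u * k + f * ↑v⁻¹) = unitCoeff u * φ k + φ f * ↑(unitCoeff v)⁻¹ := by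
      rw [map_add, map_unit_mul, mul_comm f, map_unit_mul, map_inv, mul_comm (φ f)]
    rw [upper_mul_upper, retraction_upper, retraction_upper, upper_mul_upper, map_mul, hφ]
  | divMatrix_mul q g hg ih =>
    have hφ : φ (↑u * (↑u * q + f)) = unitCoeff u * (unitCoeff u * φ q + φ f) := by
      rw [map_unit_mul, map_add, map_unit_mul]
    calc retraction φ (upper u f * (divMatrix q * g))
        = retraction φ (divMatrix (↑u * (↑u * q + f)) * (upper u⁻¹ 0 * g)) := by
          rw [← mul_assoc, upper_mul_divMatrix, mul_assoc]
      _ = divMatrix (unitCoeff u * (unitCoeff u * φ q + φ f)) *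
            (upper (unitCoeff u)⁻¹ 0 * retraction φ g) := by
          rw [retraction_divMatrix_mul_of_isReduced φ (hg.upper_mul _ (by simp)), ih, hφ, map_inv,
            map_zero]
      _ = upper (unitCoeff u) (φ f) * retraction φ (divMatrix q * g) := by
          rw [← mul_assoc, ← upper_mul_divMatrix, mul_assoc,
            retraction_divMatrix_mul_of_isReduced φ hg]

variable {φ}

lemma map_unit (hφ : φ 1 = 1) (u : F[X]ˣ) : φ u = unitCoeff u := by
  simpa [hφ] using map_unit_mul φ u 1

lemma retraction_divMatrix_mul_divMatrix_unit_mul (hφ : φ 1 = 1) (p : F[X]) (u : F[X]ˣ)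
    {g : SL(2, F[X])} (hg : IsReduced g) :
    retraction φ (divMatrix p * (divMatrix (u : F[X]) * g)) =
      divMatrix (φ p) * (divMatrix (φ u) * retraction φ g) := by
  have hred : IsReduced (upper u (-1) * g) := hg.upper_mul u (by simp)
  rw [← mul_assoc, divMatrix_mul_divMatrix_unit, mul_assoc,
    retraction_divMatrix_mul_of_isReduced φ hred, retraction_upper_mul, map_sub, map_neg, hφ,
    map_unit hφ, map_unit hφ, map_inv, ← mul_assoc, ← divMatrix_mul_divMatrix_unit, mul_assoc]

theorem retraction_divMatrix_mul (hφ : φ 1 = 1) (p : F[X]) (g : SL(2, F[X])) :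
    retraction φ (divMatrix p * g) = divMatrix (φ p) * retraction φ g := by
  induction g using euclidean_induction with
  | upper u f => exact retraction_divMatrix_mul_of_isReduced φ (isReduced_upper u f) p
  | divMatrix_mul q g hg =>
    rw [retraction_divMatrix_mul_of_isReduced φ hg]
    rcases eq_or_ne q 0 with rfl | hq
    · have hneg : unitCoeff (-1 : F[X]ˣ) = -1 := Units.ext (by simp [unitCoeff])
      rw [← mul_assoc, divMatrix_mul_divMatrix_zero, retraction_upper_mul, map_zero, ← mul_assoc,
        divMatrix_mul_divMatrix_zero, map_neg, hneg]
    by_cases hunit : IsUnit q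
    · obtain ⟨u, rfl⟩ := hunit
      exact retraction_divMatrix_mul_divMatrix_unit_mul hφ p u hg
    · have hdeg : 0 < q.degree := degree_pos_of_ne_zero_of_nonunit hq hunit
      rw [retraction_divMatrix_mul_of_isReduced φ (hg.divMatrix_mul hdeg),
        retraction_divMatrix_mul_of_isReduced φ hg]

theorem retraction_mul (hφ : φ 1 = 1) (g h : SL(2, F[X])) :
    retraction φ (g * h) = retraction φ g * retraction φ h := by
  induction g using euclidean_induction with
  | upper u f => rw [retraction_upper_mul, retraction_upper]
  | divMatrix_mul q g _ ih =>
    rw [mul_assoc, retraction_divMatrix_mul hφ, ih, retraction_divMatrix_mul hφ, mul_assoc]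

/-- The `F`-linear forms on `F[X]` with value `1` at `1`; this normalization makes
`retraction` multiplicative. -/
abbrev NormalizedForm (F : Type*) [Field F] : Type _ :=
  {φ : F[X] →ₗ[F] F // φ 1 = 1}

/-- `retraction φ` as a group homomorphism, for a normalized linear form `φ`. -/
noncomputable def retractionHom (φ : NormalizedForm F) : SL(2, F[X]) →* SL(2, F) :=
  MonoidHom.mk' (retraction φ.1) (retraction_mul φ.2)

lemma upper_one_mem_ker_retractionHom_iff (φ : NormalizedForm F) (f : F[X]) :
    upper 1 f ∈ (retractionHom φ).ker ↔ φ.1 f = 0 := by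
  have hφ : retractionHom φ (upper 1 f) = upper 1 (φ.1 f) :=
    (retraction_upper φ.1 1 f).trans (by rw [map_one])
  rw [MonoidHom.mem_ker, hφ]
  refine ⟨fun h ↦ ?_, fun h ↦ by rw [h, upper_one_zero]⟩
  simpa using congr($h 0 1)

theorem ker_retractionHom_injective :
    Function.Injective fun φ : NormalizedForm F ↦ (retractionHom φ).ker := by
  intro φ ψ (hker : (retractionHom φ).ker = (retractionHom ψ).ker)
  ext1
  refine LinearMap.ext fun f ↦ ?_
  have hφ : φ.1 (f - φ.1 f • 1) = 0 := by simp [φ.2]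
  have hψ : ψ.1 (f - φ.1 f • 1) = 0 := by
    rwa [← upper_one_mem_ker_retractionHom_iff, ← hker,
      upper_one_mem_ker_retractionHom_iff]
  rw [map_sub, map_smul, ψ.2, smul_eq_mul, mul_one, sub_eq_zero] at hψ
  exact hψ.symm

end Retraction

section Countability

lemma uncountable_nat_fun (α : Type*) [Nontrivial α] : Uncountable (ℕ → α) := by
  rw [← Cardinal.aleph0_lt_mk_iff]
  simpa using Cardinal.cantor' Cardinal.aleph0 (Cardinal.one_lt_iff_nontrivial.2 ‹Nontrivial α›)

/-- The `R`-linear form on `R[X]` with values `1` at `1` and `a n` at `X ^ (n + 1)`. -/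
noncomputable def linearFormOfSeq {R : Type*} [CommSemiring R] (a : ℕ → R) : R[X] →ₗ[R] R :=
  (basisMonomials R).constr R fun
    | 0 => 1
    | n + 1 => a n

lemma linearFormOfSeq_one {R : Type*} [CommSemiring R] (a : ℕ → R) : linearFormOfSeq a 1 = 1 := by
  simpa [linearFormOfSeq] using (basisMonomials R).constr_basis R _ 0

lemma linearFormOfSeq_monomial_succ {R : Type*} [CommSemiring R] (a : ℕ → R) (n : ℕ) :
    linearFormOfSeq a (monomial (n + 1) 1) = a n := by
  simpa [linearFormOfSeq] using (basisMonomials R).constr_basis R _ (n + 1)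

theorem uncountable_normalizedForm (F : Type*) [Field F] :
    Uncountable (NormalizedForm F) := by
  have : Uncountable (ℕ → F) := uncountable_nat_fun F
  refine Function.Injective.uncountable
    (f := fun a ↦ ⟨linearFormOfSeq a, linearFormOfSeq_one a⟩) fun a b hab ↦ funext fun n ↦ ?_
  have hforms : linearFormOfSeq a = linearFormOfSeq b := congrArg Subtype.val hab
  rw [← linearFormOfSeq_monomial_succ a, hforms, linearFormOfSeq_monomial_succ]

instance countable_polynomial (R : Type*) [Semiring R] [Countable R] : Countable R[X] :=
  (AddMonoidAlgebra.coeffEquiv.injective.comp (toFinsuppIso R).injective).countable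

instance hasFiniteQuotients_polynomial (F : Type*) [Field F] [Finite F] :
    Ring.HasFiniteQuotients F[X] where
  finiteQuotient {I} hI := by
    obtain ⟨f, rfl⟩ := (IsPrincipalIdealRing.principal I).principal
    have hf : f ≠ 0 := by simpa using hI
    have : Module.Finite F (AdjoinRoot f) := (AdjoinRoot.powerBasis hf).finite
    exact Module.finite_of_finite F (M := AdjoinRoot f)

lemma countable_ideal (R : Type*) [CommRing R] [IsNoetherianRing R] [Countable R] :
    Countable (Ideal R) := by
  refine Function.Surjective.countable (f := fun s : Finset R ↦ Ideal.span (s : Set R)) fun I ↦ ?_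
  exact I.fg_of_isNoetherianRing

lemma finite_setOf_le {G : Type*} [Group G] (N : Subgroup G) [N.Normal] [N.FiniteIndex] :
    {Γ : Subgroup G | N ≤ Γ}.Finite :=
  .of_equiv _ (QuotientGroup.comapMk'OrderIso N).toEquiv

theorem countable_setOf_isCongruenceSubgroup (R : Type*) [CommRing R] [Countable R]
    [Ring.HasFiniteQuotients R] : {Γ : Subgroup SL(2, R) | IsCongruenceSubgroup Γ}.Countable := by
  have : Countable (Ideal R) := countable_ideal R
  have hunion : (⋃ I : {I : Ideal R // I ≠ ⊥},
      {Γ | (SpecialLinearGroup.map (n := Fin 2) (Ideal.Quotient.mk I.1)).ker ≤ Γ}).Countable := by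
    refine Set.countable_iUnion fun I ↦ ?_
    have : Finite (R ⧸ I.1) := Ring.HasFiniteQuotients.finiteQuotient I.2
    exact (finite_setOf_le _).countable
  exact hunion.mono fun Γ ⟨I, hI, hΓ⟩ ↦ Set.mem_iUnion.2 ⟨⟨I, hI⟩, hΓ⟩

theorem not_countable_setOf_finiteIndex (F : Type*) [Field F] [Finite F] :
    ¬ {Γ : Subgroup SL(2, F[X]) | Γ.FiniteIndex}.Countable := by
  intro hcount
  have := uncountable_normalizedForm F
  let ker (φ : NormalizedForm F) : {Γ : Subgroup SL(2, F[X]) | Γ.FiniteIndex} :=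
    ⟨(retractionHom φ).ker, Subgroup.finiteIndex_ker _⟩
  have hker : Function.Injective ker := fun φ ψ h ↦
    ker_retractionHom_injective (congrArg Subtype.val h)
  have := hcount.to_subtype
  exact not_countable hker.countable

end Countability

end SLTwoPolynomial

/-- For `A = Fq[T]`, there exists a finite-index non-congruence subgroup of
`SL₂(A)`; indeed, the set of finite-index non-congruence subgroups of `SL₂(A)` is
uncountable. -/
theorem exists_noncongruence_and_uncountable (Fq : Type*) [Field Fq] [Fintype Fq] :
    (∃ Γ : Subgroup (Matrix.SpecialLinearGroup (Fin 2) (Polynomial Fq)),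
      Γ.FiniteIndex ∧ ¬ IsCongruenceSubgroup Γ) ∧
    ¬ {Γ : Subgroup (Matrix.SpecialLinearGroup (Fin 2) (Polynomial Fq)) |
        Γ.FiniteIndex ∧ ¬ IsCongruenceSubgroup Γ}.Countable := by
  have hnc : ¬ {Γ : Subgroup (Matrix.SpecialLinearGroup (Fin 2) (Polynomial Fq)) |
      Γ.FiniteIndex ∧ ¬ IsCongruenceSubgroup Γ}.Countable := fun h ↦
    SLTwoPolynomial.not_countable_setOf_finiteIndex Fq <|
      (h.union (SLTwoPolynomial.countable_setOf_isCongruenceSubgroup Fq[X])).mono fun Γ hΓ ↦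
        or_iff_not_imp_right.2 fun hcong ↦ ⟨hΓ, hcong⟩
  refine ⟨?_, hnc⟩
  by_contra! hall
  exact hnc (Set.countable_empty.mono fun Γ hΓ ↦ hΓ.2 (hall Γ hΓ.1))
end
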